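/- arXiv:2312.00711 — 8 statements merged into one kernel-verified Lean document; each statement's English description precedes it below -/
import Mathlib

section
/- Let 0 < a < b be real numbers, let u : [a,b] → ℝ be Lebesgue integrable, let f : [a,b] → ℝ be differentiable, and let c ∈ ℝ. If t·f'(t) + c·f(t) ≤ u(t) for every t ∈ (a,b), then for all x, y ∈ [a,b] with x < y one has y^c f(y) − x^c f(x) ≤ ∫_x^y t^{c−1} u(t) dt. The same conclusion holds with both inequalities reversed. -/
open Set MeasureTheory

/-! The weight `t ^ (c - 1)` is an integrating factor: multiplying by it turns `t f' + c f` into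
the derivative of `t ^ c * f`, and it preserves inequalities because it is nonnegative for `t > 0`.
The claim is then the one-sided fundamental theorem of calculus, which bounds the increment of a
function by the integral of any integrable majorant of its right derivative. -/

section

variable {a b c : ℝ} {u f f' : ℝ → ℝ}

theorem hasDerivWithinAt_rpow_mul {s : Set ℝ} {t m : ℝ} (ht : t ≠ 0)
    (hf : HasDerivWithinAt f m s t) :
    HasDerivWithinAt (fun t ↦ t ^ c * f t) (t ^ (c - 1) * (t * m + c * f t)) s t := by
  have hprod : HasDerivWithinAt (fun t ↦ t ^ c * f t)
      (c * t ^ (c - 1) * f t + t ^ c * m) s t :=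
    (Real.hasDerivAt_rpow_const (Or.inl ht)).hasDerivWithinAt.mul hf
  have hpow : t ^ c = t ^ (c - 1) * t := by rw [← Real.rpow_add_one ht, sub_add_cancel]
  exact hprod.congr_deriv (by rw [hpow]; ring)

theorem continuousOn_rpow_const_Icc (ha : 0 < a) : ContinuousOn (fun t : ℝ ↦ t ^ c) (Icc a b) :=
  continuousOn_id.rpow_const fun _ ht ↦ Or.inl (ha.trans_le ht.1).ne'

theorem rpow_mul_sub_le_integral (ha : 0 < a) (hab : a ≤ b)
    (hu : IntegrableOn u (Icc a b)) (hf : ContinuousOn f (Icc a b))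
    (hf' : ∀ t ∈ Ioo a b, HasDerivWithinAt f (f' t) (Ioi t) t)
    (hle : ∀ t ∈ Ioo a b, t * f' t + c * f t ≤ u t) :
    b ^ c * f b - a ^ c * f a ≤ ∫ t in a..b, t ^ (c - 1) * u t := by
  have hpos {t : ℝ} (ht : t ∈ Ioo a b) : 0 < t := ha.trans ht.1
  exact intervalIntegral.sub_le_integral_of_hasDeriv_right_of_le hab
    ((continuousOn_rpow_const_Icc ha).mul hf)
    (fun t ht ↦ hasDerivWithinAt_rpow_mul (hpos ht).ne' (hf' t ht))
    (hu.continuousOn_mul (continuousOn_rpow_const_Icc ha) isCompact_Icc)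
    (fun t ht ↦ mul_le_mul_of_nonneg_left (hle t ht) (Real.rpow_nonneg (hpos ht).le _))

theorem integral_le_rpow_mul_sub (ha : 0 < a) (hab : a ≤ b)
    (hu : IntegrableOn u (Icc a b)) (hf : ContinuousOn f (Icc a b))
    (hf' : ∀ t ∈ Ioo a b, HasDerivWithinAt f (f' t) (Ioi t) t)
    (hle : ∀ t ∈ Ioo a b, u t ≤ t * f' t + c * f t) :
    ∫ t in a..b, t ^ (c - 1) * u t ≤ b ^ c * f b - a ^ c * f a := by
  have hneg : b ^ c * -f b - a ^ c * -f a ≤ ∫ t in a..b, t ^ (c - 1) * -u t :=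
    rpow_mul_sub_le_integral ha hab hu.neg hf.neg (fun t ht ↦ (hf' t ht).neg)
      (fun t ht ↦ by simp only [Pi.neg_apply]; linarith [hle t ht])
  simp only [mul_neg, intervalIntegral.integral_neg] at hneg
  linarith

theorem gronwall_power_weight_general (ha : 0 < a)
    (hu : IntegrableOn u (Icc a b)) (hf : ContinuousOn f (Icc a b))
    (hf' : ∀ t ∈ Ioo a b, HasDerivWithinAt f (f' t) (Ioi t) t) :
    ((∀ t ∈ Ioo a b, t * f' t + c * f t ≤ u t) →
      ∀ x ∈ Icc a b, ∀ y ∈ Icc a b, x < y →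
        y ^ c * f y - x ^ c * f x ≤ ∫ t in x..y, t ^ (c - 1) * u t) ∧
    ((∀ t ∈ Ioo a b, u t ≤ t * f' t + c * f t) →
      ∀ x ∈ Icc a b, ∀ y ∈ Icc a b, x < y →
        (∫ t in x..y, t ^ (c - 1) * u t) ≤ y ^ c * f y - x ^ c * f x) := by
  constructor <;> intro hle x hx y hy hxy
  all_goals
    have hIcc : Icc x y ⊆ Icc a b := Icc_subset_Icc hx.1 hy.2
    have hIoo : Ioo x y ⊆ Ioo a b := Ioo_subset_Ioo hx.1 hy.2
    have hx0 : 0 < x := ha.trans_le hx.1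
  · exact rpow_mul_sub_le_integral hx0 hxy.le (hu.mono_set hIcc) (hf.mono hIcc)
      (fun t ht ↦ hf' t (hIoo ht)) (fun t ht ↦ hle t (hIoo ht))
  · exact integral_le_rpow_mul_sub hx0 hxy.le (hu.mono_set hIcc) (hf.mono hIcc)
      (fun t ht ↦ hf' t (hIoo ht)) (fun t ht ↦ hle t (hIoo ht))

end

/-- Grönwall-type lemma with power-law weight: integrating the differential
inequality `t f'(t) + c f(t) ≤ u(t)` on `[a,b] ⊆ (0,∞)`, together with the
reversed-inequalities version.  Here `t ^ c` denotes the real power. -/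
theorem gronwall_power_weight (a b c : ℝ) (ha : 0 < a) (hab : a < b) (u f : ℝ → ℝ)
    (hu : IntegrableOn u (Set.Icc a b))
    (hf : DifferentiableOn ℝ f (Set.Icc a b)) :
    ((∀ t ∈ Set.Ioo a b, t * deriv f t + c * f t ≤ u t) →
      ∀ x ∈ Set.Icc a b, ∀ y ∈ Set.Icc a b, x < y →
        y ^ c * f y - x ^ c * f x ≤ ∫ t in x..y, t ^ (c - 1) * u t) ∧
    ((∀ t ∈ Set.Ioo a b, u t ≤ t * deriv f t + c * f t) →
      ∀ x ∈ Set.Icc a b, ∀ y ∈ Set.Icc a b, x < y →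
        (∫ t in x..y, t ^ (c - 1) * u t) ≤ y ^ c * f y - x ^ c * f x) :=
  gronwall_power_weight_general ha hu hf.continuousOn fun _ ht ↦
    (hf.differentiableAt (Icc_mem_nhds ht.1 ht.2)).hasDerivAt.hasDerivWithinAt
end

section
/- Let ε : [0,∞) → [0,∞) be a continuous nonnegative function with η := sup_{x ≥ 0} ε(x) < 1. Let f : [0,∞) → ℝ be twice differentiable with f''(x) + 2 f'(x) + ε(x) f(x) = 0 for all x ≥ 0, f(0) = 0 and f'(0) < 0. Then for every x ≥ 0 one has f(x) ≤ (f'(0) / (2 √(1−η))) · ( e^{−(1−√(1−η)) x} − e^{−(1+√(1−η)) x} ); in particular f(x) < 0 for every x > 0. -/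
open Set Filter

/-!
Replacing `ε` by its upper bound gives a constant-coefficient operator with characteristic roots
`-α > -β`, which factors as `(D + β) (D + α)`. As long as `f ≤ 0`, the bound `ε ≤ α β` gives
`(D + β) (D + α) f ≤ 0`, and two applications of a first-order comparison principle yield
`f ≤ f'(a) K`, where `K` is the impulse response of the operator. Since `K > 0` after time `a`
and `f'(a) < 0`, the function `f` cannot vanish at the end of an interval on which it is negative,
so it stays negative forever.
-/

open Topology

theorem exists_first_le {X Y : Type*} [LinearOrder X] [TopologicalSpace X] [OrderTopology X]
    [CompactIccSpace X] [LinearOrder Y] [TopologicalSpace Y] [ClosedIciTopology Y]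
    {f : X → Y} {a b : X} {y : Y} (hab : a < b) (hf : ContinuousOn f (Icc a b))
    (hstart : ∀ᶠ x in 𝓝[>] a, f x < y) (hb : y ≤ f b) :
    ∃ c ∈ Ioc a b, y ≤ f c ∧ ∀ x ∈ Ioo a c, f x < y := by
  obtain ⟨d, had : a < d, hd⟩ := (mem_nhdsGT_iff_exists_Ioo_subset' hab).mp hstart
  have hdb : d ≤ b := not_lt.mp fun hbd ↦ hb.not_gt (hd ⟨hab, hbd⟩)
  have hcompact : IsCompact (Icc d b ∩ f ⁻¹' Ici y) :=
    isCompact_Icc.of_isClosed_subset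
      ((hf.mono (Icc_subset_Icc_left had.le)).preimage_isClosed_of_isClosed
        isClosed_Icc isClosed_Ici) inter_subset_left
  obtain ⟨c, ⟨⟨hdc, hcb⟩, hc⟩, hleast⟩ := hcompact.exists_isLeast ⟨b, ⟨hdb, le_rfl⟩, hb⟩
  refine ⟨c, ⟨had.trans_le hdc, hcb⟩, hc, fun x ⟨hax, hxc⟩ ↦ ?_⟩
  rcases lt_or_ge x d with hxd | hdx
  · exact hd ⟨hax, hxd⟩
  · by_contra! hx
    exact hxc.not_ge (hleast ⟨⟨hdx, hxc.le.trans hcb⟩, hx⟩)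

theorem eventually_nhdsGT_lt_of_hasDerivWithinAt_neg {f : ℝ → ℝ} {f' a : ℝ}
    (hf : HasDerivWithinAt f f' (Ioi a) a) (hf' : f' < 0) : ∀ᶠ x in 𝓝[>] a, f x < f a := by
  filter_upwards [hf.limsup_slope_le' self_notMem_Ioi hf', self_mem_nhdsWithin] with x hslope hax
  rwa [slope_def_field, div_lt_iff₀ (sub_pos.mpr hax), zero_mul, sub_neg] at hslope

theorem le_of_deriv_add_mul_le {u v u' v' : ℝ → ℝ} {a b c : ℝ}
    (hu : ∀ x ∈ Icc a b, HasDerivWithinAt u (u' x) (Icc a b) x)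
    (hv : ∀ x ∈ Icc a b, HasDerivWithinAt v (v' x) (Icc a b) x)
    (ha : u a ≤ v a) (hle : ∀ x ∈ Ico a b, u' x + c * u x ≤ v' x + c * v x) :
    ∀ x ∈ Icc a b, u x ≤ v x := by
  have hsub (x : ℝ) (hx : x ∈ Icc a b) := (hu x hx).fun_sub (hv x hx)
  have hsub_right (x : ℝ) (hx : x ∈ Ico a b) :=
    (hsub x (Ico_subset_Icc_self hx)).mono_of_mem_nhdsWithin (Icc_mem_nhdsGE_of_mem hx)
  intro x hx
  have hgronwall := le_gronwallBound_of_liminf_deriv_right_le (δ := 0) (K := -c) (ε := 0)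
    (fun y hy ↦ (hsub y hy).continuousWithinAt)
    (fun y hy r hr ↦ (hsub_right y hy).liminf_right_slope_le hr)
    (sub_nonpos.mpr ha) (fun y hy ↦ by linarith [hle y hy]) x hx
  rwa [gronwallBound_ε0_δ0, sub_nonpos] at hgronwall

/-- The impulse response of `(D + α) (D + β)`: the solution of
`K'' + (α + β) K' + α β K = 0`, `K 0 = 0`, `K' 0 = 1`. The formula is meant for `α ≠ β`; at `α = β`
it takes the junk value `0` instead of the limit `t * exp (-α * t)`. -/
noncomputable def impulseResponse (α β t : ℝ) : ℝ :=
  (Real.exp (-α * t) - Real.exp (-β * t)) / (β - α)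

namespace impulseResponse

variable {α β t : ℝ}

theorem apply_zero (α β : ℝ) : impulseResponse α β 0 = 0 := by
  simp [impulseResponse]

theorem pos (hαβ : α < β) (ht : 0 < t) : 0 < impulseResponse α β t := by
  have hexp : Real.exp (-β * t) < Real.exp (-α * t) := by gcongr
  exact div_pos (sub_pos.mpr hexp) (sub_pos.mpr hαβ)

theorem hasDerivAt (hαβ : α ≠ β) (t : ℝ) :
    HasDerivAt (impulseResponse α β) (Real.exp (-β * t) - α * impulseResponse α β t) t := by
  have hne : β - α ≠ 0 := sub_ne_zero.mpr hαβ.symm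
  refine (((hasDerivAt_const_mul (-α)).exp.fun_sub
    (hasDerivAt_const_mul (-β)).exp).div_const (β - α)).congr_deriv ?_
  rw [impulseResponse]
  field

end impulseResponse

section SecondOrder

variable {f f' f'' ε : ℝ → ℝ} {a b α β : ℝ}

theorem le_mul_impulseResponse_of_constCoeff_nonpos (hαβ : α ≠ β)
    (hf : ∀ x ∈ Icc a b, HasDerivWithinAt f (f' x) (Icc a b) x)
    (hf' : ∀ x ∈ Icc a b, HasDerivWithinAt f' (f'' x) (Icc a b) x)
    (hle : ∀ x ∈ Ico a b, f'' x + (α + β) * f' x + α * β * f x ≤ 0) (hfa : f a = 0) :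
    ∀ x ∈ Icc a b, f x ≤ f' a * impulseResponse α β (x - a) := by
  have hexp (x : ℝ) : HasDerivAt (fun x ↦ f' a * Real.exp (-β * (x - a)))
      (f' a * (Real.exp (-β * (x - a)) * -β)) x := by
    simpa using ((((hasDerivAt_id x).sub_const a).const_mul (-β)).exp).const_mul (f' a)
  have hresp (x : ℝ) : HasDerivAt (fun x ↦ f' a * impulseResponse α β (x - a))
      (f' a * (Real.exp (-β * (x - a)) - α * impulseResponse α β (x - a))) x :=
    ((impulseResponse.hasDerivAt hαβ (x - a)).comp_sub_const x a).const_mul (f' a)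
  have hfactor : ∀ x ∈ Icc a b, f' x + α * f x ≤ f' a * Real.exp (-β * (x - a)) :=
    le_of_deriv_add_mul_le (c := β) (fun x hx ↦ (hf' x hx).fun_add ((hf x hx).const_mul α))
      (fun x _ ↦ (hexp x).hasDerivWithinAt) (by simp [hfa])
      (fun x hx ↦ by linarith [hle x hx])
  exact le_of_deriv_add_mul_le (c := α) hf (fun x _ ↦ (hresp x).hasDerivWithinAt)
    (by simp [hfa, impulseResponse.apply_zero])
    (fun x hx ↦ by linarith [hfactor x (Ico_subset_Icc_self hx)])

theorem le_mul_impulseResponse_of_nonpos (hαβ : α ≠ β)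
    (hf : ∀ x ∈ Icc a b, HasDerivWithinAt f (f' x) (Icc a b) x)
    (hf' : ∀ x ∈ Icc a b, HasDerivWithinAt f' (f'' x) (Icc a b) x)
    (hε : ∀ x ∈ Ioo a b, ε x ≤ α * β)
    (hode : ∀ x ∈ Ico a b, f'' x + (α + β) * f' x + ε x * f x ≤ 0)
    (hfa : f a = 0) (hneg : ∀ x ∈ Ioo a b, f x ≤ 0) :
    ∀ x ∈ Icc a b, f x ≤ f' a * impulseResponse α β (x - a) := by
  refine le_mul_impulseResponse_of_constCoeff_nonpos hαβ hf hf' (fun x hx ↦ ?_) hfa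
  have hcoeff : α * β * f x ≤ ε x * f x := by
    rcases hx.1.eq_or_lt with rfl | hax
    · simp [hfa]
    · exact mul_le_mul_of_nonpos_right (hε x ⟨hax, hx.2⟩) (hneg x ⟨hax, hx.2⟩)
  linarith [hode x hx]

theorem apply_right_neg_of_deriv_left_neg (hαβ : α < β)
    (hf : ∀ x ∈ Icc a b, HasDerivWithinAt f (f' x) (Icc a b) x)
    (hf' : ∀ x ∈ Icc a b, HasDerivWithinAt f' (f'' x) (Icc a b) x)
    (hε : ∀ x ∈ Ioo a b, ε x ≤ α * β)
    (hode : ∀ x ∈ Ico a b, f'' x + (α + β) * f' x + ε x * f x ≤ 0)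
    (hab : a < b) (hfa : f a = 0) (hf'a : f' a < 0) : f b < 0 := by
  by_contra! hfb
  have hstart : ∀ᶠ x in 𝓝[>] a, f x < 0 := hfa ▸ eventually_nhdsGT_lt_of_hasDerivWithinAt_neg
    ((hf a (left_mem_Icc.mpr hab.le)).mono_of_mem_nhdsWithin (Icc_mem_nhdsGT hab)) hf'a
  obtain ⟨c, ⟨hac, hcb⟩, hfc, hneg⟩ :=
    exists_first_le hab (fun x hx ↦ (hf x hx).continuousWithinAt) hstart hfb
  have hsub : Icc a c ⊆ Icc a b := Icc_subset_Icc_right hcb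
  have hbound : f c ≤ f' a * impulseResponse α β (c - a) :=
    le_mul_impulseResponse_of_nonpos hαβ.ne (fun x hx ↦ (hf x (hsub hx)).mono hsub)
      (fun x hx ↦ (hf' x (hsub hx)).mono hsub) (fun x hx ↦ hε x (Ioo_subset_Ioo_right hcb hx))
      (fun x hx ↦ hode x (Ico_subset_Ico_right hcb hx)) hfa (fun x hx ↦ (hneg x hx).le)
      c (right_mem_Icc.mpr hac.le)
  exact hfc.not_gt
    (hbound.trans_lt (mul_neg_of_neg_of_pos hf'a (impulseResponse.pos hαβ (sub_pos.mpr hac))))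

end SecondOrder

theorem ode_negative_solution_bound_general {f f' f'' ε : ℝ → ℝ} {a b η : ℝ}
    (hf : ∀ x ∈ Ici a, HasDerivWithinAt f (f' x) (Ici a) x)
    (hf' : ∀ x ∈ Ici a, HasDerivWithinAt f' (f'' x) (Ici a) x)
    (hε : ∀ x ∈ Ioi a, ε x ≤ η) (hη : η < b ^ 2)
    (hode : ∀ x ∈ Ici a, f'' x + 2 * b * f' x + ε x * f x ≤ 0)
    (hfa : f a = 0) (hf'a : f' a < 0) :
    (∀ x ∈ Ici a, f x ≤ f' a / (2 * √(b ^ 2 - η)) *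
      (Real.exp (-(b - √(b ^ 2 - η)) * (x - a)) - Real.exp (-(b + √(b ^ 2 - η)) * (x - a)))) ∧
    ∀ x, a < x → f x < 0 := by
  set s := √(b ^ 2 - η)
  have hs_pos : 0 < s := Real.sqrt_pos.mpr (sub_pos.mpr hη)
  have hroots : b - s < b + s := by linarith
  have hprod : (b - s) * (b + s) = η := by
    linear_combination -Real.sq_sqrt (sub_pos.mpr hη).le
  have hε' (x : ℝ) : ∀ y ∈ Ioo a x, ε y ≤ (b - s) * (b + s) := fun y hy ↦ hprod ▸ hε y hy.1
  have hode' (x : ℝ) : ∀ y ∈ Ico a x, f'' y + (b - s + (b + s)) * f' y + ε y * f y ≤ 0 :=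
    fun y hy ↦ by linarith [hode y hy.1]
  have hIcc {x : ℝ} : Icc a x ⊆ Ici a := Icc_subset_Ici_self
  have hneg : ∀ x, a < x → f x < 0 := fun x hx ↦
    apply_right_neg_of_deriv_left_neg hroots (fun y hy ↦ (hf y hy.1).mono hIcc)
      (fun y hy ↦ (hf' y hy.1).mono hIcc) (hε' x) (hode' x) hx hfa hf'a
  refine ⟨fun x hx ↦ ?_, hneg⟩
  calc f x ≤ f' a * impulseResponse (b - s) (b + s) (x - a) :=
        le_mul_impulseResponse_of_nonpos hroots.ne (fun y hy ↦ (hf y hy.1).mono hIcc)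
          (fun y hy ↦ (hf' y hy.1).mono hIcc) (hε' x) (hode' x) hfa
          (fun y hy ↦ (hneg y hy.1).le) x (right_mem_Icc.mpr hx)
    _ = _ := by
        rw [impulseResponse, show b + s - (b - s) = 2 * s by ring]
        ring

/-- Solutions of `f'' + 2 f' + ε f = 0` on `[0,∞)` with `f(0) = 0`, `f'(0) < 0`,
where `ε ≥ 0` is continuous with supremum `η < 1`, satisfy the explicit upper
bound, and in particular are negative on `(0,∞)`.  Derivatives on `[0,∞)` are
formalised as derivatives within `Set.Ici 0`. -/
theorem ode_negative_solution_bound (ε f : ℝ → ℝ) (η : ℝ)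
    (hεcont : ContinuousOn ε (Set.Ici 0))
    (hεnonneg : ∀ x ∈ Set.Ici (0 : ℝ), 0 ≤ ε x)
    (hη : IsLUB (ε '' Set.Ici 0) η)
    (hη1 : η < 1)
    (hf1 : DifferentiableOn ℝ f (Set.Ici 0))
    (hf2 : DifferentiableOn ℝ (derivWithin f (Set.Ici 0)) (Set.Ici 0))
    (hODE : ∀ x ∈ Set.Ici (0 : ℝ),
      derivWithin (derivWithin f (Set.Ici 0)) (Set.Ici 0) x
        + 2 * derivWithin f (Set.Ici 0) x + ε x * f x = 0)
    (hf0 : f 0 = 0)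
    (hf0' : derivWithin f (Set.Ici 0) 0 < 0) :
    (∀ x ∈ Set.Ici (0 : ℝ),
      f x ≤ derivWithin f (Set.Ici 0) 0 / (2 * Real.sqrt (1 - η)) *
        (Real.exp (-(1 - Real.sqrt (1 - η)) * x)
          - Real.exp (-(1 + Real.sqrt (1 - η)) * x))) ∧
    (∀ x : ℝ, 0 < x → f x < 0) := by
  simpa using ode_negative_solution_bound_general (b := 1)
    (fun x hx ↦ (hf1 x hx).hasDerivWithinAt) (fun x hx ↦ (hf2 x hx).hasDerivWithinAt)
    (fun x hx ↦ hη.1 (mem_image_of_mem ε (Ioi_subset_Ici_self hx))) (by simpa using hη1)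
    (fun x hx ↦ by simpa using (hODE x hx).le) hf0 hf0'
end

section
/- For every λ ∈ [0,2) there exists a unique twice differentiable function g : [0,∞) → ℝ satisfying g''(x) + 2 g'(x) = g(x)^2 for all x ≥ 0, g(0) = 0 and g'(0) = −λ. Moreover this solution satisfies −λ/2 ≤ g(x) ≤ 0 and |g'(x)| ≤ 2λ for all x ≥ 0, and g(x) → 0 and g'(x) → 0 as x → ∞. -/
open Set Filter

/-- First derivative on `[0,∞)` (derivative within `Set.Ici 0`). -/
noncomputable def derIci (g : ℝ → ℝ) : ℝ → ℝ := fun x => derivWithin g (Set.Ici 0) x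

/-- Second derivative on `[0,∞)`. -/
noncomputable def derIci2 (g : ℝ → ℝ) : ℝ → ℝ := fun x => derivWithin (derIci g) (Set.Ici 0) x

/-- `g : [0,∞) → ℝ` is a twice differentiable solution of `g'' + 2 g' = g²`
with `g(0) = 0` and `g'(0) = -λ`. -/
def IsGSol (lam : ℝ) (g : ℝ → ℝ) : Prop :=
  DifferentiableOn ℝ g (Set.Ici 0) ∧
  DifferentiableOn ℝ (derIci g) (Set.Ici 0) ∧
  (∀ x ∈ Set.Ici (0 : ℝ), derIci2 g x + 2 * derIci g x = (g x) ^ 2) ∧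
  g 0 = 0 ∧ derIci g 0 = -lam

/-!
Write `w = g'`. As `g ^ 2 ≥ 0`, the quantity `w + 2 g` is nondecreasing, so it stays above `-λ`,
and integrating `g' + 2 g ≥ -λ` gives `g ≥ -λ / 2`. The upper bound comes from replacing the force
`s ^ 2` by `min (s ^ 2) (-s)`: then `w + g` satisfies `(w + g)' + (w + g) ≤ 0`, hence stays
nonpositive, and so does `g`. The two forces agree on `[-1, 0]`, where the bounds confine the
truncated solution; being globally Lipschitz, the truncated equation has a global solution, which
therefore solves the original one and, by uniqueness, is its only solution.

At infinity the bounded monotone quantity `w + 2 g` has a limit `P`, so `g → P / 2` and `w → 0`.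
Then `w' + 2 w = g ^ 2 → (P / 2) ^ 2` forces `w → (P / 2) ^ 2 / 2`, whence `P = 0`.
-/

open scoped NNReal Topology

section IntegralCurves

variable {E : Type*} [NormedAddCommGroup E] [NormedSpace ℝ E]
  {v : E → E} {γ₁ γ₂ : ℝ → E} {a b c : ℝ}

lemma integralCurve_eqOn_Icc (hv : LocallyLipschitz v)
    (h₁ : IsIntegralCurveOn γ₁ (fun _ ↦ v) (Icc a b))
    (h₂ : IsIntegralCurveOn γ₂ (fun _ ↦ v) (Icc a b)) (ha : γ₁ a = γ₂ a) :
    EqOn γ₁ γ₂ (Icc a b) := by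
  have isCompact_traces : IsCompact (γ₁ '' Icc a b ∪ γ₂ '' Icc a b) :=
    (isCompact_Icc.image_of_continuousOn h₁.continuousOn).union
      (isCompact_Icc.image_of_continuousOn h₂.continuousOn)
  obtain ⟨K, hK⟩ :=
    hv.locallyLipschitzOn.exists_lipschitzOnWith_of_compact isCompact_traces
  have right_deriv {γ : ℝ → E} (h : IsIntegralCurveOn γ (fun _ ↦ v) (Icc a b)) :
      ∀ t ∈ Ico a b, HasDerivWithinAt γ (v (γ t)) (Ici t) t := fun t ht ↦
    (h t (Ico_subset_Icc_self ht)).mono_of_mem_nhdsWithin <|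
      mem_of_superset (Icc_mem_nhdsGE ht.2) (Icc_subset_Icc_left ht.1)
  exact ODE_solution_unique_of_mem_Icc_right (fun _ _ ↦ hK)
    h₁.continuousOn (right_deriv h₁) (fun t ht ↦ .inl ⟨t, Ico_subset_Icc_self ht, rfl⟩)
    h₂.continuousOn (right_deriv h₂) (fun t ht ↦ .inr ⟨t, Ico_subset_Icc_self ht, rfl⟩) ha

lemma integralCurve_eqOn_Ici (hv : LocallyLipschitz v)
    (h₁ : IsIntegralCurveOn γ₁ (fun _ ↦ v) (Ici a))
    (h₂ : IsIntegralCurveOn γ₂ (fun _ ↦ v) (Ici a)) (ha : γ₁ a = γ₂ a) :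
    EqOn γ₁ γ₂ (Ici a) := fun _ ht ↦
  integralCurve_eqOn_Icc hv (h₁.mono Icc_subset_Ici_self) (h₂.mono Icc_subset_Ici_self) ha
    ⟨ht, le_rfl⟩

lemma exists_integralCurve_Ici_of_forall_Icc (hv : LocallyLipschitz v) {x : E}
    (h : ∀ T, ∃ γ : ℝ → E, γ a = x ∧ IsIntegralCurveOn γ (fun _ ↦ v) (Icc a T)) :
    ∃ γ : ℝ → E, γ a = x ∧ IsIntegralCurveOn γ (fun _ ↦ v) (Ici a) := by
  choose β hβa hβ using h
  have agree {S T : ℝ} (hST : S ≤ T) : EqOn (β S) (β T) (Icc a S) :=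
    integralCurve_eqOn_Icc hv (hβ S) ((hβ T).mono (Icc_subset_Icc_right hST))
      ((hβa S).trans (hβa T).symm)
  refine ⟨fun t ↦ β t t, hβa a, fun t ht ↦ ?_⟩
  have diagonal_eq : EqOn (fun s ↦ β s s) (β (t + 1)) (Icc a (t + 1)) :=
    fun s hs ↦ agree hs.2 ⟨hs.1, le_rfl⟩
  have ht' : t ∈ Icc a (t + 1) := ⟨ht, by linarith⟩
  have local_deriv := (hβ (t + 1) t ht').congr diagonal_eq (diagonal_eq ht')
  rw [← diagonal_eq ht'] at local_deriv
  refine local_deriv.mono_of_mem_nhdsWithin ?_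
  rw [← Ici_inter_Iic]
  exact inter_mem_nhdsWithin _ (Iic_mem_nhds (lt_add_one t))

lemma integralCurve_concat (hab : a ≤ b) (hbc : b ≤ c)
    (h₁ : IsIntegralCurveOn γ₁ (fun _ ↦ v) (Icc a b))
    (h₂ : IsIntegralCurveOn γ₂ (fun _ ↦ v) (Icc b c)) (hb : γ₁ b = γ₂ b) :
    IsIntegralCurveOn (fun t ↦ if t ≤ b then γ₁ t else γ₂ t) (fun _ ↦ v) (Icc a c) := by
  set γ : ℝ → E := fun t ↦ if t ≤ b then γ₁ t else γ₂ t
  have eq_left : EqOn γ γ₁ (Icc a b) := fun t ht ↦ if_pos ht.2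
  have eq_right : EqOn γ γ₂ (Icc b c) := fun t ht ↦ by
    rcases ht.1.eq_or_lt with rfl | hlt
    · exact (if_pos le_rfl).trans hb
    · exact if_neg hlt.not_ge
  have deriv_on_piece {s : Set ℝ} {η : ℝ → E} (hs : IsClosed s) (hγη : EqOn γ η s)
      (hη : IsIntegralCurveOn η (fun _ ↦ v) s) (t : ℝ) :
      HasDerivWithinAt γ (v (γ t)) s t := by
    by_cases hts : t ∈ s
    · rw [hγη hts]
      exact (hη t hts).congr hγη (hγη hts)
    · exact HasFDerivWithinAt.of_notMem_closure (by rwa [hs.closure_eq])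
  intro t _
  rw [← Icc_union_Icc_eq_Icc hab hbc]
  exact (deriv_on_piece isClosed_Icc eq_left h₁ t).union
    (deriv_on_piece isClosed_Icc eq_right h₂ t)

variable [CompleteSpace E]

/- On the ball of radius `‖v x‖` about `x` the speed is at most `(K + 1) ‖v x‖`, so a curve
issued from `x` stays in that ball for time `1 / (K + 1)`, whatever `x` is. -/
lemma exists_integralCurve_Icc_step {K : ℝ≥0} (hv : LipschitzWith K v) (a : ℝ) (x : E) :
    ∃ γ : ℝ → E, γ a = x ∧
      IsIntegralCurveOn γ (fun _ ↦ v) (Icc a (a + 1 / (K + 1))) := by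
  have step_pos : (0 : ℝ) < 1 / (K + 1) := by positivity
  have speed_le : ∀ y ∈ Metric.closedBall x (‖v x‖₊ : ℝ),
      ‖v y‖ ≤ ((K + 1) * ‖v x‖₊ : ℝ≥0) := fun y hy ↦ by
    calc ‖v y‖ ≤ ‖v y - v x‖ + ‖v x‖ := norm_le_norm_sub_add _ _
      _ ≤ K * ‖y - x‖ + ‖v x‖ := by gcongr; exact hv.norm_sub_le y x
      _ ≤ K * ‖v x‖ + ‖v x‖ := by gcongr; exact mem_closedBall_iff_norm.1 hy
      _ = ((K + 1) * ‖v x‖₊ : ℝ≥0) := by push_cast; ring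
  refine (IsPicardLindelof.of_time_independent
    (t₀ := ⟨a, left_mem_Icc.2 (le_add_of_nonneg_right step_pos.le)⟩) (r := 0)
    speed_le hv.lipschitzOnWith ?_).exists_eq_forall_mem_Icc_hasDerivWithinAt₀
  rw [add_sub_cancel_left, sub_self, max_eq_left step_pos.le]
  push_cast
  field_simp
  simp

theorem exists_integralCurve_Ici {K : ℝ≥0} (hv : LipschitzWith K v) (a : ℝ) (x : E) :
    ∃ γ : ℝ → E, γ a = x ∧ IsIntegralCurveOn γ (fun _ ↦ v) (Ici a) := by
  set δ : ℝ := 1 / (K + 1)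
  have hδ : 0 < δ := by positivity
  have exists_on_steps (n : ℕ) :
      ∃ γ : ℝ → E, γ a = x ∧ IsIntegralCurveOn γ (fun _ ↦ v) (Icc a (a + n * δ)) := by
    induction n with
    | zero =>
      obtain ⟨γ, hγa, hγ⟩ := exists_integralCurve_Icc_step hv a x
      exact ⟨γ, hγa, hγ.mono (Icc_subset_Icc_right (by push_cast; linarith))⟩
    | succ n ih =>
      obtain ⟨γ, hγa, hγ⟩ := ih
      obtain ⟨η, hη_start, hη⟩ := exists_integralCurve_Icc_step hv (a + n * δ) (γ (a + n * δ))
      have ha_le : a ≤ a + n * δ := le_add_of_nonneg_right (by positivity)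
      refine ⟨fun t ↦ if t ≤ a + n * δ then γ t else η t, (if_pos ha_le).trans hγa, ?_⟩
      convert integralCurve_concat ha_le (le_add_of_nonneg_right hδ.le) hγ hη hη_start.symm
        using 2
      push_cast
      ring
  refine exists_integralCurve_Ici_of_forall_Icc hv.locallyLipschitz fun T ↦ ?_
  obtain ⟨n, hn⟩ := Archimedean.arch (T - a) hδ
  obtain ⟨γ, hγa, hγ⟩ := exists_on_steps n
  rw [nsmul_eq_mul] at hn
  exact ⟨γ, hγa, hγ.mono (Icc_subset_Icc_right (by linarith))⟩

end IntegralCurves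

section Comparison

variable {u u' : ℝ → ℝ} {a c : ℝ}

lemma le_mul_exp_of_deriv_le_mul
    (hu : ∀ x ∈ Ici a, HasDerivWithinAt u (u' x) (Ici a) x)
    (h : ∀ x ∈ Ici a, u' x ≤ c * u x) {x : ℝ} (hx : x ∈ Ici a) :
    u x ≤ u a * Real.exp (c * (x - a)) := by
  have right_deriv (t : ℝ) (ht : t ∈ Ico a x) : HasDerivWithinAt u (u' t) (Ici t) t :=
    (hu t ht.1).mono (Ici_subset_Ici.2 ht.1)
  rw [← gronwallBound_ε0]
  exact le_gronwallBound_of_liminf_deriv_right_le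
    (fun t ht ↦ (hu t ht.1).continuousWithinAt.mono Icc_subset_Ici_self)
    (fun t ht _ hr ↦ (right_deriv t ht).liminf_right_slope_le hr) le_rfl
    (fun t ht ↦ by simpa only [add_zero] using h t ht.1) x ⟨hx, le_rfl⟩

lemma sub_le_mul_exp_of_deriv_add_mul_le {M : ℝ}
    (hu : ∀ x ∈ Ici a, HasDerivWithinAt u (u' x) (Ici a) x)
    (h : ∀ x ∈ Ici a, u' x + c * u x ≤ c * M) {x : ℝ} (hx : x ∈ Ici a) :
    u x - M ≤ (u a - M) * Real.exp (-c * (x - a)) :=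
  le_mul_exp_of_deriv_le_mul (u := fun x ↦ u x - M) (fun t ht ↦ (hu t ht).sub_const M)
    (fun t ht ↦ by linarith [h t ht]) hx

lemma le_of_deriv_add_mul_le_s3 {M : ℝ}
    (hu : ∀ x ∈ Ici a, HasDerivWithinAt u (u' x) (Ici a) x)
    (h : ∀ x ∈ Ici a, u' x + c * u x ≤ c * M) (ha : u a ≤ M) {x : ℝ} (hx : x ∈ Ici a) :
    u x ≤ M :=
  sub_nonpos.1 <| (sub_le_mul_exp_of_deriv_add_mul_le hu h hx).trans <|
    mul_nonpos_of_nonpos_of_nonneg (sub_nonpos.2 ha) (Real.exp_nonneg _)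

lemma le_of_le_deriv_add_mul {m : ℝ}
    (hu : ∀ x ∈ Ici a, HasDerivWithinAt u (u' x) (Ici a) x)
    (h : ∀ x ∈ Ici a, c * m ≤ u' x + c * u x) (ha : m ≤ u a) {x : ℝ} (hx : x ∈ Ici a) :
    m ≤ u x :=
  neg_le_neg_iff.1 <| le_of_deriv_add_mul_le_s3 (c := c) (fun t ht ↦ (hu t ht).fun_neg)
    (fun t ht ↦ by linarith [h t ht]) (neg_le_neg ha) hx

lemma eventually_lt_of_eventually_deriv_add_mul_le {M M' : ℝ} (hc : 0 < c)
    (hu : ∀ x ∈ Ici a, HasDerivWithinAt u (u' x) (Ici a) x)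
    (h : ∀ᶠ x in atTop, u' x + c * u x ≤ c * M) (hM : M < M') :
    ∀ᶠ x in atTop, u x < M' := by
  obtain ⟨b, hab, hb⟩ := (atTop_basis' a).eventually_iff.1 h
  have transient_tendsto :
      Tendsto (fun x ↦ (u b - M) * Real.exp (-c * (x - b))) atTop (𝓝 0) := by
    rw [← mul_zero (u b - M)]
    refine (Real.tendsto_exp_atBot.comp ?_).const_mul _
    exact (tendsto_atTop_add_const_right _ _ tendsto_id).const_mul_atTop_of_neg (neg_lt_zero.2 hc)
  filter_upwards [transient_tendsto.eventually_lt_const (sub_pos.2 hM), eventually_ge_atTop b]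
    with x hx hbx
  have := sub_le_mul_exp_of_deriv_add_mul_le
    (fun t ht ↦ (hu t (hab.trans ht)).mono (Ici_subset_Ici.2 hab)) (fun t ht ↦ hb ht) hbx
  linarith

theorem tendsto_div_of_tendsto_deriv_add_mul {l : ℝ} (hc : 0 < c)
    (hu : ∀ x ∈ Ici a, HasDerivWithinAt u (u' x) (Ici a) x)
    (h : Tendsto (fun x ↦ u' x + c * u x) atTop (𝓝 l)) :
    Tendsto u atTop (𝓝 (l / c)) := by
  refine tendsto_order.2 ⟨fun m hm ↦ ?_, fun M hM ↦ ?_⟩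
  · obtain ⟨m', hmm', hm'⟩ := exists_between hm
    have source_ge : ∀ᶠ x in atTop, -u' x + c * -u x ≤ c * -m' := by
      filter_upwards [h.eventually_const_lt ((lt_div_iff₀' hc).1 hm')] with x hx
      linarith
    filter_upwards [eventually_lt_of_eventually_deriv_add_mul_le hc
      (fun t ht ↦ (hu t ht).fun_neg) source_ge (neg_lt_neg hmm')] with x hx
    exact neg_lt_neg_iff.1 hx
  · obtain ⟨M', hM', hM'M⟩ := exists_between hM
    have source_le : ∀ᶠ x in atTop, u' x + c * u x ≤ c * M' := by
      filter_upwards [h.eventually_lt_const ((div_lt_iff₀' hc).1 hM')] with x hx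
      exact hx.le
    exact eventually_lt_of_eventually_deriv_add_mul_le hc hu source_le hM'M

end Comparison

lemma exists_tendsto_atTop_of_monotoneOn_Ici {α β : Type*} [LinearOrder α]
    [ConditionallyCompleteLinearOrder β] [TopologicalSpace β] [OrderTopology β]
    {u : α → β} {a : α} {C : β} (hu : MonotoneOn u (Ici a)) (hC : ∀ x ∈ Ici a, u x ≤ C) :
    ∃ l, Tendsto u atTop (𝓝 l) := by
  have monotone_max : Monotone fun x ↦ u (max a x) := fun x y hxy ↦
    hu (le_max_left a x) (le_max_left a y) (max_le_max_left a hxy)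
  have bddAbove_max : BddAbove (range fun x ↦ u (max a x)) :=
    ⟨C, forall_mem_range.2 fun x ↦ hC _ (le_max_left a x)⟩
  refine ⟨_, (tendsto_atTop_ciSup monotone_max bddAbove_max).congr' ?_⟩
  filter_upwards [eventually_ge_atTop a] with x hx
  rw [max_eq_right hx]

/-- The phase-space vector field `(g, w) ↦ (w, f g - c w)`, whose integral curves are the pairs
`(g, g')` with `g'' + c g' = f g`. -/
def phaseField (c : ℝ) (f : ℝ → ℝ) (p : ℝ × ℝ) : ℝ × ℝ :=
  (p.2, f p.1 - c * p.2)

lemma exists_lipschitzWith_phaseField (c : ℝ) {f : ℝ → ℝ} {K : ℝ≥0} (hf : LipschitzWith K f) :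
    ∃ K', LipschitzWith K' (phaseField c f) :=
  ⟨_, LipschitzWith.prod_snd.prodMk <|
    (hf.comp LipschitzWith.prod_fst).sub ((lipschitzWith_smul c).comp LipschitzWith.prod_snd)⟩

lemma locallyLipschitz_phaseField (c : ℝ) {f : ℝ → ℝ} (hf : LocallyLipschitz f) :
    LocallyLipschitz (phaseField c f) :=
  LipschitzWith.prod_snd.locallyLipschitz.prodMk <|
    (hf.comp LipschitzWith.prod_fst.locallyLipschitz).sub
      ((lipschitzWith_smul c).comp LipschitzWith.prod_snd).locallyLipschitz

/-- `g` solves the damped equation `g'' + c g' = f g` on `[0, ∞)` with `g 0 = 0` and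
`g' 0 = -lam`. The velocity `w = g'` is carried along as data, so that the equation reads as a
first-order system. -/
structure IsDampedSol (c : ℝ) (f : ℝ → ℝ) (lam : ℝ) (g w : ℝ → ℝ) : Prop where
  hasDerivWithinAt_pos : ∀ x ∈ Ici (0 : ℝ), HasDerivWithinAt g (w x) (Ici 0) x
  hasDerivWithinAt_vel : ∀ x ∈ Ici (0 : ℝ), HasDerivWithinAt w (f (g x) - c * w x) (Ici 0) x
  pos_zero : g 0 = 0
  vel_zero : w 0 = -lam

namespace IsDampedSol

variable {c lam : ℝ} {f g w g₁ w₁ g₂ w₂ : ℝ → ℝ}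

lemma isIntegralCurveOn (h : IsDampedSol c f lam g w) :
    IsIntegralCurveOn (fun x ↦ (g x, w x)) (fun _ ↦ phaseField c f) (Ici 0) := fun x hx ↦
  (h.hasDerivWithinAt_pos x hx).prodMk (h.hasDerivWithinAt_vel x hx)

theorem eqOn (hf : LocallyLipschitz f) (h₁ : IsDampedSol c f lam g₁ w₁)
    (h₂ : IsDampedSol c f lam g₂ w₂) : EqOn g₁ g₂ (Ici 0) := fun _ hx ↦
  congrArg Prod.fst <| integralCurve_eqOn_Ici (locallyLipschitz_phaseField c hf)
    h₁.isIntegralCurveOn h₂.isIntegralCurveOn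
    (Prod.ext (h₁.pos_zero.trans h₂.pos_zero.symm) (h₁.vel_zero.trans h₂.vel_zero.symm)) hx

theorem exists_of_lipschitzWith {K : ℝ≥0} (hf : LipschitzWith K f) (c lam : ℝ) :
    ∃ g w, IsDampedSol c f lam g w := by
  obtain ⟨K', hK'⟩ := exists_lipschitzWith_phaseField c hf
  obtain ⟨γ, hγ0, hγ⟩ := exists_integralCurve_Ici hK' 0 (0, -lam)
  exact ⟨fun x ↦ (γ x).1, fun x ↦ (γ x).2,
    { hasDerivWithinAt_pos := fun x hx ↦ (hγ x hx).fst
      hasDerivWithinAt_vel := fun x hx ↦ (hγ x hx).snd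
      pos_zero := congrArg Prod.fst hγ0
      vel_zero := congrArg Prod.snd hγ0 }⟩

lemma congr_force {f₂ : ℝ → ℝ} (h : IsDampedSol c f lam g w)
    (hf : ∀ x ∈ Ici (0 : ℝ), f (g x) = f₂ (g x)) : IsDampedSol c f₂ lam g w :=
  { h with hasDerivWithinAt_vel := fun x hx ↦ hf x hx ▸ h.hasDerivWithinAt_vel x hx }

lemma hasDerivWithinAt_vel_add_mul_pos (h : IsDampedSol c f lam g w) (b : ℝ) :
    ∀ x ∈ Ici (0 : ℝ),
      HasDerivWithinAt (fun t ↦ w t + b * g t) (f (g x) - c * w x + b * w x) (Ici 0) x :=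
  fun x hx ↦ (h.hasDerivWithinAt_vel x hx).add ((h.hasDerivWithinAt_pos x hx).const_mul b)

lemma monotoneOn_vel_add_mul_pos (h : IsDampedSol c f lam g w)
    (hf : ∀ x ∈ Ici (0 : ℝ), 0 ≤ f (g x)) : MonotoneOn (fun x ↦ w x + c * g x) (Ici 0) := by
  intro x (hx : 0 ≤ x) y _ hxy
  refine le_of_le_deriv_add_mul (a := x) (c := 0)
    (fun t ht ↦ (h.hasDerivWithinAt_vel_add_mul_pos c t (hx.trans ht)).mono
      (Ici_subset_Ici.2 hx)) (fun t ht ↦ ?_) le_rfl hxy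
  linarith [hf t (hx.trans ht)]

lemma neg_div_le_pos (h : IsDampedSol c f lam g w) (hc : 0 < c)
    (hf : ∀ x ∈ Ici (0 : ℝ), 0 ≤ f (g x)) (hlam : 0 ≤ lam) {x : ℝ} (hx : x ∈ Ici 0) :
    -lam / c ≤ g x := by
  refine le_of_le_deriv_add_mul (c := c) h.hasDerivWithinAt_pos (fun t ht ↦ ?_) ?_ hx
  · have := h.monotoneOn_vel_add_mul_pos hf self_mem_Ici ht ht
    simpa only [mul_div_cancel₀ _ hc.ne', h.pos_zero, h.vel_zero, mul_zero, add_zero] using this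
  · rw [h.pos_zero]
    exact div_nonpos_of_nonpos_of_nonneg (neg_nonpos.2 hlam) hc.le

/- With `k = g' + (c - 1) g` the equation becomes `k' + k = f g + (c - 1) g ≤ 0`, so `k ≤ 0`;
this is in turn a first-order inequality for `g`. -/
lemma pos_nonpos (h : IsDampedSol c f lam g w) (hf : ∀ s, f s + (c - 1) * s ≤ 0)
    (hlam : 0 ≤ lam) {x : ℝ} (hx : x ∈ Ici 0) : g x ≤ 0 := by
  have vel_add_pos_nonpos {t : ℝ} (ht : t ∈ Ici 0) : w t + (c - 1) * g t ≤ 0 := by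
    refine le_of_deriv_add_mul_le_s3 (c := 1) (h.hasDerivWithinAt_vel_add_mul_pos (c - 1))
      (fun s _ ↦ ?_) ?_ ht
    · linarith [hf (g s)]
    · simpa [h.pos_zero, h.vel_zero] using hlam
  refine le_of_deriv_add_mul_le_s3 (c := c - 1) h.hasDerivWithinAt_pos (fun t ht ↦ ?_)
    h.pos_zero.le hx
  rw [mul_zero]
  exact vel_add_pos_nonpos ht

lemma abs_vel_le (h : IsDampedSol c f lam g w) (hf : ∀ x ∈ Ici (0 : ℝ), |f (g x)| ≤ c * |lam|)
    {x : ℝ} (hx : x ∈ Ici 0) : |w x| ≤ |lam| := by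
  refine abs_le.2 ⟨le_of_le_deriv_add_mul (c := c) h.hasDerivWithinAt_vel (fun t ht ↦ ?_) ?_ hx,
    le_of_deriv_add_mul_le_s3 (c := c) h.hasDerivWithinAt_vel (fun t ht ↦ ?_) ?_ hx⟩
  · linarith [neg_le_of_abs_le (hf t ht)]
  · exact h.vel_zero ▸ neg_le_neg (le_abs_self lam)
  · linarith [le_of_abs_le (hf t ht)]
  · exact h.vel_zero ▸ neg_le_abs lam

theorem exists_tendsto_equilibrium (h : IsDampedSol c f lam g w) (hc : 0 < c)
    (hf_cont : Continuous f) (hf : ∀ x ∈ Ici (0 : ℝ), 0 ≤ f (g x)) {C : ℝ}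
    (hC : ∀ x ∈ Ici (0 : ℝ), w x + c * g x ≤ C) :
    ∃ L, f L = 0 ∧ Tendsto g atTop (𝓝 L) ∧ Tendsto w atTop (𝓝 0) := by
  obtain ⟨P, hP⟩ :=
    exists_tendsto_atTop_of_monotoneOn_Ici (h.monotoneOn_vel_add_mul_pos hf) hC
  have pos_tendsto : Tendsto g atTop (𝓝 (P / c)) :=
    tendsto_div_of_tendsto_deriv_add_mul hc h.hasDerivWithinAt_pos hP
  have vel_tendsto_zero : Tendsto w atTop (𝓝 0) := by
    simpa [mul_div_cancel₀ P hc.ne'] using hP.sub (pos_tendsto.const_mul c)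
  have vel_tendsto_force : Tendsto w atTop (𝓝 (f (P / c) / c)) := by
    refine tendsto_div_of_tendsto_deriv_add_mul hc h.hasDerivWithinAt_vel ?_
    simpa [Function.comp_def] using (hf_cont.tendsto _).comp pos_tendsto
  have force_eq_zero : f (P / c) / c = 0 :=
    tendsto_nhds_unique vel_tendsto_force vel_tendsto_zero
  exact ⟨P / c, (div_eq_zero_iff.1 force_eq_zero).resolve_right hc.ne', pos_tendsto,
    vel_tendsto_zero⟩

end IsDampedSol

/-- The square truncated to a globally Lipschitz force. It equals `s ^ 2` exactly on `[-1, 0]`;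
the cutoff by `-s` makes `truncSq s + s ≤ 0` hold on the whole line. -/
def truncSq (s : ℝ) : ℝ := min (s ^ 2) (-s)

lemma truncSq_add_self_nonpos (s : ℝ) : truncSq s + s ≤ 0 :=
  le_neg_iff_add_nonpos_right.1 (min_le_right _ _)

lemma truncSq_nonneg {s : ℝ} (hs : s ≤ 0) : 0 ≤ truncSq s :=
  le_min (sq_nonneg s) (neg_nonneg.2 hs)

lemma truncSq_eq_sq {s : ℝ} (hs : s ∈ Icc (-1) 0) : truncSq s = s ^ 2 :=
  min_eq_left (by nlinarith [hs.1, hs.2])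

lemma lipschitzWith_truncSq : LipschitzWith 2 truncSq := by
  refine LipschitzWith.of_le_add_mul 2 fun a b ↦ ?_
  rw [← sub_le_iff_le_add, NNReal.coe_ofNat, Real.dist_eq]
  have le_sq : truncSq a ≤ a ^ 2 := min_le_left _ _
  have le_neg : truncSq a ≤ -a := min_le_right _ _
  have sub_le_abs : b - a ≤ |a - b| := neg_sub a b ▸ neg_le_abs (a - b)
  have abs_sub_nonneg : 0 ≤ |a - b| := abs_nonneg _
  refine le_min ?_ (by linarith)
  rcases le_total 0 a with ha | ha
  · linarith [sq_nonneg b]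
  rcases le_total a (-1) with ha1 | ha1
  · linarith [sq_nonneg (b + 1)]
  rcases le_total a b with hab | hba
  · have : 0 ≤ (b - a) * (b + a + 2) := mul_nonneg (by linarith) (by linarith)
    linarith
  · have : a ^ 2 ≤ b ^ 2 := sq_le_sq.2 (abs_le_abs_of_nonpos ha hba)
    linarith

lemma locallyLipschitz_sq : LocallyLipschitz fun s : ℝ ↦ s ^ 2 :=
  (contDiff_id (𝕜 := ℝ).pow 2).locallyLipschitz

lemma IsDampedSol.isGSol {lam : ℝ} {g w : ℝ → ℝ} (h : IsDampedSol 2 (· ^ 2) lam g w) :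
    IsGSol lam g := by
  have derIci_eq : EqOn (derIci g) w (Ici 0) := fun x hx ↦
    (h.hasDerivWithinAt_pos x hx).derivWithin (uniqueDiffOn_Ici 0 x hx)
  have derIci_deriv : ∀ x ∈ Ici (0 : ℝ),
      HasDerivWithinAt (derIci g) (g x ^ 2 - 2 * w x) (Ici 0) x := fun x hx ↦
    (h.hasDerivWithinAt_vel x hx).congr derIci_eq (derIci_eq hx)
  refine ⟨fun x hx ↦ (h.hasDerivWithinAt_pos x hx).differentiableWithinAt,
    fun x hx ↦ (derIci_deriv x hx).differentiableWithinAt, fun x hx ↦ ?_, h.pos_zero,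
    (derIci_eq self_mem_Ici).trans h.vel_zero⟩
  rw [derIci_eq hx, derIci2, (derIci_deriv x hx).derivWithin (uniqueDiffOn_Ici 0 x hx)]
  ring

namespace IsGSol

variable {lam : ℝ} {g : ℝ → ℝ}

lemma isDampedSol (h : IsGSol lam g) : IsDampedSol 2 (· ^ 2) lam g (derIci g) where
  hasDerivWithinAt_pos x hx := (h.1 x hx).hasDerivWithinAt
  hasDerivWithinAt_vel x hx := by
    rw [← h.2.2.1 x hx, add_sub_cancel_right]
    exact (h.2.1 x hx).hasDerivWithinAt
  pos_zero := h.2.2.2.1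
  vel_zero := h.2.2.2.2

theorem eqOn {g₁ g₂ : ℝ → ℝ} (h₁ : IsGSol lam g₁) (h₂ : IsGSol lam g₂) : EqOn g₁ g₂ (Ici 0) :=
  h₁.isDampedSol.eqOn locallyLipschitz_sq h₂.isDampedSol

theorem exists_nonpos (h0 : 0 ≤ lam) (h2 : lam ≤ 2) :
    ∃ g, IsGSol lam g ∧ ∀ x ∈ Ici (0 : ℝ), g x ≤ 0 := by
  obtain ⟨g, w, h⟩ := IsDampedSol.exists_of_lipschitzWith lipschitzWith_truncSq 2 lam
  have g_nonpos (x : ℝ) (hx : x ∈ Ici 0) : g x ≤ 0 :=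
    h.pos_nonpos (fun s ↦ by linarith [truncSq_add_self_nonpos s]) h0 hx
  have neg_one_le_g (x : ℝ) (hx : x ∈ Ici 0) : -1 ≤ g x := by
    linarith [h.neg_div_le_pos two_pos (fun t ht ↦ truncSq_nonneg (g_nonpos t ht)) h0 hx]
  exact ⟨g, (h.congr_force fun x hx ↦
    truncSq_eq_sq ⟨neg_one_le_g x hx, g_nonpos x hx⟩).isGSol, g_nonpos⟩

lemma mem_Icc (h : IsGSol lam g) (h0 : 0 ≤ lam) (h2 : lam ≤ 2) {x : ℝ} (hx : x ∈ Ici 0) :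
    g x ∈ Icc (-lam / 2) 0 := by
  obtain ⟨g₀, h₀, h₀_nonpos⟩ := exists_nonpos h0 h2
  refine ⟨h.isDampedSol.neg_div_le_pos two_pos (fun t _ ↦ sq_nonneg (g t)) h0 hx, ?_⟩
  rw [h.eqOn h₀ hx]
  exact h₀_nonpos x hx

lemma abs_derIci_le (h : IsGSol lam g) (h0 : 0 ≤ lam) (h2 : lam ≤ 2) {x : ℝ} (hx : x ∈ Ici 0) :
    |derIci g x| ≤ lam := by
  rw [← abs_of_nonneg h0]
  refine h.isDampedSol.abs_vel_le (fun t ht ↦ ?_) hx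
  obtain ⟨hl, hr⟩ := h.mem_Icc h0 h2 ht
  rw [abs_of_nonneg (sq_nonneg (g t)), abs_of_nonneg h0]
  nlinarith

theorem tendsto_zero (h : IsGSol lam g) (h0 : 0 ≤ lam) (h2 : lam ≤ 2) :
    Tendsto g atTop (𝓝 0) ∧ Tendsto (derIci g) atTop (𝓝 0) := by
  obtain ⟨L, hL, g_tendsto, derIci_tendsto⟩ := h.isDampedSol.exists_tendsto_equilibrium two_pos
    (continuous_pow 2) (fun t _ ↦ sq_nonneg (g t)) (C := lam) fun t ht ↦ by
      linarith [le_of_abs_le (h.abs_derIci_le h0 h2 ht), (h.mem_Icc h0 h2 ht).2]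
  exact ⟨pow_eq_zero_iff two_ne_zero |>.1 hL ▸ g_tendsto, derIci_tendsto⟩

end IsGSol

theorem gLambda_exists_unique_bounds_general (lam : ℝ) (h0 : 0 ≤ lam) (h2 : lam ≤ 2) :
    (∃ g : ℝ → ℝ, IsGSol lam g) ∧
    (∀ g₁ g₂ : ℝ → ℝ, IsGSol lam g₁ → IsGSol lam g₂ → EqOn g₁ g₂ (Ici 0)) ∧
    (∀ g : ℝ → ℝ, IsGSol lam g →
      (∀ x ∈ Ici (0 : ℝ), -lam / 2 ≤ g x ∧ g x ≤ 0) ∧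
      (∀ x ∈ Ici (0 : ℝ), |derIci g x| ≤ lam) ∧
      Tendsto g atTop (𝓝 0) ∧ Tendsto (derIci g) atTop (𝓝 0)) := by
  obtain ⟨g, hg, -⟩ := IsGSol.exists_nonpos h0 h2
  exact ⟨⟨g, hg⟩, fun _ _ h₁ h₂ ↦ h₁.eqOn h₂, fun _ h ↦
    ⟨fun _ hx ↦ h.mem_Icc h0 h2 hx, fun _ hx ↦ h.abs_derIci_le h0 h2 hx, h.tendsto_zero h0 h2⟩⟩

/-- Existence, uniqueness (on `[0,∞)`), uniform bounds and decay at infinity of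
the solution `g_λ` of `g'' + 2 g' = g²`, `g(0) = 0`, `g'(0) = -λ`, for `λ ∈ [0,2)`. -/
theorem gLambda_exists_unique_bounds (lam : ℝ) (h0 : 0 ≤ lam) (h2 : lam < 2) :
    (∃ g : ℝ → ℝ, IsGSol lam g) ∧
    (∀ g₁ g₂ : ℝ → ℝ, IsGSol lam g₁ → IsGSol lam g₂ → Set.EqOn g₁ g₂ (Set.Ici 0)) ∧
    (∀ g : ℝ → ℝ, IsGSol lam g →
      (∀ x ∈ Set.Ici (0 : ℝ), -lam / 2 ≤ g x ∧ g x ≤ 0) ∧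
      (∀ x ∈ Set.Ici (0 : ℝ), |derIci g x| ≤ 2 * lam) ∧
      Filter.Tendsto g Filter.atTop (nhds 0) ∧
      Filter.Tendsto (derIci g) Filter.atTop (nhds 0)) := by
  obtain ⟨hex, huniq, hbounds⟩ := gLambda_exists_unique_bounds_general lam h0 h2.le
  exact ⟨hex, huniq, fun g hg ↦ ⟨(hbounds g hg).1, fun x hx ↦
    ((hbounds g hg).2.1 x hx).trans (by linarith), (hbounds g hg).2.2⟩⟩
end

section
/- Let λ ∈ (0,2). Then x₀ := inf{ x > 0 : g_λ'(x) = 0 } and x₁ := inf{ x > x₀ : g_λ''(x) = 0 } are finite and satisfy 0 < x₀ ≤ x₁; the function g_λ is strictly decreasing on [0,x₀] and strictly increasing on [x₀,∞); and the derivative g_λ' is strictly increasing on [0,x₁] and strictly decreasing on [x₁,∞). -/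
open Set Filter

/-!
Write `p = g'` and `q = g''`, and let the damping `c > 0` be arbitrary. Multiplying by the
integrating factor `e ^ (c x)` gives `(e ^ (c x) p)' = e ^ (c x) g ^ 2 ≥ 0`, so once `p` becomes
positive it stays positive. It does become positive: otherwise `g` would stay below a negative
constant, and `(p + c g)' = g ^ 2` would push `p + c g` to `+∞` while `p` and `g` are negative.

The main point is that `g` never returns to `0`. If `g` and `p` were both positive at some `y`, then
`g` would stay above the subsolution `(6 + 2 c (T - y)) / (T - x) ^ 2` for a large `T`, and so would
explode by time `T`. Hence `g < 0` on `(0, ∞)`, and `(e ^ (c x) q)' = 2 e ^ (c x) g p` has the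
opposite sign to `p`. Therefore `e ^ (c x) q` first increases from a positive value and then
decreases; it has to vanish, since otherwise `p` would increase and `g` would reach `0`.
-/

theorem exists_first_zero {f : ℝ → ℝ} {a b : ℝ} (hab : a ≤ b) (hf : ContinuousOn f (Icc a b))
    (ha : f a < 0) (hb : 0 ≤ f b) : ∃ z ∈ Ioc a b, f z = 0 ∧ ∀ x ∈ Ico a z, f x < 0 := by
  have hcompact : IsCompact (Icc a b ∩ f ⁻¹' {0}) :=
    isCompact_Icc.of_isClosed_subset
      (hf.preimage_isClosed_of_isClosed isClosed_Icc isClosed_singleton) inter_subset_left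
  obtain ⟨z, ⟨hz, hfz : f z = 0⟩, hleast⟩ :=
    hcompact.exists_isLeast (intermediate_value_Icc hab hf ⟨ha.le, hb⟩)
  have hne : a ≠ z := fun h => ha.ne (h ▸ hfz)
  refine ⟨z, ⟨hz.1.lt_of_ne hne, hz.2⟩, hfz, fun x hx => ?_⟩
  by_contra! hfx
  have hxb : x ≤ b := hx.2.le.trans hz.2
  obtain ⟨t, ht, hft⟩ :=
    intermediate_value_Icc hx.1 (hf.mono (Icc_subset_Icc_right hxb)) ⟨ha.le, hfx⟩
  exact (ht.2.trans_lt hx.2).not_ge (hleast ⟨⟨ht.1, ht.2.trans hxb⟩, hft⟩)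

theorem exists_lt_of_le_deriv {f f' : ℝ → ℝ} {a δ : ℝ} (hδ : 0 < δ)
    (hf : ∀ x, a ≤ x → HasDerivAt f (f' x) x) (hf' : ∀ x, a ≤ x → δ ≤ f' x) (M : ℝ) :
    ∃ x, a ≤ x ∧ M < f x := by
  have hgrowth : ∀ x, a ≤ x → δ * (x - a) ≤ f x - f a := fun x hx =>
    (convex_Ici a).mul_sub_le_image_sub_of_le_deriv
      (fun t ht => (hf t ht).continuousAt.continuousWithinAt)
      (fun t ht => (hf t (interior_subset ht)).differentiableAt.differentiableWithinAt)
      (fun t ht => (hf' t (interior_subset ht)).trans_eq (hf t (interior_subset ht)).deriv.symm)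
      a self_mem_Ici x hx hx
  have hlim : Tendsto (fun x => δ * (x - a)) atTop atTop :=
    (tendsto_atTop_add_const_right _ (-a) tendsto_id).const_mul_atTop hδ
  obtain ⟨x, hx, hax⟩ :=
    ((hlim.eventually_gt_atTop (M - f a)).and (eventually_ge_atTop a)).exists
  exact ⟨x, hax, by linarith [hgrowth x hax]⟩

section HalfLine

variable {F f : ℝ → ℝ} {a b : ℝ}

theorem strictAntiOn_Icc_of_deriv_neg (hcont : ContinuousOn F (Ici a))
    (hF : ∀ x, a < x → HasDerivAt F (f x) x) (hf : ∀ x, a < x → x < b → f x < 0) :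
    StrictAntiOn F (Icc a b) := by
  refine strictAntiOn_of_hasDerivWithinAt_neg (convex_Icc a b)
    (hcont.mono Icc_subset_Ici_self) (f' := f) ?_ ?_ <;> rw [interior_Icc]
  · exact fun x hx => (hF x hx.1).hasDerivWithinAt
  · exact fun x hx => hf x hx.1 hx.2

theorem strictMonoOn_Ici_of_deriv_pos (hab : a ≤ b) (hcont : ContinuousOn F (Ici a))
    (hF : ∀ x, a < x → HasDerivAt F (f x) x) (hf : ∀ x, b < x → 0 < f x) :
    StrictMonoOn F (Ici b) := by
  refine strictMonoOn_of_hasDerivWithinAt_pos (convex_Ici b)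
    (hcont.mono (Ici_subset_Ici.mpr hab)) (f' := f) ?_ ?_ <;> rw [interior_Ici]
  · exact fun x hx => (hF x (hab.trans_lt hx)).hasDerivWithinAt
  · exact hf

end HalfLine

section IntegratingFactor

variable {f f' : ℝ → ℝ} {c : ℝ}

theorem hasDerivAt_exp_mul {y x : ℝ} (hf : HasDerivAt f y x) :
    HasDerivAt (fun t => Real.exp (c * t) * f t) (Real.exp (c * x) * (y + c * f x)) x := by
  have hexp : HasDerivAt (fun t => Real.exp (c * t)) (Real.exp (c * x) * c) x := by
    simpa using ((hasDerivAt_id x).const_mul c).exp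
  exact (hexp.mul hf).congr_deriv (by ring)

theorem monotoneOn_exp_mul {s : Set ℝ} (hs : Convex ℝ s) (hcont : ContinuousOn f s)
    (hf : ∀ x ∈ interior s, HasDerivAt f (f' x) x)
    (hnonneg : ∀ x ∈ interior s, 0 ≤ f' x + c * f x) :
    MonotoneOn (fun x => Real.exp (c * x) * f x) s :=
  monotoneOn_of_hasDerivWithinAt_nonneg hs (by fun_prop)
    (fun x hx => (hasDerivAt_exp_mul (hf x hx)).hasDerivWithinAt)
    (fun x hx => mul_nonneg (Real.exp_pos _).le (hnonneg x hx))

end IntegratingFactor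

theorem pos_of_deriv2_add_mul_deriv_nonneg {d d' d'' : ℝ → ℝ} {a b c : ℝ}
    (hd : ∀ x ∈ Icc a b, HasDerivAt d (d' x) x) (hd' : ∀ x ∈ Icc a b, HasDerivAt d' (d'' x) x)
    (hineq : ∀ x ∈ Icc a b, 0 < d x → 0 ≤ d'' x + c * d' x) (hda : 0 < d a) (hda' : 0 ≤ d' a)
    (hab : a ≤ b) : 0 < d b := by
  by_contra! hdb
  obtain ⟨z, ⟨haz, hzb⟩, hdz, hpos⟩ := exists_first_zero (f := fun x => -d x) hab
    (fun x hx => (hd x hx).continuousAt.continuousWithinAt.neg) (by simpa) (by simpa)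
  have hsub : Icc a z ⊆ Icc a b := Icc_subset_Icc_right hzb
  have hmono_deriv : MonotoneOn (fun x => Real.exp (c * x) * d' x) (Icc a z) :=
    monotoneOn_exp_mul (convex_Icc a z)
      (fun x hx => (hd' x (hsub hx)).continuousAt.continuousWithinAt)
      (fun x hx => hd' x (hsub (interior_subset hx))) fun x hx => by
        rw [interior_Icc] at hx
        exact hineq x (hsub (Ioo_subset_Icc_self hx)) (neg_lt_zero.mp (hpos x ⟨hx.1.le, hx.2⟩))
  have hderiv_nonneg : ∀ x ∈ Icc a z, 0 ≤ d' x := fun x hx =>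
    nonneg_of_mul_nonneg_right ((mul_nonneg (Real.exp_pos _).le hda').trans
      (hmono_deriv (left_mem_Icc.mpr haz.le) hx hx.1)) (Real.exp_pos _)
  have hmono : MonotoneOn d (Icc a z) :=
    monotoneOn_of_hasDerivWithinAt_nonneg (convex_Icc a z)
      (fun x hx => (hd x (hsub hx)).continuousAt.continuousWithinAt)
      (fun x hx => (hd x (hsub (interior_subset hx))).hasDerivWithinAt)
      (fun x hx => hderiv_nonneg x (interior_subset hx))
  linarith [hmono (left_mem_Icc.mpr haz.le) (right_mem_Icc.mpr haz.le) haz.le]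

theorem hasDerivAt_div_sub_pow (A : ℝ) {T x : ℝ} (hx : x ≠ T) (n : ℕ) :
    HasDerivAt (fun t => A / (T - t) ^ n) (n * A / (T - x) ^ (n + 1)) x := by
  have hne : T - x ≠ 0 := sub_ne_zero.mpr hx.symm
  have hpow := (((hasDerivAt_id x).const_sub T).pow n).inv (pow_ne_zero n hne)
  refine (hpow.const_mul A).congr_deriv ?_
  rcases n with _ | n
  · simp
  · simp only [Pi.pow_apply, id_eq, Nat.add_sub_cancel]
    field_simp
    ring

theorem tendsto_div_sub_pow_nhdsLT {A : ℝ} (hA : 0 < A) (T : ℝ) {n : ℕ} (hn : n ≠ 0) :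
    Tendsto (fun x => A / (T - x) ^ n) (nhdsWithin T (Iio T)) atTop := by
  have hsub : Tendsto (fun x => (T - x) ^ n) (nhdsWithin T (Iio T)) (nhdsWithin 0 (Ioi 0)) := by
    refine tendsto_nhdsWithin_iff.mpr ⟨?_, ?_⟩
    · have hcont : ContinuousAt (fun x => (T - x) ^ n) T := by fun_prop
      simpa [ContinuousAt, hn] using hcont.tendsto.mono_left nhdsWithin_le_nhds
    · filter_upwards [self_mem_nhdsWithin] with x hx
      exact pow_pos (sub_pos.mpr (mem_Iio.mp hx)) n
  simpa only [div_eq_mul_inv, Function.comp_apply] using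
    (tendsto_inv_nhdsGT_zero.comp hsub).const_mul_atTop hA

/-- `f` changes sign from minus to plus at `z > 0` and nowhere else on `(0, ∞)`. The values of `f`
at nonpositive arguments are irrelevant. -/
structure CrossesZeroAt (f : ℝ → ℝ) (z : ℝ) : Prop where
  zero_lt : 0 < z
  neg : ∀ x, 0 < x → x < z → f x < 0
  eq_zero : f z = 0
  pos : ∀ x, z < x → 0 < f x

namespace CrossesZeroAt

variable {f F : ℝ → ℝ} {z : ℝ}

theorem setOf_eq_singleton (hf : CrossesZeroAt f z) {a : ℝ} (ha : 0 ≤ a) (haz : a < z) :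
    {x | a < x ∧ f x = 0} = {z} := by
  refine Subset.antisymm (fun x ⟨hax, hfx⟩ => ?_)
    (singleton_subset_iff.mpr ⟨haz, hf.eq_zero⟩)
  rcases lt_trichotomy x z with hxz | hxz | hxz
  · exact absurd hfx (hf.neg x (ha.trans_lt hax) hxz).ne
  · exact hxz
  · exact absurd hfx (hf.pos x hxz).ne'

theorem of_eq_mul {E : ℝ → ℝ} (hF : CrossesZeroAt F z) (hE : ∀ x, 0 < E x)
    (heq : ∀ x, 0 < x → F x = E x * f x) : CrossesZeroAt f z where
  zero_lt := hF.zero_lt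
  neg x hx hxz := neg_of_mul_neg_right (heq x hx ▸ hF.neg x hx hxz) (hE x).le
  eq_zero :=
    (mul_eq_zero.mp (heq z hF.zero_lt ▸ hF.eq_zero)).resolve_left (hE z).ne'
  pos x hzx :=
    pos_of_mul_pos_right (heq x (hF.zero_lt.trans hzx) ▸ hF.pos x hzx) (hE x).le

end CrossesZeroAt

theorem exists_crossesZeroAt_of_antitoneOn_of_strictMonoOn {F : ℝ → ℝ} {z b : ℝ}
    (hz : 0 ≤ z) (hzb : z ≤ b) (hcont : ContinuousOn F (Icc z b)) (hanti : AntitoneOn F (Icc 0 z))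
    (hmono : StrictMonoOn F (Ici z)) (h0 : F 0 < 0) (hb : 0 ≤ F b) :
    ∃ w, z < w ∧ CrossesZeroAt F w := by
  have hneg : ∀ x ∈ Icc 0 z, F x < 0 := fun x hx =>
    (hanti (left_mem_Icc.mpr hz) hx hx.1).trans_lt h0
  have hFz : F z < 0 := hneg z (right_mem_Icc.mpr hz)
  obtain ⟨w, hw, hFw⟩ := intermediate_value_Icc hzb hcont ⟨hFz.le, hb⟩
  have hzw : z < w := hw.1.lt_of_ne fun h => hFz.ne (h ▸ hFw)
  refine ⟨w, hzw, hz.trans_lt hzw, fun x hx hxw => ?_, hFw, fun x hwx => ?_⟩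
  · rcases le_total x z with hxz | hzx
    · exact hneg x ⟨hx.le, hxz⟩
    · exact hFw ▸ hmono hzx hw.1 hxw
  · exact hFw ▸ hmono hw.1 (hw.1.trans hwx.le) hwx

/-- `g` solves `g'' + c g' = g ^ 2` on `[0, ∞)`, with `p` and `q` standing for `g'` and `g''`.
At the endpoint `0` only continuity of `g` and `p` and the equation itself are required, so that all
derivatives can be taken two-sided. -/
structure IsDampedSolution (c : ℝ) (g p q : ℝ → ℝ) : Prop where
  continuousOn : ContinuousOn g (Ici 0)
  continuousOn_deriv : ContinuousOn p (Ici 0)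
  hasDerivAt : ∀ x, 0 < x → HasDerivAt g (p x) x
  hasDerivAt_deriv : ∀ x, 0 < x → HasDerivAt p (q x) x
  ode : ∀ x, 0 ≤ x → q x + c * p x = g x ^ 2

namespace IsDampedSolution

variable {c : ℝ} {g p q : ℝ → ℝ}

theorem deriv_pos_of_le (h : IsDampedSolution c g p q) {a x : ℝ} (ha : 0 ≤ a) (hax : a ≤ x)
    (hp : 0 < p a) : 0 < p x := by
  have hmono : MonotoneOn (fun x => Real.exp (c * x) * p x) (Ici 0) := by
    refine monotoneOn_exp_mul (convex_Ici 0) h.continuousOn_deriv (f' := q) ?_ ?_ <;>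
      rw [interior_Ici]
    · exact h.hasDerivAt_deriv
    · exact fun x hx => h.ode x (le_of_lt hx) ▸ sq_nonneg _
  exact pos_of_mul_pos_right ((mul_pos (Real.exp_pos _) hp).trans_le
    (hmono ha (ha.trans hax) hax)) (Real.exp_pos _).le

-- For `c = 0` the function `6 / (T - x) ^ 2` solves the equation; the extra `2 c (T - y)` in the
-- numerator absorbs the damping term on `[y, T)`.
theorem barrier_lt (h : IsDampedSolution c g p q) (hc : 0 ≤ c) {y T x : ℝ} (hy : 0 < y)
    (hg : (6 + 2 * c * (T - y)) / (T - y) ^ 2 < g y)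
    (hp : 2 * (6 + 2 * c * (T - y)) / (T - y) ^ 3 < p y) (hyx : y ≤ x) (hxT : x < T) :
    (6 + 2 * c * (T - y)) / (T - x) ^ 2 < g x := by
  set A := 6 + 2 * c * (T - y)
  have hApos : 0 < A := by nlinarith
  refine sub_pos.mp (pos_of_deriv2_add_mul_deriv_nonneg (a := y) (c := c)
    (d := fun t => g t - A / (T - t) ^ 2) (d' := fun t => p t - 2 * A / (T - t) ^ 3)
    (d'' := fun t => q t - 3 * (2 * A) / (T - t) ^ 4) (fun t ht => ?_) (fun t ht => ?_)
    (fun t ht hpos => ?_) (sub_pos.mpr hg) (sub_pos.mpr hp).le hyx)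
  · exact (h.hasDerivAt t (hy.trans_le ht.1)).sub
      (mod_cast hasDerivAt_div_sub_pow A (ht.2.trans_lt hxT).ne 2)
  · exact (h.hasDerivAt_deriv t (hy.trans_le ht.1)).sub
      (mod_cast hasDerivAt_div_sub_pow (2 * A) (ht.2.trans_lt hxT).ne 3)
  · have htT : 0 < T - t := sub_pos.mpr (ht.2.trans_lt hxT)
    have hsubsolution :
        3 * (2 * A) / (T - t) ^ 4 + c * (2 * A / (T - t) ^ 3) ≤ (A / (T - t) ^ 2) ^ 2 := by
      have hnum : 6 + 2 * c * (T - t) ≤ A := by nlinarith [ht.1]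
      calc 3 * (2 * A) / (T - t) ^ 4 + c * (2 * A / (T - t) ^ 3)
          = A * (6 + 2 * c * (T - t)) / (T - t) ^ 4 := by field_simp; ring
        _ ≤ A * A / (T - t) ^ 4 := by gcongr
        _ = (A / (T - t) ^ 2) ^ 2 := by field_simp
    have hsq : (A / (T - t) ^ 2) ^ 2 ≤ g t ^ 2 := by
      gcongr
      exact (sub_pos.mp hpos).le
    linarith [h.ode t (hy.le.trans ht.1)]

theorem nonpos_of_deriv_pos (h : IsDampedSolution c g p q) (hc : 0 ≤ c) {y : ℝ} (hy : 0 < y)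
    (hp : 0 < p y) : g y ≤ 0 := by
  by_contra! hg
  -- `s` is the reciprocal of the time `T - y` left until the barrier explodes.
  obtain ⟨s, hs, hsg, hsp⟩ :
      ∃ s, 0 < s ∧ 6 * s ^ 2 + 2 * c * s < g y ∧ 2 * (6 * s ^ 3 + 2 * c * s ^ 2) < p y := by
    have hg_cont : ContinuousAt (fun s : ℝ => 6 * s ^ 2 + 2 * c * s) 0 := by fun_prop
    have hp_cont : ContinuousAt (fun s : ℝ => 2 * (6 * s ^ 3 + 2 * c * s ^ 2)) 0 := by fun_prop
    have hg_near := hg_cont.tendsto.eventually_lt_const (u := g y) (by simpa)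
    have hp_near := hp_cont.tendsto.eventually_lt_const (u := p y) (by simpa)
    have hpos : ∀ᶠ s in nhdsWithin (0 : ℝ) (Ioi 0), 0 < s := self_mem_nhdsWithin
    exact (hpos.and (nhdsWithin_le_nhds (hg_near.and hp_near))).exists
  have hsT : y < y + s⁻¹ := lt_add_of_pos_right y (inv_pos.mpr hs)
  have hbarrier : ∀ x ∈ Ico y (y + s⁻¹), (6 + 2 * c * s⁻¹) / (y + s⁻¹ - x) ^ 2 < g x := by
    intro x hx
    have hlt := h.barrier_lt hc (T := y + s⁻¹) hy
      (by rw [add_sub_cancel_left]; convert hsg using 1; field_simp)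
      (by rw [add_sub_cancel_left]; convert hsp using 1; field_simp) hx.1 hx.2
    rwa [add_sub_cancel_left] at hlt
  have hexplode : Tendsto g (nhdsWithin (y + s⁻¹) (Iio (y + s⁻¹))) atTop := by
    refine tendsto_atTop_mono' _ ?_
      (tendsto_div_sub_pow_nhdsLT (A := 6 + 2 * c * s⁻¹) (by positivity) (y + s⁻¹) two_ne_zero)
    filter_upwards [Ico_mem_nhdsLT hsT] with x hx using (hbarrier x hx).le
  exact not_tendsto_nhds_of_tendsto_atTop hexplode _
    ((h.hasDerivAt _ (hy.trans hsT)).continuousAt.tendsto.mono_left nhdsWithin_le_nhds)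

theorem exists_deriv_nonneg (h : IsDampedSolution c g p q) (hc : 0 ≤ c) (hg0 : g 0 ≤ 0) :
    ∃ b, 0 ≤ b ∧ 0 ≤ p b := by
  by_contra! hneg
  have hanti : ∀ x, StrictAntiOn g (Icc 0 x) := fun x =>
    strictAntiOn_Icc_of_deriv_neg h.continuousOn h.hasDerivAt fun t ht _ => hneg t ht.le
  have hg1 : g 1 < 0 := (hanti 1 (by simp) (by simp) one_pos).trans_le hg0
  have hg_le : ∀ x, 1 ≤ x → g x ≤ g 1 := fun x hx =>
    (hanti x).antitoneOn ⟨zero_le_one, hx⟩ ⟨zero_le_one.trans hx, le_rfl⟩ hx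
  have hderiv : ∀ x, 1 ≤ x → HasDerivAt (fun t => p t + c * g t) (g x ^ 2) x := fun x hx => by
    have hx0 : 0 < x := one_pos.trans_le hx
    exact ((h.hasDerivAt_deriv x hx0).add ((h.hasDerivAt x hx0).const_mul c)).congr_deriv
      (h.ode x hx0.le)
  obtain ⟨x, hx, hpos⟩ := exists_lt_of_le_deriv (sq_pos_of_neg hg1) hderiv
    (fun x hx => by nlinarith [hg_le x hx]) 0
  linarith [hneg x (zero_le_one.trans hx),
    mul_nonpos_of_nonneg_of_nonpos hc ((hg_le x hx).trans hg1.le)]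

theorem exists_deriv_crossesZeroAt (h : IsDampedSolution c g p q) (hc : 0 ≤ c) (hg0 : g 0 ≤ 0)
    (hp0 : p 0 < 0) : ∃ z, CrossesZeroAt p z := by
  obtain ⟨b, hb, hpb⟩ := h.exists_deriv_nonneg hc hg0
  obtain ⟨z, ⟨hz, -⟩, hpz, hp_neg⟩ :=
    exists_first_zero hb (h.continuousOn_deriv.mono Icc_subset_Ici_self) hp0 hpb
  have hneg : ∀ x, 0 < x → x < z → p x < 0 := fun x hx hxz => hp_neg x ⟨hx.le, hxz⟩
  refine ⟨z, hz, hneg, hpz, fun x hzx => ?_⟩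
  have hgz : g z < 0 := (strictAntiOn_Icc_of_deriv_neg h.continuousOn h.hasDerivAt hneg
    (left_mem_Icc.mpr hz.le) (right_mem_Icc.mpr hz.le) hz).trans_le hg0
  have hqz : 0 < q z := by
    have hode := h.ode z hz.le
    rw [hpz, mul_zero, add_zero] at hode
    exact hode ▸ sq_pos_of_neg hgz
  have hsign : ∀ᶠ t in nhdsWithin z (Ioi z), SignType.sign (p t) = SignType.sign (t - z) :=
    nhdsWithin_le_nhds
      (eventually_nhdsWithin_sign_eq_of_deriv_pos ((h.hasDerivAt_deriv z hz).deriv ▸ hqz) hpz)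
  obtain ⟨t, hsign, hzt, htx⟩ := (hsign.and (Ioo_mem_nhdsGT hzx)).exists
  have hpt : 0 < p t := sign_eq_one_iff.mp (hsign.trans (sign_pos (sub_pos.mpr hzt)))
  exact h.deriv_pos_of_le (hz.trans hzt).le htx.le hpt

theorem neg_of_deriv_crossesZeroAt {z : ℝ} (h : IsDampedSolution c g p q) (hc : 0 ≤ c)
    (hg0 : g 0 ≤ 0) (hz : CrossesZeroAt p z) {x : ℝ} (hx : 0 < x) : g x < 0 := by
  rcases le_or_gt x z with hxz | hzx
  · exact (strictAntiOn_Icc_of_deriv_neg h.continuousOn h.hasDerivAt hz.neg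
      (left_mem_Icc.mpr hz.zero_lt.le) ⟨hx.le, hxz⟩ hx).trans_le hg0
  · have hzx' : z < x + 1 := hzx.trans (lt_add_one x)
    have hmono : StrictMonoOn g (Ici z) :=
      strictMonoOn_Ici_of_deriv_pos hz.zero_lt.le h.continuousOn h.hasDerivAt hz.pos
    exact (hmono hzx.le hzx'.le (lt_add_one x)).trans_le
      (h.nonpos_of_deriv_pos hc (hx.trans (lt_add_one x)) (hz.pos _ hzx'))

theorem exists_deriv2_nonpos {z : ℝ} (h : IsDampedSolution c g p q) (hc : 0 ≤ c)
    (hg0 : g 0 ≤ 0) (hz : CrossesZeroAt p z) : ∃ b, z ≤ b ∧ q b ≤ 0 := by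
  by_contra! hpos
  have hmono : StrictMonoOn p (Ici z) :=
    strictMonoOn_Ici_of_deriv_pos hz.zero_lt.le h.continuousOn_deriv h.hasDerivAt_deriv
      fun x hx => hpos x hx.le
  have hz1 : z < z + 1 := lt_add_one z
  obtain ⟨x, hx, hgx⟩ := exists_lt_of_le_deriv (hz.pos _ hz1)
    (fun x hx => h.hasDerivAt x (by linarith [hz.zero_lt]))
    (fun x hx => hmono.monotoneOn hz1.le (hz1.le.trans hx) hx) 0
  exact hgx.not_gt (h.neg_of_deriv_crossesZeroAt hc hg0 hz (by linarith [hz.zero_lt]))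

-- By the equation, the function differentiated here is `-e ^ (c x) q`.
theorem hasDerivAt_exp_mul_sub (h : IsDampedSolution c g p q) {x : ℝ} (hx : 0 < x) :
    HasDerivAt (fun t => Real.exp (c * t) * (c * p t - g t ^ 2))
      (Real.exp (c * x) * (-2 * g x * p x)) x := by
  have hinner : HasDerivAt (fun t => c * p t - g t ^ 2) (c * q x - 2 * g x * p x) x :=
    (((h.hasDerivAt_deriv x hx).const_mul c).sub ((h.hasDerivAt x hx).pow 2)).congr_deriv
      (by simp)
  exact (hasDerivAt_exp_mul hinner).congr_deriv
    (by linear_combination Real.exp (c * x) * c * h.ode x hx.le)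

theorem exists_neg_deriv2_crossesZeroAt {z : ℝ} (h : IsDampedSolution c g p q) (hc : 0 < c)
    (hg0 : g 0 ≤ 0) (hp0 : p 0 < 0) (hz : CrossesZeroAt p z) :
    ∃ w, z < w ∧ CrossesZeroAt (fun x => -q x) w := by
  set K : ℝ → ℝ := fun x => Real.exp (c * x) * (c * p x - g x ^ 2)
  have hgneg : ∀ x, 0 < x → g x < 0 := fun x hx => h.neg_of_deriv_crossesZeroAt hc.le hg0 hz hx
  have hKeq : ∀ x, 0 < x → K x = Real.exp (c * x) * -q x := fun x hx => by
    simp only [K, ← h.ode x hx.le]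
    ring
  have hKcont : ContinuousOn K (Ici 0) := by
    have := h.continuousOn
    have := h.continuousOn_deriv
    fun_prop
  have hKderiv : ∀ x, 0 < x → HasDerivAt K (Real.exp (c * x) * (-2 * g x * p x)) x :=
    fun x hx => h.hasDerivAt_exp_mul_sub hx
  have hKanti : StrictAntiOn K (Icc 0 z) :=
    strictAntiOn_Icc_of_deriv_neg hKcont hKderiv fun x hx hxz =>
      mul_neg_of_pos_of_neg (Real.exp_pos _) (by nlinarith [hgneg x hx, hz.neg x hx hxz])
  have hKmono : StrictMonoOn K (Ici z) :=
    strictMonoOn_Ici_of_deriv_pos hz.zero_lt.le hKcont hKderiv fun x hzx =>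
      mul_pos (Real.exp_pos _) (by nlinarith [hgneg x (hz.zero_lt.trans hzx), hz.pos x hzx])
  have hK0 : K 0 < 0 := by
    simp only [K, mul_zero, Real.exp_zero, one_mul]
    nlinarith [sq_nonneg (g 0)]
  obtain ⟨b, hzb, hqb⟩ := h.exists_deriv2_nonpos hc.le hg0 hz
  have hKb : 0 ≤ K b := by
    rw [hKeq b (hz.zero_lt.trans_le hzb)]
    exact mul_nonneg (Real.exp_pos _).le (neg_nonneg.mpr hqb)
  obtain ⟨w, hzw, hw⟩ := exists_crossesZeroAt_of_antitoneOn_of_strictMonoOn hz.zero_lt.le hzb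
    (hKcont.mono fun x hx => hz.zero_lt.le.trans hx.1) hKanti.antitoneOn hKmono hK0 hKb
  exact ⟨w, hzw, hw.of_eq_mul (fun x => Real.exp_pos (c * x)) hKeq⟩

end IsDampedSolution

theorem isDampedSolution_derIci {c : ℝ} {g : ℝ → ℝ} (hg : DifferentiableOn ℝ g (Ici 0))
    (hp : DifferentiableOn ℝ (derIci g) (Ici 0))
    (hode : ∀ x ∈ Ici (0 : ℝ), derIci2 g x + c * derIci g x = g x ^ 2) :
    IsDampedSolution c g (derIci g) (derIci2 g) where
  continuousOn := hg.continuousOn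
  continuousOn_deriv := hp.continuousOn
  hasDerivAt x hx := (hg x hx.le).hasDerivWithinAt.hasDerivAt (Ici_mem_nhds hx)
  hasDerivAt_deriv x hx := (hp x hx.le).hasDerivWithinAt.hasDerivAt (Ici_mem_nhds hx)
  ode := hode

theorem gLambda_unimodal_general {c : ℝ} (hc : 0 < c) {g : ℝ → ℝ}
    (hg : DifferentiableOn ℝ g (Ici 0)) (hp : DifferentiableOn ℝ (derIci g) (Ici 0))
    (hode : ∀ x ∈ Ici (0 : ℝ), derIci2 g x + c * derIci g x = g x ^ 2)
    (hg0 : g 0 ≤ 0) (hp0 : derIci g 0 < 0) {x0 x1 : ℝ}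
    (hx0 : x0 = sInf {x : ℝ | 0 < x ∧ derIci g x = 0})
    (hx1 : x1 = sInf {x : ℝ | x0 < x ∧ derIci2 g x = 0}) :
    {x : ℝ | 0 < x ∧ derIci g x = 0}.Nonempty ∧
    {x : ℝ | x0 < x ∧ derIci2 g x = 0}.Nonempty ∧
    0 < x0 ∧ x0 ≤ x1 ∧
    StrictAntiOn g (Icc 0 x0) ∧
    StrictMonoOn g (Ici x0) ∧
    StrictMonoOn (derIci g) (Icc 0 x1) ∧
    StrictAntiOn (derIci g) (Ici x1) := by
  have h : IsDampedSolution c g (derIci g) (derIci2 g) := isDampedSolution_derIci hg hp hode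
  obtain ⟨z, hz⟩ := h.exists_deriv_crossesZeroAt hc.le hg0 hp0
  have hcritical : {x | 0 < x ∧ derIci g x = 0} = {z} :=
    hz.setOf_eq_singleton le_rfl hz.zero_lt
  obtain rfl : x0 = z := by rw [hx0, hcritical, csInf_singleton]
  obtain ⟨w, hzw, hw⟩ := h.exists_neg_deriv2_crossesZeroAt hc hg0 hp0 hz
  have hinflection : {x | x0 < x ∧ derIci2 g x = 0} = {w} := by
    simpa only [neg_eq_zero] using hw.setOf_eq_singleton hz.zero_lt.le hzw
  obtain rfl : x1 = w := by rw [hx1, hinflection, csInf_singleton]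
  have hneg_deriv : ∀ x, 0 < x → HasDerivAt (fun t => -derIci g t) (-derIci2 g x) x :=
    fun x hx => (h.hasDerivAt_deriv x hx).neg
  have hanti : StrictAntiOn (fun t => -derIci g t) (Icc 0 x1) :=
    strictAntiOn_Icc_of_deriv_neg h.continuousOn_deriv.neg hneg_deriv hw.neg
  have hmono : StrictMonoOn (fun t => -derIci g t) (Ici x1) :=
    strictMonoOn_Ici_of_deriv_pos hw.zero_lt.le h.continuousOn_deriv.neg hneg_deriv hw.pos
  exact ⟨hcritical ▸ singleton_nonempty _, hinflection ▸ singleton_nonempty _, hz.zero_lt, hzw.le,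
    strictAntiOn_Icc_of_deriv_neg h.continuousOn h.hasDerivAt hz.neg,
    strictMonoOn_Ici_of_deriv_pos hz.zero_lt.le h.continuousOn h.hasDerivAt hz.pos,
    by simpa only [neg_neg] using hanti.neg, by simpa only [neg_neg] using hmono.neg⟩

/-- Unimodality of `g_λ` for `λ ∈ (0,2)`: with
`x₀ = inf {x > 0 : g_λ'(x) = 0}` and `x₁ = inf {x > x₀ : g_λ''(x) = 0}`,
both infima are over nonempty sets, `0 < x₀ ≤ x₁`, `g_λ` is strictly
decreasing on `[0,x₀]` and strictly increasing on `[x₀,∞)`, and `g_λ'` is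
strictly increasing on `[0,x₁]` and strictly decreasing on `[x₁,∞)`. -/
theorem gLambda_unimodal (lam : ℝ) (h1 : 0 < lam) (h2 : lam < 2)
    (g : ℝ → ℝ) (hg : IsGSol lam g)
    (x0 x1 : ℝ)
    (hx0 : x0 = sInf {x : ℝ | 0 < x ∧ derIci g x = 0})
    (hx1 : x1 = sInf {x : ℝ | x0 < x ∧ derIci2 g x = 0}) :
    {x : ℝ | 0 < x ∧ derIci g x = 0}.Nonempty ∧
    {x : ℝ | x0 < x ∧ derIci2 g x = 0}.Nonempty ∧
    0 < x0 ∧ x0 ≤ x1 ∧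
    StrictAntiOn g (Set.Icc 0 x0) ∧
    StrictMonoOn g (Set.Ici x0) ∧
    StrictMonoOn (derIci g) (Set.Icc 0 x1) ∧
    StrictAntiOn (derIci g) (Set.Ici x1) := by
  obtain ⟨hg, hp, hode, hg0, hp0⟩ := hg
  exact gLambda_unimodal_general two_pos hg hp hode hg0.le (by linarith) hx0 hx1
end

section
/- For every fixed λ ∈ (0,1), one has x · g_λ(x) → −2 as x → ∞. Moreover, for every fixed μ > 0, one has x · g_{μ/x}(x) → −2μ/(μ+4) as x → ∞. -/
open Set Filter

/-!
Write `u = -g` and `w = u' + 2u`, so that `u' = w - 2u` and `w' = -u²`. For slopes at most `2` one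
has `u ≤ 1`, which makes the system for `u` and `w - u = u' + u` cooperative, and hence `0 ≤ u < w`.
The quotient `r = u / w` and the reciprocal `q = 1 / w` then satisfy `r' = 1 - 2r + r²u` and
`q' = r²`. The first equation pushes `r` towards `1/2`, so `q` grows like `q(0) + x/4`, with errors
uniform in the initial slope `λ = 1 / q(0)`. Therefore `x u(x) = r / (q / x)` tends to
`(1/2) / (L + 1/4)`, where `L = lim 1 / (λ x)`; a fixed `λ` gives `L = 0` and `λ = μ / x` gives
`L = 1 / μ`.
-/

open Topology

theorem hasDerivWithinAt_exp_mul (c : ℝ) (s : Set ℝ) (x : ℝ) :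
    HasDerivWithinAt (fun t => Real.exp (c * t)) (c * Real.exp (c * x)) s x :=
  ((hasDerivAt_id x).const_mul c).exp.hasDerivWithinAt.congr_deriv
    (by simp only [id, mul_one]; ring)

theorem le_of_deriv_add_mul_le_s6 {f f' g g' : ℝ → ℝ} {a k x : ℝ}
    (hf : ∀ t ∈ Ici a, HasDerivWithinAt f (f' t) (Ici a) t)
    (hg : ∀ t ∈ Ici a, HasDerivWithinAt g (g' t) (Ici a) t)
    (hle : ∀ t ∈ Ici a, f' t + k * f t ≤ g' t + k * g t) (ha : f a ≤ g a) (hx : a ≤ x) :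
    f x ≤ g x := by
  let F : ℝ → ℝ := fun t => Real.exp (k * t) * (g t - f t)
  have hF : ∀ t ∈ Ici a, HasDerivWithinAt F
      (Real.exp (k * t) * ((g' t + k * g t) - (f' t + k * f t))) (Ici a) t := fun t ht =>
    ((hasDerivWithinAt_exp_mul k _ t).mul ((hg t ht).sub (hf t ht))).congr_deriv
      (by simp only [Pi.sub_apply]; ring)
  have hmono : MonotoneOn F (Ici a) :=
    monotoneOn_of_hasDerivWithinAt_nonneg (convex_Ici a)
      (fun t ht => (hF t ht).continuousWithinAt)
      (fun t ht => (hF t (interior_subset ht)).mono interior_subset)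
      (fun t ht => mul_nonneg (Real.exp_pos _).le (sub_nonneg.2 (hle t (interior_subset ht))))
  have hFx : 0 ≤ F x :=
    (mul_nonneg (Real.exp_pos _).le (sub_nonneg.2 ha)).trans (hmono self_mem_Ici hx hx)
  exact sub_nonneg.1 (nonneg_of_mul_nonneg_right hFx (Real.exp_pos _))

section Cooperative

variable {y z b c : ℝ → ℝ} {a k x : ℝ}

theorem mul_nonneg_of_cooperative
    (hy : ∀ t ∈ Ici a, HasDerivWithinAt y (b t * z t - k * y t) (Ici a) t)
    (hz : ∀ t ∈ Ici a, HasDerivWithinAt z (c t * y t - k * z t) (Ici a) t)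
    (hb : ∀ t ∈ Ici a, 0 ≤ b t) (hc : ∀ t ∈ Ici a, 0 ≤ c t)
    (hyz : 0 ≤ y a * z a) (hx : a ≤ x) : 0 ≤ y x * z x := by
  refine le_of_deriv_add_mul_le_s6 (f := fun _ => 0) (g := fun t => y t * z t) (k := 2 * k)
    (fun t _ => hasDerivWithinAt_const t _ _) (fun t ht => (hy t ht).mul (hz t ht))
    (fun t ht => ?_) hyz hx
  have hderiv : 0 ≤ b t * z t ^ 2 + c t * y t ^ 2 :=
    add_nonneg (mul_nonneg (hb t ht) (sq_nonneg _)) (mul_nonneg (hc t ht) (sq_nonneg _))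
  linarith

theorem pos_of_cooperative
    (hy : ∀ t ∈ Ici a, HasDerivWithinAt y (b t * z t - k * y t) (Ici a) t)
    (hz : ∀ t ∈ Ici a, HasDerivWithinAt z (c t * y t - k * z t) (Ici a) t)
    (hb : ∀ t ∈ Ici a, 0 ≤ b t) (hc : ∀ t ∈ Ici a, 0 ≤ c t)
    (hya : 0 ≤ y a) (hza : 0 < z a) (hx : a ≤ x) : 0 < z x := by
  have hne : ∀ t ∈ Ici a, z t ≠ 0 := by
    intro t ht
    have hsq : Real.exp (-(2 * k) * t) * (Real.exp (2 * k * a) * z a ^ 2) ≤ z t ^ 2 := by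
      refine le_of_deriv_add_mul_le_s6 (k := 2 * k)
        (f := fun t => Real.exp (-(2 * k) * t) * (Real.exp (2 * k * a) * z a ^ 2))
        (fun s _ => (hasDerivWithinAt_exp_mul _ _ s).mul_const _) (fun s hs => (hz s hs).pow 2)
        (fun s hs => ?_) ?_ ht
      · have hyz := mul_nonneg_of_cooperative hy hz hb hc (mul_nonneg hya hza.le) hs
        have := mul_nonneg (hc s hs) hyz
        simp only [Nat.cast_ofNat, Nat.add_one_sub_one, pow_one, Pi.pow_apply]
        linarith
      · rw [← mul_assoc, ← Real.exp_add]
        simp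
    exact sq_pos_iff.1 (lt_of_lt_of_le (by positivity) hsq)
  by_contra! hneg
  have hcont : ContinuousOn z (Ici a) := fun t ht => (hz t ht).continuousWithinAt
  obtain ⟨t, ht, hzt⟩ :=
    isPreconnected_Ici.intermediate_value hx self_mem_Ici hcont ⟨hneg, hza.le⟩
  exact hne t ht hzt

theorem nonneg_of_cooperative
    (hy : ∀ t ∈ Ici a, HasDerivWithinAt y (b t * z t - k * y t) (Ici a) t)
    (hz : ∀ t ∈ Ici a, HasDerivWithinAt z (c t * y t - k * z t) (Ici a) t)
    (hb : ∀ t ∈ Ici a, 0 ≤ b t) (hc : ∀ t ∈ Ici a, 0 ≤ c t)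
    (hya : 0 ≤ y a) (hza : 0 < z a) (hx : a ≤ x) : 0 ≤ y x := by
  refine le_of_deriv_add_mul_le_s6 (f := fun _ => 0) (k := k)
    (fun t _ => hasDerivWithinAt_const t _ _) hy (fun t ht => ?_) hya hx
  have := mul_nonneg (hb t ht) (pos_of_cooperative hy hz hb hc hya hza ht).le
  linarith

end Cooperative

/-- The equation `u'' + 2u' = -u²` on `[0,∞)`, written as a first-order system for `u` and
`w = u' + 2u`, with `u 0 = 0` and initial slope `u' 0` in `(0, 2]`. The slope is not a separate
parameter: it is `w 0`. -/
structure IsSlowSol (u w : ℝ → ℝ) : Prop where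
  hasDeriv_fst : ∀ x ∈ Ici (0 : ℝ), HasDerivWithinAt u (w x - 2 * u x) (Ici 0) x
  hasDeriv_snd : ∀ x ∈ Ici (0 : ℝ), HasDerivWithinAt w (-u x ^ 2) (Ici 0) x
  fst_zero : u 0 = 0
  snd_zero_pos : 0 < w 0
  snd_zero_le : w 0 ≤ 2

theorem IsGSol.isSlowSol {lam : ℝ} {g : ℝ → ℝ} (hg : IsGSol lam g) (hlam : lam ∈ Ioc 0 2) :
    IsSlowSol (fun x => -g x) (fun x => -(derIci g x + 2 * g x)) := by
  obtain ⟨hd, hd', hode, hg0, hg0'⟩ := hg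
  have hslope : -(derIci g 0 + 2 * g 0) = lam := by rw [hg0, hg0']; ring
  have hg' : ∀ x ∈ Ici (0 : ℝ), HasDerivWithinAt g (derIci g x) (Ici 0) x :=
    fun x hx => (hd x hx).hasDerivWithinAt
  have hg'' : ∀ x ∈ Ici (0 : ℝ), HasDerivWithinAt (derIci g) (derIci2 g x) (Ici 0) x :=
    fun x hx => (hd' x hx).hasDerivWithinAt
  refine ⟨fun x hx => (hg' x hx).neg.congr_deriv (by ring),
    fun x hx => ((hg'' x hx).add ((hg' x hx).const_mul 2)).neg.congr_deriv ?_,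
    by simp [hg0], hslope ▸ hlam.1, hslope ▸ hlam.2⟩
  rw [hode x hx]
  ring

namespace IsSlowSol

section Pointwise

variable {u w : ℝ → ℝ} {x : ℝ}

theorem snd_le_two (h : IsSlowSol u w) (hx : 0 ≤ x) : w x ≤ 2 :=
  le_of_deriv_add_mul_le_s6 (g := fun _ => 2) (k := 0) h.hasDeriv_snd
    (fun t _ => hasDerivWithinAt_const t _ _) (fun t _ => by nlinarith [sq_nonneg (u t)])
    h.snd_zero_le hx

theorem fst_le_one (h : IsSlowSol u w) (hx : 0 ≤ x) : u x ≤ 1 :=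
  le_of_deriv_add_mul_le_s6 (g := fun _ => 1) (k := 2) h.hasDeriv_fst
    (fun t _ => hasDerivWithinAt_const t _ _) (fun t ht => by linarith [h.snd_le_two ht])
    (by simp [h.fst_zero]) hx

theorem fst_nonneg_and_lt_snd (h : IsSlowSol u w) (hx : 0 ≤ x) : 0 ≤ u x ∧ u x < w x := by
  have hu : ∀ t ∈ Ici (0 : ℝ),
      HasDerivWithinAt u (1 * (w t - u t) - 1 * u t) (Ici 0) t :=
    fun t ht => (h.hasDeriv_fst t ht).congr_deriv (by ring)
  have hwu : ∀ t ∈ Ici (0 : ℝ),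
      HasDerivWithinAt (fun s => w s - u s) ((1 - u t) * u t - 1 * (w t - u t)) (Ici 0) t :=
    fun t ht => ((h.hasDeriv_snd t ht).sub (h.hasDeriv_fst t ht)).congr_deriv (by ring)
  have hcoef : ∀ t ∈ Ici (0 : ℝ), 0 ≤ 1 - u t := fun t ht => sub_nonneg.2 (h.fst_le_one ht)
  have hzero : 0 < w 0 - u 0 := by simpa [h.fst_zero] using h.snd_zero_pos
  have hone : ∀ t ∈ Ici (0 : ℝ), (0 : ℝ) ≤ 1 := fun _ _ => zero_le_one
  have hpos : 0 < w x - u x := pos_of_cooperative (z := fun s => w s - u s) hu hwu hone hcoef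
    h.fst_zero.ge hzero hx
  exact ⟨nonneg_of_cooperative hu hwu hone hcoef h.fst_zero.ge hzero hx, sub_pos.1 hpos⟩

theorem fst_nonneg (h : IsSlowSol u w) (hx : 0 ≤ x) : 0 ≤ u x :=
  (h.fst_nonneg_and_lt_snd hx).1

theorem snd_pos (h : IsSlowSol u w) (hx : 0 ≤ x) : 0 < w x :=
  (h.fst_nonneg hx).trans_lt (h.fst_nonneg_and_lt_snd hx).2

theorem ratio_nonneg (h : IsSlowSol u w) (hx : 0 ≤ x) : 0 ≤ u x / w x :=
  div_nonneg (h.fst_nonneg hx) (h.snd_pos hx).le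

theorem ratio_le_one (h : IsSlowSol u w) (hx : 0 ≤ x) : u x / w x ≤ 1 :=
  (div_le_one (h.snd_pos hx)).2 (h.fst_nonneg_and_lt_snd hx).2.le

theorem hasDerivWithinAt_ratio (h : IsSlowSol u w) (hx : 0 ≤ x) :
    HasDerivWithinAt (fun t => u t / w t)
      (1 - 2 * (u x / w x) + (u x / w x) ^ 2 * u x) (Ici 0) x := by
  have hw := (h.snd_pos hx).ne'
  refine ((h.hasDeriv_fst x hx).div (h.hasDeriv_snd x hx) hw).congr_deriv ?_
  field_simp
  ring

theorem hasDerivWithinAt_inv_snd (h : IsSlowSol u w) (hx : 0 ≤ x) :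
    HasDerivWithinAt (fun t => (w t)⁻¹) ((u x / w x) ^ 2) (Ici 0) x :=
  ((h.hasDeriv_snd x hx).inv (h.snd_pos hx).ne').congr_deriv (by rw [neg_neg, div_pow])

theorem le_ratio (h : IsSlowSol u w) (hx : 0 ≤ x) :
    1 / 2 - Real.exp (-2 * x) / 2 ≤ u x / w x := by
  refine le_of_deriv_add_mul_le_s6 (k := 2)
    (fun t _ => ((hasDerivWithinAt_exp_mul (-2) _ t).div_const 2).const_sub (1 / 2))
    (fun t ht => h.hasDerivWithinAt_ratio ht) (fun t ht => ?_) (by simp [h.fst_zero]) hx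
  have := mul_nonneg (sq_nonneg (u t / w t)) (h.fst_nonneg ht)
  linarith

theorem le_inv_snd (h : IsSlowSol u w) (hx : 0 ≤ x) :
    (w 0)⁻¹ - 1 / 4 + x / 4 ≤ (w x)⁻¹ := by
  have hexp : (w 0)⁻¹ - 1 / 4 + x / 4 + Real.exp (-2 * x) / 4 ≤ (w x)⁻¹ := by
    refine le_of_deriv_add_mul_le_s6 (k := 0)
      (fun t _ => (((hasDerivWithinAt_id t _).div_const 4).const_add ((w 0)⁻¹ - 1 / 4)).add
        ((hasDerivWithinAt_exp_mul (-2) _ t).div_const 4))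
      (fun t ht => h.hasDerivWithinAt_inv_snd ht) (fun t ht => ?_) (by simp) hx
    nlinarith [h.le_ratio ht, sq_nonneg (u t / w t - 1 / 2)]
  linarith [Real.exp_pos (-2 * x)]

theorem fst_le (h : IsSlowSol u w) (hx : 0 ≤ x) : u x ≤ 4 / (x + 1) := by
  have hinv : (x + 1) / 4 ≤ (w x)⁻¹ := by
    have : (2 : ℝ)⁻¹ ≤ (w 0)⁻¹ := inv_anti₀ h.snd_zero_pos h.snd_zero_le
    linarith [h.le_inv_snd hx]
  calc u x ≤ w x := (h.fst_nonneg_and_lt_snd hx).2.le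
    _ ≤ ((x + 1) / 4)⁻¹ := (le_inv_comm₀ (by positivity) (h.snd_pos hx)).1 hinv
    _ = 4 / (x + 1) := inv_div _ _

theorem ratio_le (h : IsSlowSol u w) (hx : 0 ≤ x) : u x / w x ≤ 1 / 2 + 4 / (x + 1) := by
  refine le_of_deriv_add_mul_le_s6 (k := 2) (g := fun t => 1 / 2 + 4 / (t + 1))
    (g' := fun t => -(4 / (t + 1) ^ 2)) (fun t ht => h.hasDerivWithinAt_ratio ht)
    (fun t ht => ?_) (fun t ht => ?_) (by norm_num [h.fst_zero]) hx
  · have ht1 : t + 1 ≠ 0 := by linarith [mem_Ici.1 ht]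
    exact (((hasDerivWithinAt_const t _ 4).div ((hasDerivWithinAt_id t _).add_const 1)
      ht1).const_add (1 / 2)).congr_deriv (by simp only [id]; ring)
  · have ht0 : 0 ≤ t := ht
    have hforcing : (u t / w t) ^ 2 * u t ≤ 4 / (t + 1) :=
      (mul_le_of_le_one_left (h.fst_nonneg ht)
        (pow_le_one₀ (h.ratio_nonneg ht) (h.ratio_le_one ht))).trans (h.fst_le ht)
    have hsq : 4 / (t + 1) ^ 2 ≤ 4 / (t + 1) := by
      gcongr
      nlinarith
    linarith

theorem inv_snd_le (h : IsSlowSol u w) (hx : 0 ≤ x) :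
    (w x)⁻¹ ≤ (w 0)⁻¹ + x / 4 + 20 * Real.log (x + 1) := by
  refine le_of_deriv_add_mul_le_s6 (k := 0) (fun t ht => h.hasDerivWithinAt_inv_snd ht)
    (fun t ht => (((hasDerivWithinAt_id t _).div_const 4).const_add _).add
      ((((hasDerivWithinAt_id t _).add_const 1).log ?_).const_mul 20))
    (fun t ht => ?_) (by simp) hx
  · simp only [id]
    linarith [mem_Ici.1 ht]
  · have ht0 : 0 ≤ t := ht
    have hinv : 1 / (t + 1) ≤ 1 := (div_le_one (by positivity)).2 (by linarith)
    have hpos : 0 < 1 / (t + 1) := by positivity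
    have hr : (u t / w t) ^ 2 ≤ (1 / 2 + 4 * (1 / (t + 1))) ^ 2 :=
      pow_le_pow_left₀ (h.ratio_nonneg ht) (by simpa [div_eq_mul_inv] using h.ratio_le ht) 2
    -- `20 = 4 + 16`: for `0 ≤ s ≤ 1` one has `(1/2 + 4s)² = 1/4 + 4s + 16s² ≤ 1/4 + 20s`.
    simp only [id]
    nlinarith

end Pointwise

section Diagonal

variable {u w : ℝ → ℝ → ℝ} {L : ℝ}

theorem tendsto_ratio_diagonal (h : ∀ᶠ x in atTop, IsSlowSol (u x) (w x)) :
    Tendsto (fun x => u x x / w x x) atTop (𝓝 (1 / 2)) := by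
  have hlower : Tendsto (fun x : ℝ => 1 / 2 - Real.exp (-2 * x) / 2) atTop (𝓝 (1 / 2)) := by
    have hexp : Tendsto (fun x : ℝ => Real.exp (-2 * x)) atTop (𝓝 0) :=
      Real.tendsto_exp_atBot.comp (tendsto_id.const_mul_atTop_of_neg (by norm_num))
    simpa only [zero_div, sub_zero] using (hexp.div_const 2).const_sub (1 / 2)
  have hupper : Tendsto (fun x : ℝ => 1 / 2 + 4 / (x + 1)) atTop (𝓝 (1 / 2)) := by
    simpa using ((tendsto_atTop_add_const_right _ 1 tendsto_id).const_div_atTop 4).const_add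
      (1 / 2 : ℝ)
  refine tendsto_of_tendsto_of_tendsto_of_le_of_le' hlower hupper ?_ ?_
  · filter_upwards [h, eventually_ge_atTop 0] with x hsol hx using hsol.le_ratio hx
  · filter_upwards [h, eventually_ge_atTop 0] with x hsol hx using hsol.ratio_le hx

theorem tendsto_inv_mul_snd_diagonal (h : ∀ᶠ x in atTop, IsSlowSol (u x) (w x))
    (hL : Tendsto (fun x => (x * w x 0)⁻¹) atTop (𝓝 L)) :
    Tendsto (fun x => (x * w x x)⁻¹) atTop (𝓝 (L + 1 / 4)) := by
  have hlower : Tendsto (fun x => (x * w x 0)⁻¹ - 1 / 4 / x + 1 / 4) atTop (𝓝 (L + 1 / 4)) := by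
    simpa only [sub_zero, id] using (hL.sub (tendsto_id.const_div_atTop (1 / 4))).add_const (1 / 4)
  have hlog : Tendsto (fun x : ℝ => Real.log (x + 1) / x) atTop (𝓝 0) := by
    simpa [Function.comp_def] using (Real.tendsto_pow_log_div_mul_add_atTop 1 (-1) 1
      one_ne_zero).comp (tendsto_atTop_add_const_right _ 1 tendsto_id)
  have hupper : Tendsto (fun x => (x * w x 0)⁻¹ + 1 / 4 + 20 * (Real.log (x + 1) / x)) atTop
      (𝓝 (L + 1 / 4)) := by
    simpa only [mul_zero, add_zero] using (hL.add_const (1 / 4)).add (hlog.const_mul 20)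
  refine tendsto_of_tendsto_of_tendsto_of_le_of_le' hlower hupper ?_ ?_
  · filter_upwards [h, eventually_gt_atTop 0] with x hsol hx
    calc (x * w x 0)⁻¹ - 1 / 4 / x + 1 / 4 = ((w x 0)⁻¹ - 1 / 4 + x / 4) / x := by field_simp
      _ ≤ (w x x)⁻¹ / x := by gcongr; exact hsol.le_inv_snd hx.le
      _ = (x * w x x)⁻¹ := by rw [mul_comm, mul_inv, div_eq_mul_inv]
  · filter_upwards [h, eventually_gt_atTop 0] with x hsol hx
    calc (x * w x x)⁻¹ = (w x x)⁻¹ / x := by rw [mul_comm, mul_inv, div_eq_mul_inv]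
      _ ≤ ((w x 0)⁻¹ + x / 4 + 20 * Real.log (x + 1)) / x := by
        gcongr; exact hsol.inv_snd_le hx.le
      _ = (x * w x 0)⁻¹ + 1 / 4 + 20 * (Real.log (x + 1) / x) := by field_simp

theorem tendsto_mul_fst_diagonal (h : ∀ᶠ x in atTop, IsSlowSol (u x) (w x))
    (hL : Tendsto (fun x => (x * w x 0)⁻¹) atTop (𝓝 L)) :
    Tendsto (fun x => x * u x x) atTop (𝓝 (2 / (4 * L + 1))) := by
  have hL0 : 0 ≤ L := by
    refine ge_of_tendsto hL ?_
    filter_upwards [h, eventually_ge_atTop 0] with x hsol hx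
    exact inv_nonneg.2 (mul_nonneg hx hsol.snd_zero_pos.le)
  have hquot := (tendsto_ratio_diagonal h).div (tendsto_inv_mul_snd_diagonal h hL) (by positivity)
  have hlim : (1 / 2) / (L + 1 / 4) = 2 / (4 * L + 1) := by field_simp; ring
  rw [hlim] at hquot
  refine hquot.congr' ?_
  filter_upwards [h, eventually_gt_atTop 0] with x hsol hx
  have hw := (hsol.snd_pos hx.le).ne'
  simp only [Pi.div_apply]
  field_simp

end Diagonal

end IsSlowSol

theorem tendsto_mul_diagonal_of_isGSol {lam : ℝ → ℝ} {g : ℝ → ℝ → ℝ} {L : ℝ}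
    (hlam : ∀ᶠ x in atTop, lam x ∈ Ioc 0 2) (hg : ∀ᶠ x in atTop, IsGSol (lam x) (g x))
    (hL : Tendsto (fun x => (x * lam x)⁻¹) atTop (𝓝 L)) :
    Tendsto (fun x => x * g x x) atTop (𝓝 (-2 / (4 * L + 1))) := by
  have hL' : Tendsto (fun x => (x * -(derIci (g x) 0 + 2 * g x 0))⁻¹) atTop (𝓝 L) := by
    refine hL.congr' ?_
    filter_upwards [hg] with x ⟨_, _, _, hg0, hg0'⟩
    rw [hg0, hg0', mul_zero, add_zero, neg_neg]
  have hsol := (hg.and hlam).mono fun x hx => hx.1.isSlowSol hx.2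
  simpa [neg_div] using (IsSlowSol.tendsto_mul_fst_diagonal hsol hL').neg

theorem gLambda_phase_three_general (g : ℝ → ℝ → ℝ) :
    (∀ lam ∈ Ioc (0 : ℝ) 2, IsGSol lam (g lam) →
      Tendsto (fun x => x * g lam x) atTop (𝓝 (-2))) ∧
    ((∀ᶠ lam in 𝓝[>] 0, IsGSol lam (g lam)) → ∀ μ : ℝ, 0 < μ →
      Tendsto (fun x => x * g (μ / x) x) atTop (𝓝 (-(2 * μ) / (μ + 4)))) := by
  constructor
  · intro lam hlam hg
    have hL : Tendsto (fun x => (x * lam)⁻¹) atTop (𝓝 0) :=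
      tendsto_inv_atTop_zero.comp (tendsto_id.atTop_mul_const hlam.1)
    simpa using tendsto_mul_diagonal_of_isGSol (g := fun _ => g lam) (.of_forall fun _ => hlam)
      (.of_forall fun _ => hg) hL
  · intro hg μ hμ
    have hsmall : Tendsto (fun x => μ / x) atTop (𝓝[>] 0) :=
      tendsto_nhdsWithin_iff.2 ⟨tendsto_id.const_div_atTop μ,
        (eventually_gt_atTop 0).mono fun x hx => div_pos hμ hx⟩
    have hL : Tendsto (fun x => (x * (μ / x))⁻¹) atTop (𝓝 μ⁻¹) :=
      tendsto_const_nhds.congr' <| (eventually_ne_atTop 0).mono fun x hx => by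
        simp only [mul_div_cancel₀ μ hx]
    have hlim : -2 / (4 * μ⁻¹ + 1) = -(2 * μ) / (μ + 4) := by field_simp; ring
    exact hlim ▸ tendsto_mul_diagonal_of_isGSol
      (hsmall.eventually (Ioc_mem_nhdsGT two_pos)) (hsmall.eventually hg) hL

/-- Phase 3 asymptotics: for fixed `λ ∈ (0,1)`, `x · g_λ(x) → -2` as `x → ∞`;
and for fixed `μ > 0`, `x · g_{μ/x}(x) → -2μ/(μ+4)` as `x → ∞`. -/
theorem gLambda_phase_three (g : ℝ → ℝ → ℝ)
    (hg : ∀ lam ∈ Set.Ico (0 : ℝ) 2, IsGSol lam (g lam)) :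
    (∀ lam ∈ Set.Ioo (0 : ℝ) 1,
      Filter.Tendsto (fun x => x * g lam x) Filter.atTop (nhds (-2))) ∧
    (∀ μ : ℝ, 0 < μ →
      Filter.Tendsto (fun x => x * g (μ / x) x) Filter.atTop
        (nhds (-(2 * μ) / (μ + 4)))) :=
  ⟨fun lam h => (gLambda_phase_three_general g).1 lam ⟨h.1, by linarith [h.2]⟩
      (hg lam ⟨h.1.le, by linarith [h.2]⟩),
    (gLambda_phase_three_general g).2 <|
      mem_of_superset (Ioo_mem_nhdsGT two_pos) fun lam h => hg lam ⟨h.1.le, h.2⟩⟩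
end

section
/- Let 0 < λ₁ < λ₂ ≤ λ_* < 1. Then for every x ≥ 0 one has g_{λ₂}(x) − g_{λ₁}(x) ≤ −((λ₂ − λ₁) / (2 √(1−λ_*))) · ( e^{−(1−√(1−λ_*)) x} − e^{−(1+√(1−λ_*)) x} ). In particular g_{λ₂}(x) < g_{λ₁}(x) for every x > 0, i.e. the solutions for distinct parameters in (0,1) never intersect away from the origin. -/
open Set Filter

/-!
Multiplying by `exp x` removes the damping: if `g₁`, `g₂` solve the equation with parameters
`λ₁ < λ₂`, then `u x = exp x * (g₁ x - g₂ x)` solves `u'' = (1 + g₁ + g₂) * u` with `u 0 = 0` and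
`u' 0 = λ₂ - λ₁`. Two facts about second-order inequalities decide the matter.

* If `u * u'' ≥ 0`, then `u * u'` and hence `u ^ 2` are nondecreasing, so a function leaving `0`
  upwards cannot come back.
* If `u'' ≥ s ^ 2 * u`, then `t ↦ u' t * sinh (s * (x - t)) + s * u t * cosh (s * (x - t))` is
  nondecreasing on `[0, x]`, and its value at `t = x` is `s * u x`.

The second fact with `s = 1`, applied to `exp x * g x`, gives `exp x * g x ≥ -λ * sinh x`, whence
`g₁ + g₂ ≥ -μ` as soon as `0 ≤ μ` and `λ₁ + λ₂ ≤ 2 * μ`. For `μ ≤ 1` the first fact then gives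
`u > 0`, so `u'' ≥ (1 - μ) * u`, and the second with `s = √(1 - μ)` is the quantitative bound.
-/

open scoped Topology

section SecondOrderInequalities

variable {a c s x : ℝ} {u u' u'' h h' h'' : ℝ → ℝ}

lemma monotoneOn_of_forall_hasDerivWithinAt_nonneg {D : Set ℝ} (hD : Convex ℝ D)
    (hu : ∀ x ∈ D, HasDerivWithinAt u (u' x) D x) (hu' : ∀ x ∈ D, 0 ≤ u' x) :
    MonotoneOn u D :=
  monotoneOn_of_hasDerivWithinAt_nonneg hD (fun x hx => (hu x hx).continuousWithinAt)
    (fun x hx => (hu x (interior_subset hx)).mono interior_subset)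
    (fun x hx => hu' x (interior_subset hx))

lemma eventually_lt_nhdsGT_of_hasDerivWithinAt_pos {m : ℝ}
    (hu : HasDerivWithinAt u m (Ici a) a) (hm : 0 < m) : ∀ᶠ y in 𝓝[>] a, u a < u y := by
  have hslope : Tendsto (slope u a) (𝓝[>] a) (𝓝 m) :=
    (hasDerivWithinAt_iff_tendsto_slope' self_notMem_Ioi).1 (hu.mono Ioi_subset_Ici_self)
  filter_upwards [hslope.eventually_const_lt hm, self_mem_nhdsWithin] with y hy hay
  exact (slope_pos_iff_of_le (le_of_lt hay)).1 hy

lemma monotoneOn_sq_of_mul_deriv2_nonneg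
    (hu : ∀ x ∈ Ici a, HasDerivWithinAt u (u' x) (Ici a) x)
    (hu' : ∀ x ∈ Ici a, HasDerivWithinAt u' (u'' x) (Ici a) x)
    (huu : ∀ x ∈ Ici a, 0 ≤ u x * u'' x) (ha : 0 ≤ u a * u' a) :
    MonotoneOn (fun x => u x ^ 2) (Ici a) := by
  have hmono : MonotoneOn (fun x => u x * u' x) (Ici a) :=
    monotoneOn_of_forall_hasDerivWithinAt_nonneg (convex_Ici a)
      (fun x hx => (hu x hx).mul (hu' x hx))
      (fun x hx => add_nonneg (mul_self_nonneg (u' x)) (huu x hx))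
  refine monotoneOn_of_forall_hasDerivWithinAt_nonneg (u' := fun x => 2 * (u x * u' x))
    (convex_Ici a) (fun x hx => ((hu x hx).pow 2).congr_deriv (by ring)) fun x hx => ?_
  exact mul_nonneg zero_le_two (ha.trans (hmono self_mem_Ici hx hx))

lemma pos_of_mul_deriv2_nonneg
    (hu : ∀ x ∈ Ici a, HasDerivWithinAt u (u' x) (Ici a) x)
    (hu' : ∀ x ∈ Ici a, HasDerivWithinAt u' (u'' x) (Ici a) x)
    (huu : ∀ x ∈ Ici a, 0 ≤ u x * u'' x) (ha : 0 ≤ u a) (ha' : 0 < u' a) (hx : a < x) :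
    0 < u x := by
  by_contra! hux
  obtain ⟨y, huy, hay, hyx⟩ : ∃ y, u a < u y ∧ y ∈ Ioo a x :=
    ((eventually_lt_nhdsGT_of_hasDerivWithinAt_pos (hu a self_mem_Ici) ha').and
      (Ioo_mem_nhdsGT hx)).exists
  have hcont : ContinuousOn u (Icc y x) := fun z hz =>
    (hu z (hay.le.trans hz.1)).continuousWithinAt.mono fun w hw => hay.le.trans hw.1
  obtain ⟨z, hz, huz⟩ : ∃ z ∈ Icc y x, u z = 0 :=
    intermediate_value_Icc' hyx.le hcont ⟨hux, ha.trans huy.le⟩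
  have hsq : u y ^ 2 ≤ u z ^ 2 :=
    monotoneOn_sq_of_mul_deriv2_nonneg hu hu' huu (mul_nonneg ha ha'.le)
      hay.le (hay.le.trans hz.1) hz.1
  exact (pow_pos (ha.trans_lt huy) 2).not_ge (by simpa [huz] using hsq)

lemma add_sinh_cosh_le_of_sq_mul_le_deriv2
    (hu : ∀ x ∈ Ici a, HasDerivWithinAt u (u' x) (Ici a) x)
    (hu' : ∀ x ∈ Ici a, HasDerivWithinAt u' (u'' x) (Ici a) x)
    (hs : 0 ≤ s) (huu : ∀ x ∈ Ici a, s ^ 2 * u x ≤ u'' x) (hx : a ≤ x) :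
    u' a * Real.sinh (s * (x - a)) + s * u a * Real.cosh (s * (x - a)) ≤ s * u x := by
  have hlin (t : ℝ) : HasDerivWithinAt (fun t => s * (x - t)) (-s) (Icc a x) t := by
    simpa using (((hasDerivAt_id t).const_sub x).const_mul s).hasDerivWithinAt
  have hmono : MonotoneOn
      (fun t => u' t * Real.sinh (s * (x - t)) + s * u t * Real.cosh (s * (x - t)))
      (Icc a x) :=
    monotoneOn_of_forall_hasDerivWithinAt_nonneg
      (u' := fun t => (u'' t - s ^ 2 * u t) * Real.sinh (s * (x - t))) (convex_Icc a x)
      (fun t ht => ((((hu' t ht.1).mono Icc_subset_Ici_self).mul (hlin t).sinh).add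
        ((((hu t ht.1).mono Icc_subset_Ici_self).const_mul s).mul (hlin t).cosh)).congr_deriv
          (by ring))
      (fun t ht => mul_nonneg (sub_nonneg.2 (huu t ht.1))
        (Real.sinh_nonneg_iff.2 (mul_nonneg hs (sub_nonneg.2 ht.2))))
  simpa using hmono (left_mem_Icc.2 hx) (right_mem_Icc.2 hx) hx

lemma hasDerivWithinAt_exp_mul_sub_mul {D : Set ℝ} {m : ℝ} (hh : HasDerivWithinAt h m D x) :
    HasDerivWithinAt (fun y => Real.exp (c * (y - a)) * h y)
      (Real.exp (c * (x - a)) * (m + c * h x)) D x := by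
  have hlin : HasDerivWithinAt (fun y => c * (y - a)) c D x := by
    simpa using (((hasDerivAt_id x).sub_const a).const_mul c).hasDerivWithinAt
  exact (hlin.exp.mul hh).congr_deriv (by ring)

lemma pos_of_mul_damped_deriv2_nonneg
    (hh : ∀ x ∈ Ici a, HasDerivWithinAt h (h' x) (Ici a) x)
    (hh' : ∀ x ∈ Ici a, HasDerivWithinAt h' (h'' x) (Ici a) x)
    (hnn : ∀ x ∈ Ici a, 0 ≤ h x * (h'' x + 2 * c * h' x + c ^ 2 * h x))
    (ha : 0 ≤ h a) (ha' : 0 < h' a + c * h a) (hx : a < x) : 0 < h x := by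
  have hpos : 0 < Real.exp (c * (x - a)) * h x :=
    pos_of_mul_deriv2_nonneg (u := fun y => Real.exp (c * (y - a)) * h y)
      (fun y hy => hasDerivWithinAt_exp_mul_sub_mul (hh y hy))
      (fun y hy => hasDerivWithinAt_exp_mul_sub_mul ((hh' y hy).add ((hh y hy).const_mul c)))
      (fun y hy => (mul_nonneg (sq_nonneg (Real.exp (c * (y - a)))) (hnn y hy)).trans_eq
        (by ring))
      (by simpa using ha) (by simpa using ha') hx
  exact pos_of_mul_pos_right hpos (Real.exp_pos _).le

lemma add_sinh_cosh_le_of_damped_deriv2_nonneg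
    (hh : ∀ x ∈ Ici a, HasDerivWithinAt h (h' x) (Ici a) x)
    (hh' : ∀ x ∈ Ici a, HasDerivWithinAt h' (h'' x) (Ici a) x)
    (hs : 0 ≤ s) (hnn : ∀ x ∈ Ici a, 0 ≤ h'' x + 2 * c * h' x + (c ^ 2 - s ^ 2) * h x)
    (hx : a ≤ x) :
    (h' a + c * h a) * Real.sinh (s * (x - a)) + s * h a * Real.cosh (s * (x - a)) ≤
      s * (Real.exp (c * (x - a)) * h x) := by
  simpa using add_sinh_cosh_le_of_sq_mul_le_deriv2
    (fun y hy => hasDerivWithinAt_exp_mul_sub_mul (a := a) (c := c) (hh y hy))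
    (fun y hy => hasDerivWithinAt_exp_mul_sub_mul ((hh' y hy).add ((hh y hy).const_mul c)))
    hs (fun y hy => sub_nonneg.1
      ((mul_nonneg (Real.exp_pos (c * (y - a))).le (hnn y hy)).trans_eq (by ring))) hx

end SecondOrderInequalities

namespace IsGSol

variable {lam lam₁ lam₂ μ x : ℝ} {g g₁ g₂ : ℝ → ℝ}

lemma apply_zero (hg : IsGSol lam g) : g 0 = 0 := hg.2.2.2.1

lemma derIci_zero (hg : IsGSol lam g) : derIci g 0 = -lam := hg.2.2.2.2

lemma hasDerivWithinAt (hg : IsGSol lam g) (hx : x ∈ Ici 0) :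
    HasDerivWithinAt g (derIci g x) (Ici 0) x :=
  (hg.1 x hx).hasDerivWithinAt

lemma hasDerivWithinAt_derIci (hg : IsGSol lam g) (hx : x ∈ Ici 0) :
    HasDerivWithinAt (derIci g) (g x ^ 2 - 2 * derIci g x) (Ici 0) x :=
  (hg.2.1 x hx).hasDerivWithinAt.congr_deriv (eq_sub_of_add_eq (hg.2.2.1 x hx))

lemma neg_mul_sinh_le_exp_mul (hg : IsGSol lam g) (hx : 0 ≤ x) :
    -lam * Real.sinh x ≤ Real.exp x * g x := by
  simpa [hg.apply_zero, hg.derIci_zero] using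
    add_sinh_cosh_le_of_damped_deriv2_nonneg (c := 1) (s := 1)
      (fun y hy => hg.hasDerivWithinAt hy) (fun y hy => hg.hasDerivWithinAt_derIci hy)
      zero_le_one (fun y _ => (sq_nonneg (g y)).trans_eq (by ring)) hx

lemma neg_le_add (hg₁ : IsGSol lam₁ g₁) (hg₂ : IsGSol lam₂ g₂) (hμ : 0 ≤ μ)
    (hsum : lam₁ + lam₂ ≤ 2 * μ) (hx : 0 ≤ x) : -μ ≤ g₁ x + g₂ x := by
  refine le_of_mul_le_mul_left ?_ (Real.exp_pos x)
  calc Real.exp x * -μ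
      = -(2 * μ) * Real.sinh x - μ * Real.exp (-x) := by rw [Real.sinh_eq]; ring
    _ ≤ -(2 * μ) * Real.sinh x := sub_le_self _ (mul_nonneg hμ (Real.exp_pos _).le)
    _ ≤ -(lam₁ + lam₂) * Real.sinh x :=
        mul_le_mul_of_nonneg_right (neg_le_neg hsum) (Real.sinh_nonneg_iff.2 hx)
    _ = -lam₁ * Real.sinh x + -lam₂ * Real.sinh x := by ring
    _ ≤ Real.exp x * g₁ x + Real.exp x * g₂ x :=
        add_le_add (hg₁.neg_mul_sinh_le_exp_mul hx) (hg₂.neg_mul_sinh_le_exp_mul hx)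
    _ = Real.exp x * (g₁ x + g₂ x) := (mul_add ..).symm

lemma lt_of_add_le_two (hg₁ : IsGSol lam₁ g₁) (hg₂ : IsGSol lam₂ g₂) (hlt : lam₁ < lam₂)
    (hsum : lam₁ + lam₂ ≤ 2) (hx : 0 < x) : g₂ x < g₁ x := by
  have hcoeff (y : ℝ) (hy : y ∈ Ici 0) : 0 ≤ 1 + (g₁ y + g₂ y) :=
    neg_le_iff_add_nonneg'.1 (hg₁.neg_le_add hg₂ zero_le_one (by linarith) hy)
  refine sub_pos.1 (pos_of_mul_damped_deriv2_nonneg (c := 1) (h := fun y => g₁ y - g₂ y)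
    (fun y hy => (hg₁.hasDerivWithinAt hy).sub (hg₂.hasDerivWithinAt hy))
    (fun y hy => (hg₁.hasDerivWithinAt_derIci hy).sub (hg₂.hasDerivWithinAt_derIci hy))
    (fun y hy => (mul_nonneg (hcoeff y hy) (sq_nonneg (g₁ y - g₂ y))).trans_eq (by ring))
    ?_ ?_ hx)
  · simp [hg₁.apply_zero, hg₂.apply_zero]
  · simpa [hg₁.apply_zero, hg₂.apply_zero, hg₁.derIci_zero, hg₂.derIci_zero] using hlt

lemma mul_sinh_le_exp_mul_sub (hg₁ : IsGSol lam₁ g₁) (hg₂ : IsGSol lam₂ g₂) (hlt : lam₁ < lam₂)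
    (hμ₀ : 0 ≤ μ) (hμ₁ : μ ≤ 1) (hsum : lam₁ + lam₂ ≤ 2 * μ) (hx : 0 ≤ x) :
    (lam₂ - lam₁) * Real.sinh (√(1 - μ) * x) ≤ √(1 - μ) * (Real.exp x * (g₁ x - g₂ x)) := by
  have hgap (y : ℝ) (hy : 0 ≤ y) : 0 ≤ g₁ y - g₂ y := by
    rcases hy.eq_or_lt with rfl | hy
    · simp [hg₁.apply_zero, hg₂.apply_zero]
    · exact sub_nonneg.2 (hg₁.lt_of_add_le_two hg₂ hlt (by linarith) hy).le
  have hcoeff (y : ℝ) (hy : 0 ≤ y) : 0 ≤ μ + (g₁ y + g₂ y) :=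
    neg_le_iff_add_nonneg'.1 (hg₁.neg_le_add hg₂ hμ₀ hsum hy)
  have hsq : √(1 - μ) ^ 2 = 1 - μ := Real.sq_sqrt (sub_nonneg.2 hμ₁)
  have hcmp := add_sinh_cosh_le_of_damped_deriv2_nonneg (c := 1) (h := fun y => g₁ y - g₂ y)
    (fun y hy => (hg₁.hasDerivWithinAt hy).sub (hg₂.hasDerivWithinAt hy))
    (fun y hy => (hg₁.hasDerivWithinAt_derIci hy).sub (hg₂.hasDerivWithinAt_derIci hy))
    (Real.sqrt_nonneg (1 - μ))
    (fun y hy => (mul_nonneg (hcoeff y hy) (hgap y hy)).trans_eq (by rw [hsq]; ring)) hx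
  simpa [hg₁.apply_zero, hg₂.apply_zero, hg₁.derIci_zero, hg₂.derIci_zero,
    neg_add_eq_sub] using hcmp

end IsGSol

lemma exp_sub_exp_eq_two_mul_sinh (s x : ℝ) :
    Real.exp (-(1 - s) * x) - Real.exp (-(1 + s) * x) =
      2 * (Real.exp (-x) * Real.sinh (s * x)) := by
  rw [Real.sinh_eq, show -(1 - s) * x = -x + s * x by ring,
    show -(1 + s) * x = -x + -(s * x) by ring, Real.exp_add, Real.exp_add]
  ring

theorem gLambda_strict_comparison_general (lam1 lam2 lamstar : ℝ)
    (h0 : 0 ≤ lamstar) (h12 : lam1 < lam2) (hsum : lam1 + lam2 ≤ 2 * lamstar) (hs : lamstar < 1)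
    (g1 g2 : ℝ → ℝ) (hg1 : IsGSol lam1 g1) (hg2 : IsGSol lam2 g2) :
    (∀ x ∈ Set.Ici (0 : ℝ),
      g2 x - g1 x ≤ -((lam2 - lam1) / (2 * Real.sqrt (1 - lamstar))) *
        (Real.exp (-(1 - Real.sqrt (1 - lamstar)) * x)
          - Real.exp (-(1 + Real.sqrt (1 - lamstar)) * x))) ∧
    ∀ x : ℝ, 0 < x → g2 x < g1 x := by
  refine ⟨fun x hx => ?_, fun x hx => hg1.lt_of_add_le_two hg2 h12 (by linarith) hx⟩
  have hsqrt : 0 < √(1 - lamstar) := Real.sqrt_pos.2 (sub_pos.2 hs)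
  have hbound := hg1.mul_sinh_le_exp_mul_sub hg2 h12 h0 hs.le hsum hx
  have hgap : (lam2 - lam1) / √(1 - lamstar) *
      (Real.exp (-x) * Real.sinh (√(1 - lamstar) * x)) ≤ g1 x - g2 x := by
    rw [Real.exp_neg]
    field_simp
    linarith
  rw [exp_sub_exp_eq_two_mul_sinh]
  calc g2 x - g1 x
      ≤ -((lam2 - lam1) / √(1 - lamstar) *
          (Real.exp (-x) * Real.sinh (√(1 - lamstar) * x))) := by linarith
    _ = _ := by field_simp

/-- Strict monotonicity in `λ`: for `0 < λ₁ < λ₂ ≤ λ⋆ < 1`, the quantitative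
separation bound holds, and in particular `g_{λ₂}(x) < g_{λ₁}(x)` for every
`x > 0`. -/
theorem gLambda_strict_comparison (lam1 lam2 lamstar : ℝ)
    (h0 : 0 < lam1) (h12 : lam1 < lam2) (h2s : lam2 ≤ lamstar) (hs : lamstar < 1)
    (g1 g2 : ℝ → ℝ) (hg1 : IsGSol lam1 g1) (hg2 : IsGSol lam2 g2) :
    (∀ x ∈ Set.Ici (0 : ℝ),
      g2 x - g1 x ≤ -((lam2 - lam1) / (2 * Real.sqrt (1 - lamstar))) *
        (Real.exp (-(1 - Real.sqrt (1 - lamstar)) * x)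
          - Real.exp (-(1 + Real.sqrt (1 - lamstar)) * x))) ∧
    ∀ x : ℝ, 0 < x → g2 x < g1 x :=
  gLambda_strict_comparison_general lam1 lam2 lamstar (by linarith) h12 (by linarith) hs
    g1 g2 hg1 hg2
end

section
/- Let R > 1 and s < 0. Suppose v₁, v₂ : [1,R] → ℝ are continuous, twice differentiable on (1,R), satisfy v_i''(r) + (3/r) v_i'(r) = v_i(r)² for all r ∈ (1,R), v_i(1) = s, v_i(R) = 0, and each v_i has a (one-sided) derivative at R with |v_i'(R)| < R^{−3}. Then v₁ = v₂ on [1,R]. -/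
/-!
Since `v² ≥ 0`, the flux `r ^ (d - 1) * v'` of a solution increases, so a bound on it at the outer
radius holds throughout, and integrating it bounds `v` below by a multiple of `-r ^ (2 - d)`. The
difference `w` of two solutions satisfies `Δw = (v₁ + v₂) w`, and when the outer fluxes are small
the potential `v₁ + v₂` is at least the critical Hardy potential `-((d - 2) / 2) ^ 2 / r ^ 2`. This
makes `r ^ (d - 2) * w ^ 2`, which vanishes at both ends, a convex function of `log r`.
-/

open Set

/-- `v` is a continuous solution on `[1,R]`, twice differentiable on `(1,R)`,
of the radial (dimension 4) equation `v'' + (3/r) v' = v²` with boundary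
values `v(1) = s` and `v(R) = 0`. -/
def IsRadialSol4 (R s : ℝ) (v : ℝ → ℝ) : Prop :=
  ContinuousOn v (Set.Icc 1 R) ∧
  (∀ r ∈ Set.Ioo (1 : ℝ) R, DifferentiableAt ℝ v r) ∧
  (∀ r ∈ Set.Ioo (1 : ℝ) R, DifferentiableAt ℝ (deriv v) r) ∧
  (∀ r ∈ Set.Ioo (1 : ℝ) R, deriv (deriv v) r + 3 / r * deriv v r = (v r) ^ 2) ∧
  v 1 = s ∧ v R = 0

/-- `f` is on `s` the Laplacian `v'' + (d - 1) / r * v'` of the radial function `v` with derivative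
`v'` in dimension `d`, which may be any real number. The equation is solved for `v''`. -/
structure HasRadialLaplacianOn (d : ℝ) (s : Set ℝ) (v v' f : ℝ → ℝ) : Prop where
  hasDerivAt : ∀ r ∈ s, HasDerivAt v (v' r) r
  hasDerivAt_deriv : ∀ r ∈ s, HasDerivAt v' (f r - (d - 1) / r * v' r) r

lemma rpow_one_sub_eq_inv {d r : ℝ} (hr : 0 ≤ r) : r ^ (1 - d) = (r ^ (d - 1))⁻¹ := by
  rw [← Real.rpow_neg hr, neg_sub]

lemma rpow_mul_lt_one_of_abs_lt_rpow_neg {r p D : ℝ} (hr : 0 < r) (hD : |D| < r ^ (-p)) :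
    r ^ p * D < 1 := by
  rw [Real.rpow_neg hr.le, ← one_div, lt_div_iff₀' (Real.rpow_pos_of_pos hr p)] at hD
  exact (mul_le_mul_of_nonneg_left (le_abs_self D) (Real.rpow_nonneg hr.le p)).trans_lt hD

/-- The fundamental solution `r ^ (2 - d) / (d - 2)` of the radial Laplacian in dimension `d ≠ 2`,
normalized to have flux `-1`. -/
noncomputable def newtonKernel (d r : ℝ) : ℝ := r ^ (2 - d) / (d - 2)

section NewtonKernel

variable {d r : ℝ}

lemma hasDerivAt_newtonKernel (hd : d ≠ 2) (hr : r ≠ 0) :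
    HasDerivAt (newtonKernel d) (-r ^ (1 - d)) r := by
  have h := (Real.hasDerivAt_rpow_const (p := 2 - d) (Or.inl hr)).div_const (d - 2)
  refine h.congr_deriv ?_
  have hd' : d - 2 ≠ 0 := sub_ne_zero.2 hd
  rw [show 2 - d - 1 = 1 - d by ring]
  field_simp
  ring

lemma continuousOn_newtonKernel (hd : d ≠ 2) : ContinuousOn (newtonKernel d) (Ioi 0) :=
  HasDerivAt.continuousOn fun _ hr => hasDerivAt_newtonKernel hd (ne_of_gt hr)

lemma newtonKernel_nonneg (hd : 2 ≤ d) (hr : 0 ≤ r) : 0 ≤ newtonKernel d r :=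
  div_nonneg (Real.rpow_nonneg hr _) (sub_nonneg.2 hd)

lemma antitoneOn_newtonKernel (hd : 2 ≤ d) : AntitoneOn (newtonKernel d) (Ioi 0) := by
  intro r hr t _ hrt
  exact div_le_div_of_nonneg_right
    (Real.rpow_le_rpow_of_nonpos hr hrt (sub_nonpos.2 hd)) (sub_nonneg.2 hd)

lemma rpow_mul_newtonKernel (hr : 0 < r) :
    r ^ (d - 4) * newtonKernel d r = 1 / ((d - 2) * r ^ 2) := by
  have h : r ^ (d - 4) * r ^ (2 - d) = (r ^ 2)⁻¹ := by
    rw [← Real.rpow_add hr, show d - 4 + (2 - d) = -(2 : ℕ) by push_cast; ring,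
      Real.rpow_neg hr.le, Real.rpow_natCast]
  rw [newtonKernel, ← mul_div_assoc, h, div_eq_mul_inv, one_div, mul_inv_rev]

end NewtonKernel

/-- Monotonicity of `g` makes `f` convex in the variable `∫ dx / p x`. -/
lemma le_max_of_monotoneOn_of_hasDerivAt_div {a b : ℝ} {f g p : ℝ → ℝ}
    (hc : ContinuousOn f (Icc a b)) (hf : ∀ x ∈ Ioo a b, HasDerivAt f (g x / p x) x)
    (hp : ∀ x ∈ Ioo a b, 0 < p x) (hg : MonotoneOn g (Ioo a b)) :
    ∀ x ∈ Icc a b, f x ≤ max (f a) (f b) := by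
  intro x hx
  by_contra! hlt
  obtain ⟨hfa, hfb⟩ := max_lt_iff.1 hlt
  have hax : a < x := hx.1.lt_of_ne (by rintro rfl; exact hfa.false)
  have hxb : x < b := hx.2.lt_of_ne (by rintro rfl; exact hfb.false)
  obtain ⟨y, hy, hy_slope⟩ := exists_hasDerivAt_eq_slope f _ hax
    (hc.mono (Icc_subset_Icc_right hxb.le)) fun r hr => hf r ⟨hr.1, hr.2.trans hxb⟩
  obtain ⟨z, hz, hz_slope⟩ := exists_hasDerivAt_eq_slope f _ hxb
    (hc.mono (Icc_subset_Icc_left hax.le)) fun r hr => hf r ⟨hax.trans hr.1, hr.2⟩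
  have hy_mem : y ∈ Ioo a b := ⟨hy.1, hy.2.trans hxb⟩
  have hz_mem : z ∈ Ioo a b := ⟨hax.trans hz.1, hz.2⟩
  have hgy : 0 < g y := by
    rw [← div_pos_iff_of_pos_right (hp y hy_mem), hy_slope]
    exact div_pos (sub_pos.2 hfa) (sub_pos.2 hax)
  have hgz : g z < 0 := by
    refine neg_of_div_neg_left ?_ (hp z hz_mem).le
    rw [hz_slope]
    exact div_neg_of_neg_of_pos (sub_neg.2 hfb) (sub_pos.2 hxb)
  exact (hgy.trans_le (hg hy_mem hz_mem (hy.2.trans hz.1).le)).not_gt hgz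

namespace HasRadialLaplacianOn

section Algebra

variable {d : ℝ} {s : Set ℝ} {v₁ v₁' f₁ v₂ v₂' f₂ : ℝ → ℝ}

lemma add (h₁ : HasRadialLaplacianOn d s v₁ v₁' f₁) (h₂ : HasRadialLaplacianOn d s v₂ v₂' f₂) :
    HasRadialLaplacianOn d s (v₁ + v₂) (v₁' + v₂') (f₁ + f₂) where
  hasDerivAt r hr := (h₁.hasDerivAt r hr).add (h₂.hasDerivAt r hr)
  hasDerivAt_deriv r hr :=
    ((h₁.hasDerivAt_deriv r hr).add (h₂.hasDerivAt_deriv r hr)).congr_deriv <| by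
      simp only [Pi.add_apply]; ring

lemma sub (h₁ : HasRadialLaplacianOn d s v₁ v₁' f₁) (h₂ : HasRadialLaplacianOn d s v₂ v₂' f₂) :
    HasRadialLaplacianOn d s (v₁ - v₂) (v₁' - v₂') (f₁ - f₂) where
  hasDerivAt r hr := (h₁.hasDerivAt r hr).sub (h₂.hasDerivAt r hr)
  hasDerivAt_deriv r hr :=
    ((h₁.hasDerivAt_deriv r hr).sub (h₂.hasDerivAt_deriv r hr)).congr_deriv <| by
      simp only [Pi.sub_apply]; ring

end Algebra

section Subharmonic

variable {d a b c D : ℝ} {v v' f : ℝ → ℝ}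

lemma hasDerivAt_flux {s : Set ℝ} (h : HasRadialLaplacianOn d s v v' f) {r : ℝ} (hr : r ∈ s)
    (hr0 : r ≠ 0) :
    HasDerivAt (fun r => r ^ (d - 1) * v' r) (r ^ (d - 1) * f r) r := by
  refine ((Real.hasDerivAt_rpow_const (Or.inl hr0)).mul
    (h.hasDerivAt_deriv r hr)).congr_deriv ?_
  rw [Real.rpow_sub_one hr0]
  field_simp
  ring

lemma monotoneOn_flux (h : HasRadialLaplacianOn d (Ioo a b) v v' f) (ha : 0 ≤ a)
    (hf : ∀ r ∈ Ioo a b, 0 ≤ f r) :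
    MonotoneOn (fun r => r ^ (d - 1) * v' r) (Ioo a b) := by
  have hderiv : ∀ r ∈ Ioo a b,
      HasDerivAt (fun r => r ^ (d - 1) * v' r) (r ^ (d - 1) * f r) r :=
    fun r hr => h.hasDerivAt_flux hr (ha.trans_lt hr.1).ne'
  refine monotoneOn_of_hasDerivWithinAt_nonneg (f' := fun r => r ^ (d - 1) * f r)
    (convex_Ioo a b) (HasDerivAt.continuousOn hderiv) ?_ ?_ <;> rw [interior_Ioo]
  · exact fun r hr => (hderiv r hr).hasDerivWithinAt
  · exact fun r hr => mul_nonneg (Real.rpow_nonneg (ha.trans hr.1.le) _) (hf r hr)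

lemma hasDerivAt_add_const_mul_newtonKernel {s : Set ℝ} (h : HasRadialLaplacianOn d s v v' f)
    (hd : d ≠ 2) (c : ℝ) {r : ℝ} (hr : r ∈ s) (hr0 : r ≠ 0) :
    HasDerivAt (fun r => v r + c * newtonKernel d r) (v' r - c * r ^ (1 - d)) r :=
  ((h.hasDerivAt r hr).add ((hasDerivAt_newtonKernel hd hr0).const_mul c)).congr_deriv (by ring)

lemma flux_le_of_hasDerivWithinAt (h : HasRadialLaplacianOn d (Ioo a b) v v' f) (hd : d ≠ 2)
    (ha : 0 ≤ a) (hf : ∀ r ∈ Ioo a b, 0 ≤ f r) (hv : ContinuousOn v (Icc a b))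
    (hD : HasDerivWithinAt v D (Icc a b) b) :
    ∀ r ∈ Ioo a b, r ^ (d - 1) * v' r ≤ b ^ (d - 1) * D := by
  intro r hr
  set m := r ^ (d - 1) * v' r
  have hr0 : 0 < r := ha.trans_lt hr.1
  have hb0 : 0 < b := hr0.trans hr.2
  have hsub : Icc r b ⊆ Icc a b := Icc_subset_Icc_left hr.1.le
  have hderiv : ∀ t ∈ Ioo r b,
      HasDerivAt (fun t => v t + m * newtonKernel d t) (v' t - m * t ^ (1 - d)) t := fun t ht =>
    h.hasDerivAt_add_const_mul_newtonKernel hd m ⟨hr.1.trans ht.1, ht.2⟩ (hr0.trans ht.1).ne'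
  have hnonneg : ∀ t ∈ Ioo r b, 0 ≤ v' t - m * t ^ (1 - d) := by
    intro t ht
    have ht0 : 0 < t := hr0.trans ht.1
    rw [sub_nonneg, rpow_one_sub_eq_inv ht0.le, mul_inv_le_iff₀' (Real.rpow_pos_of_pos ht0 _)]
    exact h.monotoneOn_flux ha hf hr ⟨hr.1.trans ht.1, ht.2⟩ ht.1.le
  have hmono : MonotoneOn (fun t => v t + m * newtonKernel d t) (Icc r b) := by
    refine monotoneOn_of_hasDerivWithinAt_nonneg (f' := fun t => v' t - m * t ^ (1 - d))
      (convex_Icc r b) ?_ ?_ ?_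
    · exact (hv.mono hsub).add (continuousOn_const.mul <|
        (continuousOn_newtonKernel hd).mono fun t ht => hr0.trans_le ht.1)
    all_goals rw [interior_Icc]
    · exact fun t ht => (hderiv t ht).hasDerivWithinAt
    · exact hnonneg
  have hD_nonneg : 0 ≤ D + m * -b ^ (1 - d) :=
    ((hD.mono hsub).add ((hasDerivAt_newtonKernel hd hb0.ne').const_mul m).hasDerivWithinAt
      ).nonneg_of_monotoneOn (uniqueDiffOn_Icc hr.2 b (right_mem_Icc.2 hr.2.le)).accPt hmono
  rwa [mul_neg, ← sub_eq_add_neg, sub_nonneg, rpow_one_sub_eq_inv hb0.le,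
    mul_inv_le_iff₀' (Real.rpow_pos_of_pos hb0 _)] at hD_nonneg

lemma add_mul_newtonKernel_sub_le (h : HasRadialLaplacianOn d (Ioo a b) v v' f) (hd : d ≠ 2)
    (ha : 0 ≤ a) (hv : ContinuousOn v (Icc a b))
    (hflux : ∀ r ∈ Ioo a b, r ^ (d - 1) * v' r ≤ c) :
    ∀ r ∈ Ioo a b, v b + c * (newtonKernel d b - newtonKernel d r) ≤ v r := by
  intro r hr
  have hr0 : 0 < r := ha.trans_lt hr.1
  have hmem : ∀ t ∈ Ioo r b, t ∈ Ioo a b := fun t ht => ⟨hr.1.trans ht.1, ht.2⟩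
  have hanti : AntitoneOn (fun t => v t + c * newtonKernel d t) (Icc r b) := by
    refine antitoneOn_of_hasDerivWithinAt_nonpos (f' := fun t => v' t - c * t ^ (1 - d))
      (convex_Icc r b) ?_ ?_ ?_
    · exact (hv.mono (Icc_subset_Icc_left hr.1.le)).add (continuousOn_const.mul <|
        (continuousOn_newtonKernel hd).mono fun t ht => hr0.trans_le ht.1)
    all_goals rw [interior_Icc]; intro t ht; have ht0 : 0 < t := hr0.trans ht.1
    · exact (h.hasDerivAt_add_const_mul_newtonKernel hd c (hmem t ht) ht0.ne').hasDerivWithinAt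
    · rw [sub_nonpos, rpow_one_sub_eq_inv ht0.le,
        le_mul_inv_iff₀' (Real.rpow_pos_of_pos ht0 _)]
      exact hflux t (hmem t ht)
  have hbr := hanti (left_mem_Icc.2 hr.2.le) (right_mem_Icc.2 hr.2.le) hr.2.le
  linarith

end Subharmonic

section Hardy

variable {d a b : ℝ} {s : Set ℝ} {w w' V : ℝ → ℝ}

lemma hasDerivAt_rpow_mul_sq {f : ℝ → ℝ} (h : HasRadialLaplacianOn d s w w' f) {r : ℝ}
    (hr : r ∈ s) (hr0 : r ≠ 0) :
    HasDerivAt (fun r => r ^ (d - 2) * w r ^ 2)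
      (r ^ (d - 2) * ((d - 2) * w r ^ 2 + 2 * r * w r * w' r) / r) r := by
  refine ((Real.hasDerivAt_rpow_const (Or.inl hr0)).mul
    ((h.hasDerivAt r hr).pow 2)).congr_deriv ?_
  rw [Real.rpow_sub_one hr0]
  simp only [Pi.pow_apply]
  field_simp
  ring

lemma hasDerivAt_rpow_mul_sq_flux (h : HasRadialLaplacianOn d s w w' fun r => V r * w r) {r : ℝ}
    (hr : r ∈ s) (hr0 : r ≠ 0) :
    HasDerivAt (fun r => r ^ (d - 2) * ((d - 2) * w r ^ 2 + 2 * r * w r * w' r))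
      (2 * r ^ (d - 2) / r *
        (((d - 2) / 2 * w r + r * w' r) ^ 2 + (((d - 2) / 2) ^ 2 + r ^ 2 * V r) * w r ^ 2)) r := by
  have hw := h.hasDerivAt r hr
  have hfactor := ((hw.pow 2).const_mul (d - 2)).add
    ((((hasDerivAt_id r).const_mul 2).mul hw).mul (h.hasDerivAt_deriv r hr))
  refine ((Real.hasDerivAt_rpow_const (Or.inl hr0)).mul hfactor).congr_deriv ?_
  rw [Real.rpow_sub_one hr0]
  simp only [Pi.pow_apply, id_eq, Pi.add_apply, Pi.mul_apply, Nat.cast_ofNat,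
    Nat.add_one_sub_one, pow_one, mul_one]
  field_simp
  ring

lemma eqOn_zero_of_hardy_le (h : HasRadialLaplacianOn d (Ioo a b) w w' fun r => V r * w r)
    (ha : 0 < a) (hw : ContinuousOn w (Icc a b))
    (hV : ∀ r ∈ Ioo a b, -((d - 2) / 2) ^ 2 / r ^ 2 ≤ V r) (hwa : w a = 0) (hwb : w b = 0) :
    EqOn w 0 (Icc a b) := by
  have hpos : ∀ r ∈ Ioo a b, 0 < r := fun r hr => ha.trans hr.1
  have hflux := fun r hr => h.hasDerivAt_rpow_mul_sq_flux hr (hpos r hr).ne'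
  have hmono : MonotoneOn (fun r => r ^ (d - 2) * ((d - 2) * w r ^ 2 + 2 * r * w r * w' r))
      (Ioo a b) := by
    refine monotoneOn_of_hasDerivWithinAt_nonneg (convex_Ioo a b)
      (HasDerivAt.continuousOn hflux)
      (fun r hr => (hflux r (interior_subset hr)).hasDerivWithinAt) ?_
    intro r hr
    have hr0 := hpos r (interior_subset hr)
    have hpotential : 0 ≤ ((d - 2) / 2) ^ 2 + r ^ 2 * V r := by
      have := (div_le_iff₀' (by positivity)).1 (hV r (interior_subset hr))
      linarith
    positivity
  have hcont : ContinuousOn (fun r => r ^ (d - 2) * w r ^ 2) (Icc a b) :=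
    (continuousOn_id.rpow_const fun r hr => Or.inl (ha.trans_le hr.1).ne').mul (hw.pow 2)
  intro r hr
  have hle : r ^ (d - 2) * w r ^ 2 ≤ 0 := by
    simpa [hwa, hwb] using le_max_of_monotoneOn_of_hasDerivAt_div hcont
      (fun r hr => h.hasDerivAt_rpow_mul_sq hr (hpos r hr).ne') hpos hmono r hr
  have hrpow : 0 < r ^ (d - 2) := Real.rpow_pos_of_pos (ha.trans_le hr.1) _
  exact pow_eq_zero_iff two_ne_zero |>.1 <|
    (nonpos_of_mul_nonpos_right hle hrpow).antisymm (sq_nonneg _)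

end Hardy

end HasRadialLaplacianOn

lemma neg_hardy_le_mul_newtonKernel_sub {b c d r : ℝ} (hd : 2 < d) (hr : 0 < r) (hrb : r ≤ b)
    (hc : c ≤ (d - 2) ^ 3 / 4 * r ^ (d - 4)) :
    -((d - 2) / 2) ^ 2 / r ^ 2 ≤ c * (newtonKernel d b - newtonKernel d r) := by
  have hd' : 0 < d - 2 := sub_pos.2 hd
  have hb_le_r := antitoneOn_newtonKernel hd.le hr (hr.trans_le hrb) hrb
  have hb_nonneg := newtonKernel_nonneg hd.le (hr.le.trans hrb)
  have hupper : c * (newtonKernel d r - newtonKernel d b) ≤ ((d - 2) / 2) ^ 2 / r ^ 2 := calc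
    _ ≤ (d - 2) ^ 3 / 4 * r ^ (d - 4) * (newtonKernel d r - newtonKernel d b) :=
      mul_le_mul_of_nonneg_right hc (sub_nonneg.2 hb_le_r)
    _ ≤ (d - 2) ^ 3 / 4 * r ^ (d - 4) * newtonKernel d r :=
      mul_le_mul_of_nonneg_left (sub_le_self _ hb_nonneg) (by positivity)
    _ = ((d - 2) / 2) ^ 2 / r ^ 2 := by
      rw [mul_assoc, rpow_mul_newtonKernel hr]
      field_simp
      ring
  rw [neg_div]
  linarith

lemma IsRadialSol4.hasRadialLaplacianOn {R s : ℝ} {v : ℝ → ℝ} (h : IsRadialSol4 R s v) :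
    HasRadialLaplacianOn 4 (Ioo 1 R) v (deriv v) fun r => v r ^ 2 where
  hasDerivAt r hr := (h.2.1 r hr).hasDerivAt
  hasDerivAt_deriv r hr := (h.2.2.1 r hr).hasDerivAt.congr_deriv <| by
    rw [← h.2.2.2.1 r hr]
    ring

theorem radial_uniqueness_dim4_general {d a b D : ℝ} {v₁ v₁' v₂ v₂' : ℝ → ℝ} (hd : 2 < d)
    (ha : 0 < a)
    (h₁ : HasRadialLaplacianOn d (Ioo a b) v₁ v₁' fun r => v₁ r ^ 2)
    (h₂ : HasRadialLaplacianOn d (Ioo a b) v₂ v₂' fun r => v₂ r ^ 2)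
    (hv₁ : ContinuousOn v₁ (Icc a b)) (hv₂ : ContinuousOn v₂ (Icc a b))
    (h_inner : v₁ a = v₂ a) (h_outer : v₁ b = v₂ b) (h_outer_nonneg : 0 ≤ v₁ b)
    (hD : HasDerivWithinAt (v₁ + v₂) D (Icc a b) b)
    (hD_le : ∀ r ∈ Ioo a b, b ^ (d - 1) * D ≤ (d - 2) ^ 3 / 4 * r ^ (d - 4)) :
    EqOn v₁ v₂ (Icc a b) := by
  have h_sum := h₁.add h₂
  have hflux : ∀ r ∈ Ioo a b, r ^ (d - 1) * (v₁' + v₂') r ≤ b ^ (d - 1) * D :=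
    h_sum.flux_le_of_hasDerivWithinAt hd.ne' ha.le
      (fun r _ => add_nonneg (sq_nonneg (v₁ r)) (sq_nonneg (v₂ r))) (hv₁.add hv₂) hD
  have hardy_le : ∀ r ∈ Ioo a b, -((d - 2) / 2) ^ 2 / r ^ 2 ≤ (v₁ + v₂) r := by
    intro r hr
    have hlower := h_sum.add_mul_newtonKernel_sub_le hd.ne' ha.le (hv₁.add hv₂) hflux r hr
    have hkernel := neg_hardy_le_mul_newtonKernel_sub hd (ha.trans hr.1) hr.2.le (hD_le r hr)
    have hsum_nonneg : 0 ≤ (v₁ + v₂) b := add_nonneg h_outer_nonneg (h_outer ▸ h_outer_nonneg)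
    linarith
  have h_diff : HasRadialLaplacianOn d (Ioo a b) (v₁ - v₂) (v₁' - v₂')
      fun r => (v₁ + v₂) r * (v₁ - v₂) r := by
    convert h₁.sub h₂ using 1
    ext r
    exact (sq_sub_sq _ _).symm
  have h_zero := h_diff.eqOn_zero_of_hardy_le ha (hv₁.sub hv₂) hardy_le
    (sub_eq_zero.2 h_inner) (sub_eq_zero.2 h_outer)
  exact fun r hr => sub_eq_zero.1 (h_zero hr)

/-- Uniqueness of nonpositive radial solutions in dimension 4 with small
one-sided derivative at `R`: if `v₁, v₂` both solve the boundary value problem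
with `s < 0` and each has a one-sided derivative at `R` (within `[1,R]`) of
absolute value `< R^{-3}`, then `v₁ = v₂` on `[1,R]`. -/
theorem radial_uniqueness_dim4 (R s : ℝ) (hR : 1 < R) (hs : s < 0)
    (v₁ v₂ : ℝ → ℝ) (h₁ : IsRadialSol4 R s v₁) (h₂ : IsRadialSol4 R s v₂)
    (D₁ D₂ : ℝ)
    (hD₁ : HasDerivWithinAt v₁ D₁ (Set.Icc 1 R) R)
    (hD₁' : |D₁| < R ^ (-3 : ℝ))
    (hD₂ : HasDerivWithinAt v₂ D₂ (Set.Icc 1 R) R)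
    (hD₂' : |D₂| < R ^ (-3 : ℝ)) :
    Set.EqOn v₁ v₂ (Set.Icc 1 R) := by
  have ⟨hv₁, _, _, _, h_inner₁, h_outer₁⟩ := h₁
  have ⟨hv₂, _, _, _, h_inner₂, h_outer₂⟩ := h₂
  refine radial_uniqueness_dim4_general (by norm_num) one_pos h₁.hasRadialLaplacianOn
    h₂.hasRadialLaplacianOn hv₁ hv₂ (h_inner₁.trans h_inner₂.symm)
    (h_outer₁.trans h_outer₂.symm) h_outer₁.ge (hD₁.add hD₂) fun r _ => ?_
  have hflux₁ := rpow_mul_lt_one_of_abs_lt_rpow_neg (by positivity) hD₁'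
  have hflux₂ := rpow_mul_lt_one_of_abs_lt_rpow_neg (by positivity) hD₂'
  norm_num at hflux₁ hflux₂ ⊢
  linarith
end

section
/- Let h : [0,∞) → ℝ be infinitely differentiable with h''(x) − 2 h'(x) = h(x)² for all x ≥ 0, and suppose h is not identically zero. Then: (1) h(x) > 0 for all x ≥ 0; (2) h(x) → 0 as x → ∞; (3) h is totally monotone, i.e. (−1)ⁿ h⁽ⁿ⁾(x) > 0 for every n ≥ 1 and every x ≥ 0; (4) h⁽ⁿ⁾(x) → 0 as x → ∞ for every n ≥ 1. -/
open Set Filter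

/-!
Write `g = h'`. Everything rests on the linear equation `g' = r g + q` with `r > 0`: a value of `g`
above the equilibrium `-q / r` is amplified exponentially, which forces the antiderivative `h` to
`+∞`. A global solution of `h'' = r h' + h ^ p` with `p` even cannot diverge to `+∞` (energy
estimate for `h'' ≥ h ^ p`) nor to `-∞` (there `-h' ≥ h ^ p / r`), because both comparisons blow up
in finite time; so `h` decreases to a limit, and the limit is an equilibrium, hence `0`.
Differentiating the equation `n` times, `h⁽ⁿ⁺¹⁾` solves the linear equation with source
`q = (h ^ p)⁽ⁿ⁾`; by Leibniz' rule this source has sign `(-1)ⁿ` and tends to `0`, and these two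
properties pass to `-h⁽ⁿ⁺¹⁾`.
-/

open scoped Topology

section HalfLine

variable {f f' : ℝ → ℝ} {a b : ℝ}

theorem monotoneOn_Ici_of_hasDerivWithinAt_nonneg (hab : a ≤ b)
    (hf : ∀ x ∈ Ici a, HasDerivWithinAt f (f' x) (Ici a) x) (hf' : ∀ x ∈ Ici b, 0 ≤ f' x) :
    MonotoneOn f (Ici b) :=
  have hsub : Ici b ⊆ Ici a := Ici_subset_Ici.2 hab
  monotoneOn_of_hasDerivWithinAt_nonneg (convex_Ici b)
    (fun x hx => (hf x (hsub hx)).continuousWithinAt.mono hsub)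
    (fun x hx => (hf x (hsub (interior_subset hx))).mono (interior_subset.trans hsub))
    (fun x hx => hf' x (interior_subset hx))

theorem tendsto_atTop_of_eventually_le_deriv {c : ℝ} (hc : 0 < c)
    (hf : ∀ x ∈ Ici a, HasDerivWithinAt f (f' x) (Ici a) x) (hf' : ∀ᶠ x in atTop, c ≤ f' x) :
    Tendsto f atTop atTop := by
  obtain ⟨b, hb⟩ := eventually_atTop.1 (hf'.and (eventually_ge_atTop a))
  have hmono : MonotoneOn (fun x => f x - c * x) (Ici b) :=
    monotoneOn_Ici_of_hasDerivWithinAt_nonneg (hb b le_rfl).2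
      (fun x hx => (hf x hx).sub ((hasDerivWithinAt_id x _).const_mul c))
      (fun x hx => by linarith [(hb x hx).1])
  refine tendsto_atTop_mono' atTop ?_
    (tendsto_atTop_add_const_left atTop (f b - c * b) (tendsto_id.const_mul_atTop hc))
  filter_upwards [eventually_ge_atTop b] with x hx
  have := hmono self_mem_Ici hx hx
  simp only [id]
  linarith

theorem tendsto_atBot_or_nhds_of_antitoneOn_Ici (hf : AntitoneOn f (Ici a)) :
    Tendsto f atTop atBot ∨ ∃ l, Tendsto f atTop (𝓝 l) := by
  have hanti : Antitone fun x => f (max a x) := fun x y hxy =>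
    hf (le_max_left a x) (le_max_left a y) (max_le_max_left a hxy)
  have heq : (fun x => f (max a x)) =ᶠ[atTop] f := by
    filter_upwards [eventually_ge_atTop a] with x hx
    rw [max_eq_right hx]
  simpa only [tendsto_congr' heq] using tendsto_atTop_of_antitone hanti

end HalfLine

section BlowUp

variable {f f' g k : ℝ → ℝ} {a : ℝ}

theorem not_tendsto_atTop_of_rpow_le_deriv {c s : ℝ} (hc : 0 < c) (hs : 1 < s)
    (hf : ∀ x ∈ Ici a, HasDerivWithinAt f (f' x) (Ici a) x)
    (hf' : ∀ᶠ x in atTop, c * f x ^ s ≤ f' x) : ¬ Tendsto f atTop atTop := by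
  intro htop
  obtain ⟨b, hb⟩ := eventually_atTop.1
    (hf'.and ((htop.eventually_gt_atTop 0).and (eventually_ge_atTop a)))
  have hpos : ∀ x ∈ Ici b, 0 < f x := fun x hx => (hb x hx).2.1
  have hderiv : ∀ x ∈ Ici b, HasDerivWithinAt (fun y => -f y ^ (1 - s))
      (-(f' x * (1 - s) * f x ^ (1 - s - 1))) (Ici b) x := fun x hx =>
    (((hf x (hb x hx).2.2).mono (Ici_subset_Ici.2 (hb b le_rfl).2.2)).rpow_const
      (.inl (hpos x hx).ne')).neg
  have hle : ∀ x ∈ Ici b, (s - 1) * c ≤ -(f' x * (1 - s) * f x ^ (1 - s - 1)) := fun x hx => by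
    have hcancel : f x ^ s * f x ^ (1 - s - 1) = 1 := by
      rw [← Real.rpow_add (hpos x hx), show s + (1 - s - 1) = 0 by ring, Real.rpow_zero]
    calc (s - 1) * c = (s - 1) * (c * f x ^ s * f x ^ (1 - s - 1)) := by
          rw [mul_assoc c, hcancel, mul_one]
      _ ≤ (s - 1) * (f' x * f x ^ (1 - s - 1)) := by
          have := Real.rpow_nonneg (hpos x hx).le (1 - s - 1)
          have := (hb x hx).1
          gcongr
      _ = _ := by ring
  have htop' : Tendsto (fun x => -f x ^ (1 - s)) atTop atTop :=
    tendsto_atTop_of_eventually_le_deriv (mul_pos (sub_pos.2 hs) hc) hderiv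
      ((eventually_ge_atTop b).mono hle)
  have hzero : Tendsto (fun x => -f x ^ (1 - s)) atTop (𝓝 (-0)) := by
    simpa only [neg_sub, Function.comp_def] using
      ((tendsto_rpow_neg_atTop (sub_pos.2 hs)).comp htop).neg
  exact not_tendsto_nhds_of_tendsto_atTop htop' _ hzero

theorem eventually_pow_le_sq_deriv {p : ℕ}
    (hf : ∀ x ∈ Ici a, HasDerivWithinAt f (g x) (Ici a) x)
    (hg : ∀ x ∈ Ici a, HasDerivWithinAt g (k x) (Ici a) x)
    (hk : ∀ᶠ x in atTop, f x ^ p ≤ k x) (hg0 : ∀ᶠ x in atTop, 0 ≤ g x)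
    (htop : Tendsto f atTop atTop) :
    ∀ᶠ x in atTop, f x ^ (p + 1) / (p + 1) ≤ g x ^ 2 := by
  have hp : (0 : ℝ) < p + 1 := by positivity
  obtain ⟨b, hb⟩ := eventually_atTop.1 (hk.and (hg0.and (eventually_ge_atTop a)))
  have henergy : MonotoneOn (fun x => g x ^ 2 - 2 * (f x ^ (p + 1) / (p + 1))) (Ici b) := by
    refine monotoneOn_Ici_of_hasDerivWithinAt_nonneg (f' := fun x => 2 * g x * (k x - f x ^ p))
      (hb b le_rfl).2.2 (fun x hx => ?_) (fun x hx => ?_)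
    · refine (((hg x hx).pow 2).sub
        ((((hf x hx).pow (p + 1)).div_const (p + 1 : ℝ)).const_mul 2)).congr_deriv ?_
      push_cast
      field_simp
    · exact mul_nonneg (mul_nonneg two_pos.le (hb x hx).2.1) (sub_nonneg.2 (hb x hx).1)
  have hpow : Tendsto (fun x => f x ^ (p + 1) / (p + 1)) atTop atTop :=
    ((tendsto_pow_atTop p.succ_ne_zero).comp htop).atTop_div_const hp
  filter_upwards [eventually_ge_atTop b,
    hpow.eventually_ge_atTop (-(g b ^ 2 - 2 * (f b ^ (p + 1) / (p + 1))))] with x hbx hx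
  have := henergy self_mem_Ici hbx hbx
  linarith

theorem not_tendsto_atTop_of_pow_le_deriv2 {p : ℕ} (hp : 1 < p)
    (hf : ∀ x ∈ Ici a, HasDerivWithinAt f (g x) (Ici a) x)
    (hg : ∀ x ∈ Ici a, HasDerivWithinAt g (k x) (Ici a) x)
    (hk : ∀ᶠ x in atTop, f x ^ p ≤ k x) (hg0 : ∀ᶠ x in atTop, 0 ≤ g x) :
    ¬ Tendsto f atTop atTop := by
  intro htop
  have hs : (1 : ℝ) < ((p + 1 : ℕ) : ℝ) / 2 := by
    have : (1 : ℝ) < p := by exact_mod_cast hp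
    push_cast
    linarith
  refine not_tendsto_atTop_of_rpow_le_deriv (c := (√(p + 1 : ℝ))⁻¹) (by positivity) hs hf ?_ htop
  filter_upwards [eventually_pow_le_sq_deriv hf hg hk hg0 htop, hg0,
    htop.eventually_ge_atTop 0] with x hsq hgx hfx
  calc (√(p + 1 : ℝ))⁻¹ * f x ^ (((p + 1 : ℕ) : ℝ) / 2)
      = √(f x ^ (p + 1) / (p + 1)) := by
        rw [Real.sqrt_div (by positivity), Real.sqrt_eq_rpow (f x ^ (p + 1)),
          ← Real.rpow_natCast_mul hfx, mul_one_div, div_eq_inv_mul _ √(p + 1 : ℝ)]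
    _ ≤ g x := Real.sqrt_le_iff.2 ⟨hgx, hsq⟩

end BlowUp

section LinearEquation

variable {f g g' q : ℝ → ℝ} {a b r m x : ℝ}

theorem hasDerivWithinAt_exp_neg_mul {s : Set ℝ} {v : ℝ} (hg : HasDerivWithinAt g v s x) :
    HasDerivWithinAt (fun y => Real.exp (-r * y) * g y)
      (Real.exp (-r * x) * (v - r * g x)) s x :=
  (((hasDerivWithinAt_id x s).const_mul (-r)).exp.mul hg).congr_deriv (by simp only [id]; ring)

theorem exp_mul_le_of_mul_le_deriv (hab : a ≤ b)
    (hg : ∀ y ∈ Ici a, HasDerivWithinAt g (g' y) (Ici a) y)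
    (hg' : ∀ y ∈ Ici b, r * g y ≤ g' y) (hbx : b ≤ x) : Real.exp (r * (x - b)) * g b ≤ g x := by
  have hmono : Real.exp (-r * b) * g b ≤ Real.exp (-r * x) * g x :=
    monotoneOn_Ici_of_hasDerivWithinAt_nonneg hab
      (fun y hy => hasDerivWithinAt_exp_neg_mul (hg y hy))
      (fun y hy => mul_nonneg (Real.exp_pos _).le (sub_nonneg.2 (hg' y hy))) self_mem_Ici hbx hbx
  calc Real.exp (r * (x - b)) * g b = Real.exp (r * x) * (Real.exp (-r * b) * g b) := by
        rw [← mul_assoc, ← Real.exp_add]; ring_nf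
    _ ≤ Real.exp (r * x) * (Real.exp (-r * x) * g x) := by gcongr
    _ = g x := by rw [← mul_assoc, ← Real.exp_add]; simp

theorem mul_add_nonpos_of_not_tendsto_atTop (hr : 0 < r)
    (hf : ∀ y ∈ Ici a, HasDerivWithinAt f (g y) (Ici a) y)
    (hg : ∀ y ∈ Ici a, HasDerivWithinAt g (r * g y + q y) (Ici a) y)
    (hx : x ∈ Ici a) (hq : ∀ y ∈ Ici x, m ≤ q y) (hnot : ¬ Tendsto f atTop atTop) :
    r * g x + m ≤ 0 := by
  by_contra! hpos
  have hexp : ∀ y ∈ Ici x, Real.exp (r * (y - x)) * (r * g x + m) ≤ r * g y + m := fun y hy =>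
    exp_mul_le_of_mul_le_deriv (g := fun y => r * g y + m) hx
      (fun y hy => ((hg y hy).const_mul r).add_const m)
      (fun y hy => mul_le_mul_of_nonneg_left (by linarith [hq y hy]) hr.le) hy
  have htop : Tendsto (fun y => Real.exp (r * (y - x)) * (r * g x + m)) atTop atTop :=
    (Real.tendsto_exp_atTop.comp
      ((tendsto_atTop_add_const_right _ (-x) tendsto_id).const_mul_atTop hr)).atTop_mul_const hpos
  refine hnot (tendsto_atTop_of_eventually_le_deriv one_pos hf ?_)
  filter_upwards [htop.eventually_ge_atTop (r * 1 + m), eventually_ge_atTop x] with y hy hxy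
  exact le_of_mul_le_mul_left (by linarith [hexp y hxy]) hr

theorem eventually_mul_add_nonpos_of_not_tendsto_atTop (hr : 0 < r)
    (hf : ∀ y ∈ Ici a, HasDerivWithinAt f (g y) (Ici a) y)
    (hg : ∀ y ∈ Ici a, HasDerivWithinAt g (r * g y + q y) (Ici a) y)
    (hq : ∀ᶠ y in atTop, m ≤ q y) (hnot : ¬ Tendsto f atTop atTop) :
    ∀ᶠ y in atTop, r * g y + m ≤ 0 := by
  filter_upwards [eventually_forall_ge_atTop.2 hq, eventually_ge_atTop a] with y hqy hy
  exact mul_add_nonpos_of_not_tendsto_atTop hr hf hg hy hqy hnot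

theorem deriv_neg_of_source_pos (hr : 0 < r)
    (hf : ∀ y ∈ Ici a, HasDerivWithinAt f (g y) (Ici a) y)
    (hg : ∀ y ∈ Ici a, HasDerivWithinAt g (r * g y + q y) (Ici a) y)
    (hq : ∀ y ∈ Ici a, 0 < q y) (hnot : ¬ Tendsto f atTop atTop) (hx : x ∈ Ici a) : g x < 0 := by
  have hderiv : ∀ y ∈ Ici a, HasDerivWithinAt (fun z => Real.exp (-r * z) * g z)
      (Real.exp (-r * y) * q y) (Ici a) y := fun y hy => by
    simpa only [add_sub_cancel_left] using hasDerivWithinAt_exp_neg_mul (r := r) (hg y hy)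
  have hmono : StrictMonoOn (fun y => Real.exp (-r * y) * g y) (Ici a) :=
    strictMonoOn_of_hasDerivWithinAt_pos (convex_Ici a)
      (fun y hy => (hderiv y hy).continuousWithinAt)
      (fun y hy => (hderiv y (interior_subset hy)).mono interior_subset)
      (fun y hy => mul_pos (Real.exp_pos _) (hq y (interior_subset hy)))
  have hx1 : x + 1 ∈ Ici a := le_add_of_le_of_nonneg (mem_Ici.1 hx) zero_le_one
  have hg1 : r * g (x + 1) + 0 ≤ 0 := mul_add_nonpos_of_not_tendsto_atTop hr hf hg hx1
    (fun y hy => (hq y (mem_Ici.1 hx1 |>.trans hy)).le) hnot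
  refine neg_of_mul_neg_right ?_ (Real.exp_pos (-r * x)).le
  calc Real.exp (-r * x) * g x < Real.exp (-r * (x + 1)) * g (x + 1) :=
        hmono hx hx1 (lt_add_one x)
    _ ≤ 0 := mul_nonpos_of_nonneg_of_nonpos (Real.exp_pos _).le
        (nonpos_of_mul_nonpos_right (by linarith) hr)

theorem tendsto_deriv_zero_of_source_tendsto_zero {l : ℝ} (hr : 0 < r)
    (hf : ∀ y ∈ Ici a, HasDerivWithinAt f (g y) (Ici a) y)
    (hg : ∀ y ∈ Ici a, HasDerivWithinAt g (r * g y + q y) (Ici a) y)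
    (hfl : Tendsto f atTop (𝓝 l)) (hq : Tendsto q atTop (𝓝 0)) : Tendsto g atTop (𝓝 0) := by
  refine tendsto_order.2 ⟨fun c hc => ?_, fun c hc => ?_⟩
  · have hg_neg : ∀ y ∈ Ici a, HasDerivWithinAt (-g) (r * (-g) y + (-q) y) (Ici a) y :=
      fun y hy => (hg y hy).neg.congr_deriv (by simp only [Pi.neg_apply]; ring)
    have hq_neg : ∀ᶠ y in atTop, r * c / 2 ≤ (-q) y := by
      filter_upwards [hq.eventually_le_const (u := -(r * c / 2)) (by nlinarith)] with y hy
      exact le_neg_of_le_neg hy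
    filter_upwards [eventually_mul_add_nonpos_of_not_tendsto_atTop hr (fun y hy => (hf y hy).neg)
      hg_neg hq_neg (not_tendsto_atTop_of_tendsto_nhds hfl.neg)] with y hy
    nlinarith
  · filter_upwards [eventually_mul_add_nonpos_of_not_tendsto_atTop hr hf hg
      (hq.eventually_const_le (u := -(r * c / 2)) (by nlinarith))
      (not_tendsto_atTop_of_tendsto_nhds hfl)] with y hy
    nlinarith

end LinearEquation

section PowerEquation

variable {f g q : ℝ → ℝ} {a r x : ℝ} {p : ℕ}

theorem deriv_nonpos_of_pow_le_source (hr : 0 < r) (hp : 1 < p)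
    (hf : ∀ y ∈ Ici a, HasDerivWithinAt f (g y) (Ici a) y)
    (hg : ∀ y ∈ Ici a, HasDerivWithinAt g (r * g y + q y) (Ici a) y)
    (hq : ∀ y ∈ Ici a, 0 ≤ q y) (hpq : ∀ᶠ y in atTop, f y ^ p ≤ q y) (hx : x ∈ Ici a) :
    g x ≤ 0 := by
  by_contra! hpos
  have hqx : ∀ y ∈ Ici x, 0 ≤ q y := fun y hy => hq y (mem_Ici.1 hx |>.trans hy)
  have htop : Tendsto f atTop atTop := by
    by_contra hnot
    have := mul_add_nonpos_of_not_tendsto_atTop hr hf hg hx hqx hnot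
    linarith [mul_pos hr hpos]
  have hg0 : ∀ y ∈ Ici x, 0 ≤ g y := fun y hy =>
    (mul_pos (Real.exp_pos _) hpos).le.trans
      (exp_mul_le_of_mul_le_deriv hx hg (fun z hz => le_add_of_nonneg_right (hqx z hz)) hy)
  refine not_tendsto_atTop_of_pow_le_deriv2 hp hf hg ?_ ((eventually_ge_atTop x).mono hg0) htop
  filter_upwards [hpq, eventually_ge_atTop x] with y hpy hy
  exact hpy.trans (le_add_of_nonneg_left (mul_nonneg hr.le (hg0 y hy)))

theorem antitoneOn_of_even_pow_source (hr : 0 < r) (hp : Even p) (hp1 : 1 < p)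
    (hf : ∀ y ∈ Ici a, HasDerivWithinAt f (g y) (Ici a) y)
    (hg : ∀ y ∈ Ici a, HasDerivWithinAt g (r * g y + f y ^ p) (Ici a) y) :
    AntitoneOn f (Ici a) := by
  have hneg : MonotoneOn (-f) (Ici a) :=
    monotoneOn_Ici_of_hasDerivWithinAt_nonneg le_rfl (fun y hy => (hf y hy).neg) fun y hy =>
      neg_nonneg.2 (deriv_nonpos_of_pow_le_source hr hp1 hf hg (fun z _ => hp.pow_nonneg (f z))
        (.of_forall fun _ => le_rfl) hy)
  simpa only [Pi.neg_apply, neg_neg] using hneg.neg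

theorem not_tendsto_atBot_of_even_pow_source (hr : 0 < r) (hp : Even p) (hp1 : 1 < p)
    (hf : ∀ y ∈ Ici a, HasDerivWithinAt f (g y) (Ici a) y)
    (hg : ∀ y ∈ Ici a, HasDerivWithinAt g (r * g y + f y ^ p) (Ici a) y) :
    ¬ Tendsto f atTop atBot := by
  intro hbot
  have hanti := antitoneOn_of_even_pow_source hr hp hp1 hf hg
  refine not_tendsto_atTop_of_rpow_le_deriv (inv_pos.2 hr) (s := p) (by exact_mod_cast hp1)
    (fun y hy => (hf y hy).neg) ?_ (tendsto_neg_atBot_atTop.comp hbot)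
  filter_upwards [hbot.eventually_le_atBot 0, eventually_ge_atTop a] with x hfx hx
  have hsource : ∀ y ∈ Ici x, f x ^ p ≤ f y ^ p := fun y hy => by
    have hfy : f y ≤ f x := hanti hx (hx.trans hy) hy
    rw [← hp.neg_pow (f x), ← hp.neg_pow (f y)]
    exact pow_le_pow_left₀ (neg_nonneg.2 hfx) (neg_le_neg hfy) p
  have hgx : r * g x + f x ^ p ≤ 0 := mul_add_nonpos_of_not_tendsto_atTop hr hf hg hx hsource
    fun htop => (hbot.not_tendsto disjoint_atBot_atTop) htop
  rw [Pi.neg_apply, Real.rpow_natCast, hp.neg_pow, inv_mul_le_iff₀ hr]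
  linarith

theorem tendsto_zero_of_even_pow_source (hr : 0 < r) (hp : Even p) (hp1 : 1 < p)
    (hf : ∀ y ∈ Ici a, HasDerivWithinAt f (g y) (Ici a) y)
    (hg : ∀ y ∈ Ici a, HasDerivWithinAt g (r * g y + f y ^ p) (Ici a) y) :
    Tendsto f atTop (𝓝 0) := by
  obtain hbot | ⟨l, hl⟩ := tendsto_atBot_or_nhds_of_antitoneOn_Ici
    (antitoneOn_of_even_pow_source hr hp hp1 hf hg)
  · exact absurd hbot (not_tendsto_atBot_of_even_pow_source hr hp hp1 hf hg)
  suffices l = 0 by rwa [this] at hl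
  by_contra hl0
  have hpos : 0 < l ^ p := hp.pow_pos hl0
  have hg_le : ∀ᶠ y in atTop, r * g y + l ^ p / 2 ≤ 0 :=
    eventually_mul_add_nonpos_of_not_tendsto_atTop hr hf hg
      ((hl.pow p).eventually_const_le (half_lt_self hpos)) (not_tendsto_atTop_of_tendsto_nhds hl)
  have htop : Tendsto (-f) atTop atTop :=
    tendsto_atTop_of_eventually_le_deriv (c := l ^ p / 2 / r) (by positivity)
      (fun y hy => (hf y hy).neg) <| hg_le.mono fun y hy => by
        rw [div_le_iff₀ hr]
        linarith
  exact not_tendsto_nhds_of_tendsto_atTop htop _ hl.neg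

theorem nonneg_of_even_pow_source (hr : 0 < r) (hp : Even p) (hp1 : 1 < p)
    (hf : ∀ y ∈ Ici a, HasDerivWithinAt f (g y) (Ici a) y)
    (hg : ∀ y ∈ Ici a, HasDerivWithinAt g (r * g y + f y ^ p) (Ici a) y) (hx : x ∈ Ici a) :
    0 ≤ f x := by
  refine le_of_tendsto (tendsto_zero_of_even_pow_source hr hp hp1 hf hg) ?_
  filter_upwards [eventually_ge_atTop x] with y hxy
  exact antitoneOn_of_even_pow_source hr hp hp1 hf hg hx (mem_Ici.1 hx |>.trans hxy) hxy

theorem eqOn_zero_of_even_pow_source (hr : 0 < r) (hp : Even p) (hp1 : 1 < p)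
    (hf : ∀ y ∈ Ici a, HasDerivWithinAt f (g y) (Ici a) y)
    (hg : ∀ y ∈ Ici a, HasDerivWithinAt g (r * g y + f y ^ p) (Ici a) y)
    (hx : x ∈ Ici a) (hfx : f x = 0) : EqOn f 0 (Ici a) := by
  have hanti := antitoneOn_of_even_pow_source hr hp hp1 hf hg
  have hf0 : ∀ y ∈ Ici a, 0 ≤ f y := fun y => nonneg_of_even_pow_source hr hp hp1 hf hg
  have hg0 : ∀ y ∈ Ici a, g y ≤ 0 := fun y => deriv_nonpos_of_pow_le_source hr hp1 hf hg
    (fun z _ => hp.pow_nonneg (f z)) (.of_forall fun _ => le_rfl)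
  have hright : ∀ y ∈ Ici x, f y = 0 := fun y hy =>
    have hay : y ∈ Ici a := mem_Ici.1 hx |>.trans hy
    le_antisymm (hfx ▸ hanti hx hay hy) (hf0 y hay)
  have hgx : g x = 0 := (uniqueDiffOn_Ici x x self_mem_Ici).eq_deriv _
    ((hf x hx).mono (Ici_subset_Ici.2 hx)) ((hasDerivWithinAt_const x _ 0).congr hright hfx)
  -- `f - g` controls both `f ≥ 0` and `-g ≥ 0` and decays at most exponentially, so it cannot
  -- vanish at `x` unless it vanishes on all of `[a, x]`.
  have hgrowth : ∀ y ∈ Ici a,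
      -(1 + f a ^ (p - 1)) * (f y - g y) ≤ g y - (r * g y + f y ^ p) := fun y hy => by
    have hpow : f y ^ p ≤ f a ^ (p - 1) * f y := by
      rw [← pow_sub_one_mul (by lia) (f y)]
      have := hf0 y hy
      gcongr
      exact hanti self_mem_Ici hy hy
    have hpow0 : 0 ≤ f a ^ (p - 1) := pow_nonneg (hf0 a self_mem_Ici) _
    nlinarith [hf0 y hy, hg0 y hy, mul_nonneg hr.le (neg_nonneg.2 (hg0 y hy)),
      mul_nonneg hpow0 (neg_nonneg.2 (hg0 y hy))]
  intro y hy
  obtain hyx | hxy := le_total y x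
  · have hexp := exp_mul_le_of_mul_le_deriv hy (fun z hz => (hf z hz).sub (hg z hz))
      (fun z hz => hgrowth z (mem_Ici.1 hy |>.trans hz)) hyx
    simp only [Pi.sub_apply, hfx, hgx, sub_self] at hexp
    have hfg : f y - g y ≤ 0 := nonpos_of_mul_nonpos_right hexp (Real.exp_pos _)
    exact (hfg.trans' (le_sub_self_iff (f y) |>.2 (hg0 y hy))).antisymm (hf0 y hy)
  · exact hright y hxy

theorem pos_of_even_pow_source (hr : 0 < r) (hp : Even p) (hp1 : 1 < p)
    (hf : ∀ y ∈ Ici a, HasDerivWithinAt f (g y) (Ici a) y)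
    (hg : ∀ y ∈ Ici a, HasDerivWithinAt g (r * g y + f y ^ p) (Ici a) y)
    (hne : ∃ y ∈ Ici a, f y ≠ 0) (hx : x ∈ Ici a) : 0 < f x := by
  refine (nonneg_of_even_pow_source hr hp hp1 hf hg hx).lt_of_ne' fun hfx => ?_
  obtain ⟨y, hy, hfy⟩ := hne
  exact hfy (eqOn_zero_of_even_pow_source hr hp hp1 hf hg hx hfx hy)

end PowerEquation

section IteratedDeriv

variable {f g : ℝ → ℝ} {s : Set ℝ} {x : ℝ} {n p : ℕ}

theorem neg_one_pow_mul_iteratedDerivWithin_mul_pos (hs : UniqueDiffOn ℝ s) (hx : x ∈ s)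
    (hf : ContDiffWithinAt ℝ n f s x) (hg : ContDiffWithinAt ℝ n g s x)
    (hf0 : ∀ i ≤ n, 0 < (-1) ^ i * iteratedDerivWithin i f s x)
    (hg0 : ∀ i ≤ n, 0 < (-1) ^ i * iteratedDerivWithin i g s x) :
    0 < (-1) ^ n * iteratedDerivWithin n (f * g) s x := by
  rw [iteratedDerivWithin_mul hx hs hf hg, Finset.mul_sum]
  refine Finset.sum_pos (fun i hi => ?_) Finset.nonempty_range_add_one
  have hin : i ≤ n := Finset.mem_range_succ_iff.1 hi
  have hchoose : (0 : ℝ) < n.choose i := by exact_mod_cast Nat.choose_pos hin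
  calc (0 : ℝ) < n.choose i * (((-1) ^ i * iteratedDerivWithin i f s x) *
        ((-1) ^ (n - i) * iteratedDerivWithin (n - i) g s x)) :=
        mul_pos hchoose (mul_pos (hf0 i hin) (hg0 (n - i) (n.sub_le i)))
    _ = _ := by
        rw [← pow_mul_pow_sub (-1 : ℝ) hin]
        ring

theorem neg_one_pow_mul_iteratedDerivWithin_pow_pos (hs : UniqueDiffOn ℝ s) (hx : x ∈ s)
    (hp : p ≠ 0) (hf : ContDiffWithinAt ℝ n f s x)
    (hf0 : ∀ i ≤ n, 0 < (-1) ^ i * iteratedDerivWithin i f s x) :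
    0 < (-1) ^ n * iteratedDerivWithin n (f ^ p) s x := by
  induction p, Nat.one_le_iff_ne_zero.2 hp using Nat.le_induction generalizing n with
  | base => simpa only [pow_one] using hf0 n le_rfl
  | succ k hk ih =>
    rw [pow_succ]
    refine neg_one_pow_mul_iteratedDerivWithin_mul_pos hs hx (hf.pow k) hf (fun i hi => ?_) hf0
    exact ih (by lia) (hf.of_le (by exact_mod_cast hi)) fun j hj => hf0 j (hj.trans hi)

theorem tendsto_iteratedDerivWithin_mul_zero {l : Filter ℝ} (hs : UniqueDiffOn ℝ s) (hl : s ∈ l)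
    (hf : ContDiffOn ℝ n f s) (hg : ContDiffOn ℝ n g s)
    (hf0 : ∀ i ≤ n, Tendsto (iteratedDerivWithin i f s) l (𝓝 0))
    (hg0 : ∀ i ≤ n, Tendsto (iteratedDerivWithin i g s) l (𝓝 0)) :
    Tendsto (iteratedDerivWithin n (f * g) s) l (𝓝 0) := by
  have hleibniz : (fun x => ∑ i ∈ Finset.range (n + 1),
      n.choose i * iteratedDerivWithin i f s x * iteratedDerivWithin (n - i) g s x)
      =ᶠ[l] iteratedDerivWithin n (f * g) s := by
    filter_upwards [hl] with x hx
    exact (iteratedDerivWithin_mul hx hs (hf x hx) (hg x hx)).symm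
  refine Tendsto.congr' hleibniz ?_
  rw [← Finset.sum_const_zero (s := Finset.range (n + 1))]
  refine tendsto_finsetSum _ fun i hi => ?_
  simpa only [mul_zero] using
    ((hf0 i (Finset.mem_range_succ_iff.1 hi)).const_mul (n.choose i : ℝ)).mul
      (hg0 (n - i) (n.sub_le i))

theorem tendsto_iteratedDerivWithin_pow_zero {l : Filter ℝ} (hs : UniqueDiffOn ℝ s) (hl : s ∈ l)
    (hp : p ≠ 0) (hf : ContDiffOn ℝ n f s)
    (hf0 : ∀ i ≤ n, Tendsto (iteratedDerivWithin i f s) l (𝓝 0)) :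
    Tendsto (iteratedDerivWithin n (f ^ p) s) l (𝓝 0) := by
  induction p, Nat.one_le_iff_ne_zero.2 hp using Nat.le_induction generalizing n with
  | base => simpa only [pow_one] using hf0 n le_rfl
  | succ k hk ih =>
    rw [pow_succ]
    refine tendsto_iteratedDerivWithin_mul_zero hs hl (hf.pow k) hf (fun i hi => ?_) hf0
    exact ih (by lia) (hf.of_le (by exact_mod_cast hi)) fun j hj => hf0 j (hj.trans hi)

theorem hasDerivWithinAt_iteratedDerivWithin (hs : UniqueDiffOn ℝ s) (hx : x ∈ s)
    (hf : ContDiffOn ℝ (n + 1) f s) :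
    HasDerivWithinAt (iteratedDerivWithin n f s) (iteratedDerivWithin (n + 1) f s x) s x := by
  rw [iteratedDerivWithin_succ]
  exact (hf.differentiableOn_iteratedDerivWithin (by exact_mod_cast n.lt_succ_self) hs
    x hx).hasDerivWithinAt

theorem iteratedDerivWithin_add_two_eq {r : ℝ} {q : ℝ → ℝ} (hs : UniqueDiffOn ℝ s)
    (hf : ContDiffOn ℝ (n + 1) f s) (hq : ContDiffOn ℝ n q s)
    (heq : EqOn (iteratedDerivWithin 2 f s) (r • iteratedDerivWithin 1 f s + q) s) (hx : x ∈ s) :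
    iteratedDerivWithin (n + 2) f s x =
      r * iteratedDerivWithin (n + 1) f s x + iteratedDerivWithin n q s x := by
  induction n generalizing x with
  | zero => simpa using heq hx
  | succ n ih =>
    push_cast at hf hq
    have hrec : ∀ y ∈ s, iteratedDerivWithin (n + 2) f s y =
        r * iteratedDerivWithin (n + 1) f s y + iteratedDerivWithin n q s y := fun y hy =>
      ih (hf.of_le le_self_add) (hq.of_le le_self_add) hy
    rw [iteratedDerivWithin_succ]
    exact ((((hasDerivWithinAt_iteratedDerivWithin hs hx (by exact_mod_cast hf)).const_mul r).add
      (hasDerivWithinAt_iteratedDerivWithin hs hx hq)).congr hrec (hrec x hx)).derivWithin (hs x hx)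

end IteratedDeriv

section TotallyMonotone

variable {h : ℝ → ℝ} {a r : ℝ} {n p : ℕ}

theorem iteratedDerivWithin_succ_alternating (hr : 0 < r) (hp : p ≠ 0)
    (hsmooth : ContDiffOn ℝ (⊤ : ℕ∞) h (Ici a))
    (hODE : ∀ x ∈ Ici a, iteratedDerivWithin 2 h (Ici a) x - r * iteratedDerivWithin 1 h (Ici a) x
      = h x ^ p)
    (hpos : ∀ i ≤ n, ∀ x ∈ Ici a, 0 < (-1) ^ i * iteratedDerivWithin i h (Ici a) x)
    (hlim : ∀ i ≤ n, Tendsto (iteratedDerivWithin i h (Ici a)) atTop (𝓝 0)) :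
    (∀ x ∈ Ici a, 0 < (-1) ^ (n + 1) * iteratedDerivWithin (n + 1) h (Ici a) x) ∧
      Tendsto (iteratedDerivWithin (n + 1) h (Ici a)) atTop (𝓝 0) := by
  have hs : UniqueDiffOn ℝ (Ici a) := uniqueDiffOn_Ici a
  have hcont (k : ℕ) : ContDiffOn ℝ k h (Ici a) := hsmooth.of_le (by exact_mod_cast le_top)
  have hderiv (k : ℕ) : ∀ x ∈ Ici a, HasDerivWithinAt (iteratedDerivWithin k h (Ici a))
      (iteratedDerivWithin (k + 1) h (Ici a) x) (Ici a) x := fun x hx =>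
    hasDerivWithinAt_iteratedDerivWithin hs hx (hcont (k + 1))
  have hequation : ∀ x ∈ Ici a, iteratedDerivWithin (n + 2) h (Ici a) x =
      r * iteratedDerivWithin (n + 1) h (Ici a) x + iteratedDerivWithin n (h ^ p) (Ici a) x :=
    fun x hx => iteratedDerivWithin_add_two_eq hs (hcont (n + 1)) ((hcont n).pow p)
      (fun y hy => eq_add_of_sub_eq' (hODE y hy)) hx
  have hg : ∀ x ∈ Ici a, HasDerivWithinAt (iteratedDerivWithin (n + 1) h (Ici a))
      (r * iteratedDerivWithin (n + 1) h (Ici a) x + iteratedDerivWithin n (h ^ p) (Ici a) x)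
      (Ici a) x := fun x hx => (hderiv (n + 1) x hx).congr_deriv (hequation x hx)
  refine ⟨fun x hx => ?_, tendsto_deriv_zero_of_source_tendsto_zero hr (hderiv n) hg (hlim n le_rfl)
    (tendsto_iteratedDerivWithin_pow_zero hs (Ici_mem_atTop a) hp (hcont n) hlim)⟩
  have hneg : (-1) ^ n * iteratedDerivWithin (n + 1) h (Ici a) x < 0 :=
    deriv_neg_of_source_pos (g := fun y => (-1) ^ n * iteratedDerivWithin (n + 1) h (Ici a) y)
      (q := fun y => (-1) ^ n * iteratedDerivWithin n (h ^ p) (Ici a) y) hr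
      (fun y hy => (hderiv n y hy).const_mul ((-1) ^ n))
      (fun y hy => ((hg y hy).const_mul ((-1) ^ n)).congr_deriv (by ring))
      (fun y hy => neg_one_pow_mul_iteratedDerivWithin_pow_pos hs hy hp (hcont n y hy)
        fun i hi => hpos i hi y hy)
      (not_tendsto_atTop_of_tendsto_nhds ((hlim n le_rfl).const_mul ((-1) ^ n))) hx
  rw [pow_succ]
  linarith

theorem hSol_totally_monotone_general (hr : 0 < r) (hp : Even p) (hp1 : 1 < p)
    (hsmooth : ContDiffOn ℝ (⊤ : ℕ∞) h (Ici a))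
    (hODE : ∀ x ∈ Ici a, iteratedDerivWithin 2 h (Ici a) x - r * iteratedDerivWithin 1 h (Ici a) x
      = h x ^ p)
    (hne : ∃ x ∈ Ici a, h x ≠ 0) :
    (∀ x ∈ Ici a, 0 < h x) ∧ Tendsto h atTop (𝓝 0) ∧
    (∀ n, 1 ≤ n → ∀ x ∈ Ici a, 0 < (-1) ^ n * iteratedDerivWithin n h (Ici a) x) ∧
    (∀ n, 1 ≤ n → Tendsto (iteratedDerivWithin n h (Ici a)) atTop (𝓝 0)) := by
  have hderiv (k : ℕ) : ∀ x ∈ Ici a, HasDerivWithinAt (iteratedDerivWithin k h (Ici a))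
      (iteratedDerivWithin (k + 1) h (Ici a) x) (Ici a) x := fun x hx =>
    hasDerivWithinAt_iteratedDerivWithin (uniqueDiffOn_Ici a) hx
      (hsmooth.of_le (by exact_mod_cast le_top))
  have hf : ∀ x ∈ Ici a, HasDerivWithinAt h (iteratedDerivWithin 1 h (Ici a) x) (Ici a) x := by
    simpa only [iteratedDerivWithin_zero] using hderiv 0
  have hg : ∀ x ∈ Ici a, HasDerivWithinAt (iteratedDerivWithin 1 h (Ici a))
      (r * iteratedDerivWithin 1 h (Ici a) x + h x ^ p) (Ici a) x := fun x hx =>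
    (hderiv 1 x hx).congr_deriv (eq_add_of_sub_eq' (hODE x hx))
  have hpos : ∀ x ∈ Ici a, 0 < h x := fun x => pos_of_even_pow_source hr hp hp1 hf hg hne
  have hlim : Tendsto h atTop (𝓝 0) := tendsto_zero_of_even_pow_source hr hp hp1 hf hg
  have hall (n : ℕ) : (∀ x ∈ Ici a, 0 < (-1) ^ n * iteratedDerivWithin n h (Ici a) x) ∧
      Tendsto (iteratedDerivWithin n h (Ici a)) atTop (𝓝 0) := by
    induction n using Nat.strong_induction_on with
    | _ n ih =>
      cases n with
      | zero => simpa using ⟨hpos, hlim⟩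
      | succ n =>
        exact iteratedDerivWithin_succ_alternating hr (by lia) hsmooth hODE
          (fun i hi => (ih i (Nat.lt_succ_of_le hi)).1) fun i hi => (ih i (Nat.lt_succ_of_le hi)).2
  exact ⟨hpos, hlim, fun n _ => (hall n).1, fun n _ => (hall n).2⟩

end TotallyMonotone

/-- Any not-identically-zero smooth solution of `h'' - 2h' = h²` on `[0,∞)` is
positive, tends to `0` at infinity, is totally monotone, and all of its
derivatives tend to `0` at infinity.  Derivatives on `[0,∞)` are formalised as
iterated derivatives within `Set.Ici 0`. -/
theorem hSol_totally_monotone (h : ℝ → ℝ)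
    (hsmooth : ContDiffOn ℝ (⊤ : ℕ∞) h (Set.Ici 0))
    (hODE : ∀ x ∈ Set.Ici (0 : ℝ),
      iteratedDerivWithin 2 h (Set.Ici 0) x - 2 * iteratedDerivWithin 1 h (Set.Ici 0) x
        = (h x) ^ 2)
    (hne : ∃ x ∈ Set.Ici (0 : ℝ), h x ≠ 0) :
    (∀ x ∈ Set.Ici (0 : ℝ), 0 < h x) ∧
    Filter.Tendsto h Filter.atTop (nhds 0) ∧
    (∀ n : ℕ, 1 ≤ n → ∀ x ∈ Set.Ici (0 : ℝ),
      0 < (-1 : ℝ) ^ n * iteratedDerivWithin n h (Set.Ici 0) x) ∧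
    (∀ n : ℕ, 1 ≤ n →
      Filter.Tendsto (iteratedDerivWithin n h (Set.Ici 0)) Filter.atTop (nhds 0)) :=
  hSol_totally_monotone_general two_pos even_two one_lt_two hsmooth hODE hne
end
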